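/- Let 0 < p ≤ ∞, 1 < q < ∞, s = 2, t = 2/3, and N > 0. There exists a constant C such that for every jump collection (N_k)_{k≥0}, every sequence (f_i)_{i∈ℤ} of measurable functions on ℝ, every continuous Littlewood–Paley family (g_j)_{j∈ℤ} with band width N, and every λ > 0, one has ‖ λ · (#{k ≥ 1 : |Σ_{N_{k−1}(x) < i < j ≤ N_k(x)} f_i(x) g_j(x)| > λ})^{3/2} ‖_{pq/(p+q)} ≤ C ‖(f_i)‖_{p,1} ‖(g_j)‖_{q,2}. -/

import Mathlib

open MeasureTheory ENNReal
open scoped FourierTransform NNReal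

noncomputable section

/-- A jump collection: a sequence of measurable integer-valued functions on `ℝ`,
nondecreasing in the index. -/
def IsJumpCollection (Nk : ℕ → ℝ → ℤ) : Prop :=
  (∀ k, Measurable (Nk k)) ∧ ∀ (k : ℕ) (x : ℝ), Nk k x ≤ Nk (k + 1) x

/-- A continuous Littlewood–Paley family with band width `Nb`. -/
def IsContLPFamily (Nb : ℝ) (g : ℤ → SchwartzMap ℝ ℂ) : Prop :=
  ∀ j : ℤ, ∀ ξ : ℝ, 𝓕 (⇑(g j)) ξ ≠ 0 →
    (2 : ℝ) ^ ((j : ℝ) - Nb) < |ξ| ∧ |ξ| < (2 : ℝ) ^ ((j : ℝ) + Nb)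

/-- The `L^u` quasi-norm on `ℝ≥0∞`-valued functions, for `u ∈ (0, ∞]`. -/
def eNorm (u : ℝ≥0∞) (h : ℝ → ℝ≥0∞) : ℝ≥0∞ :=
  if u = ⊤ then essSup h volume
  else (∫⁻ x : ℝ, (h x) ^ u.toReal) ^ (1 / u.toReal)

/-! ### Greedy jump counting for a sequence of increments -/

/-- Greedy excursion and jump counter of the partial sums of `d` at threshold `ν`. -/
def gP (ν : ℝ) (d : ℕ → ℂ) : ℕ → ℂ × ℕ
  | 0 => (0, 0)
  | n + 1 => if ‖(gP ν d n).1 + d n‖ < ν then ((gP ν d n).1 + d n, (gP ν d n).2)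
      else (0, (gP ν d n).2 + 1)

def gE (ν : ℝ) (d : ℕ → ℂ) (n : ℕ) : ℂ := (gP ν d n).1
def gJ (ν : ℝ) (d : ℕ → ℂ) (n : ℕ) : ℕ := (gP ν d n).2

lemma gE_zero (ν : ℝ) (d : ℕ → ℂ) : gE ν d 0 = 0 := rfl
lemma gJ_zero (ν : ℝ) (d : ℕ → ℂ) : gJ ν d 0 = 0 := rfl

lemma gE_succ (ν : ℝ) (d : ℕ → ℂ) (n : ℕ) :
    gE ν d (n + 1) = if ‖gE ν d n + d n‖ < ν then gE ν d n + d n else 0 := by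
  by_cases h : ‖(gP ν d n).1 + d n‖ < ν <;> simp [gE, gP, h]

lemma gJ_succ (ν : ℝ) (d : ℕ → ℂ) (n : ℕ) :
    gJ ν d (n + 1) = if ‖gE ν d n + d n‖ < ν then gJ ν d n else gJ ν d n + 1 := by
  by_cases h : ‖(gP ν d n).1 + d n‖ < ν <;> simp [gE, gJ, gP, h]

lemma gE_lt {ν : ℝ} (hν : 0 < ν) (d : ℕ → ℂ) (n : ℕ) : ‖gE ν d n‖ < ν := by
  cases n with
  | zero => simpa [gE_zero] using hν
  | succ n =>
    rw [gE_succ]; split_ifs with h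
    · exact h
    · simpa using hν

lemma gJ_le_succ (ν : ℝ) (d : ℕ → ℂ) (n : ℕ) : gJ ν d n ≤ gJ ν d (n + 1) := by
  rw [gJ_succ]; split_ifs <;> omega

lemma gJ_succ_le (ν : ℝ) (d : ℕ → ℂ) (n : ℕ) : gJ ν d (n + 1) ≤ gJ ν d n + 1 := by
  rw [gJ_succ]; split_ifs <;> omega

lemma gJ_mono (ν : ℝ) (d : ℕ → ℂ) : Monotone (gJ ν d) :=
  monotone_nat_of_le_succ (gJ_le_succ ν d)

lemma gJ_le (ν : ℝ) (d : ℕ → ℂ) (n : ℕ) : gJ ν d n ≤ n := by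
  induction n with
  | zero => simp [gJ_zero]
  | succ n ih => have := gJ_succ_le ν d n; omega

lemma gP_congr (ν : ℝ) {d d' : ℕ → ℂ} (n : ℕ) (h : ∀ i < n, d i = d' i) :
    gP ν d n = gP ν d' n := by
  induction n with
  | zero => rfl
  | succ n ih =>
    simp only [gP]
    rw [ih (fun i hi => h i (by omega)), h n (by omega)]

lemma g_step {ν : ℝ} (hν : 0 < ν) (d : ℕ → ℂ) (n : ℕ) :
    ν ^ 2 * gJ ν d (n + 1) + ‖gE ν d (n + 1)‖ ^ 2 ≤
      ν ^ 2 * gJ ν d n + ‖gE ν d n‖ ^ 2 +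
        (‖d n‖ ^ 2 + 2 * (starRingEnd ℂ (gE ν d n) * d n).re) := by
  have key : ‖gE ν d n + d n‖ ^ 2 = ‖gE ν d n‖ ^ 2 +
        (‖d n‖ ^ 2 + 2 * (starRingEnd ℂ (gE ν d n) * d n).re) := by
    rw [← Complex.normSq_eq_norm_sq, ← Complex.normSq_eq_norm_sq, ← Complex.normSq_eq_norm_sq]
    simp [Complex.normSq_apply]
    ring
  rw [add_assoc, ← key, gJ_succ, gE_succ]
  split_ifs with h
  · exact le_rfl
  · push Not at h
    push_cast
    simp only [norm_zero]
    nlinarith [norm_nonneg (gE ν d n + d n)]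

lemma g_steps {ν : ℝ} (hν : 0 < ν) (d : ℕ → ℂ) (a n : ℕ) (han : a ≤ n) :
    ν ^ 2 * gJ ν d n + ‖gE ν d n‖ ^ 2 ≤
      ν ^ 2 * gJ ν d a + ‖gE ν d a‖ ^ 2 + ∑ k ∈ Finset.Ico a n, ‖d k‖ ^ 2 +
        2 * ∑ k ∈ Finset.Ico a n, (starRingEnd ℂ (gE ν d k) * d k).re := by
  induction n, han using Nat.le_induction with
  | base => simp
  | succ n hn ih =>
    rw [Finset.sum_Ico_succ_top hn, Finset.sum_Ico_succ_top hn]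
    have := g_step hν d n
    linarith

lemma gE_eq_of_gJ {ν : ℝ} (d : ℕ → ℂ) (a b : ℕ) (hab : a ≤ b) (h : gJ ν d b = gJ ν d a) :
    gE ν d b = gE ν d a + ∑ k ∈ Finset.Ico a b, d k := by
  induction b, hab using Nat.le_induction with
  | base => simp
  | succ n hn ih =>
    have h1 := gJ_le_succ ν d n
    have h2 := gJ_mono ν d hn
    have h3 := gJ_succ ν d n
    rw [Finset.sum_Ico_succ_top hn, ← add_assoc, ← ih (by omega), gE_succ]
    split_ifs with hlt
    · rfl
    · rw [if_neg hlt] at h3; omega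

lemma gJ_lt_of_jump {ν : ℝ} (hν : 0 < ν) (d : ℕ → ℂ) (a b : ℕ) (hab : a ≤ b)
    (h : 2 * ν ≤ ‖∑ k ∈ Finset.Ico a b, d k‖) : gJ ν d a < gJ ν d b := by
  by_contra hcon
  have h1 := gJ_mono ν d hab
  have h2 := gE_eq_of_gJ (ν := ν) d a b hab (by omega)
  have h3 := gE_lt hν d a
  have h4 := gE_lt hν d b
  have : ∑ k ∈ Finset.Ico a b, d k = gE ν d b - gE ν d a := by rw [h2]; ring
  rw [this] at h
  have := norm_sub_le (gE ν d b) (gE ν d a)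
  linarith

lemma gJ_eq_zero {ν : ℝ} (d : ℕ → ℂ) (n : ℕ)
    (h : ∀ k ≤ n, ‖∑ i ∈ Finset.range k, d i‖ < ν) : gJ ν d n = 0 := by
  induction n with
  | zero => rfl
  | succ n ih =>
    have h0 := ih (fun k hk => h k (by omega))
    have h1 := gE_eq_of_gJ (ν := ν) d 0 n (by omega) (by rw [h0, gJ_zero])
    have h2 := h (n + 1) le_rfl
    rw [Finset.sum_range_succ, Finset.range_eq_Ico] at h2
    rw [gE_zero, zero_add] at h1
    rw [gJ_succ, h1, if_pos h2, h0]

lemma gE_of_zero {ν : ℝ} (d : ℕ → ℂ) (n : ℕ) (h : gJ ν d n = 0) :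
    gE ν d n = ∑ i ∈ Finset.range n, d i := by
  have h1 := gE_eq_of_gJ (ν := ν) d 0 n (by omega) (by rw [h, gJ_zero])
  rw [h1, gE_zero, zero_add, Finset.range_eq_Ico]

lemma gJ_zero_mono {ν ν' : ℝ} (hν : 0 < ν) (hνν : ν ≤ ν') (d : ℕ → ℂ) (n : ℕ)
    (h : gJ ν d n = 0) : gJ ν' d n = 0 := by
  apply gJ_eq_zero
  intro k hk
  have h1 : gJ ν d k = 0 := by have := gJ_mono ν d hk; omega
  rw [← gE_of_zero d k h1]
  exact (gE_lt hν d k).trans_le hνν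

/-- Squared weak jump functional. -/
def gZ (d : ℕ → ℂ) (n : ℕ) : ℝ≥0∞ :=
  ⨆ m : ℤ, ENNReal.ofReal (((2 : ℝ) ^ m) ^ 2 * gJ ((2 : ℝ) ^ m) d n)

lemma gZ_mono (d : ℕ → ℂ) : Monotone (gZ d) := by
  intro a b hab
  apply iSup_mono
  intro m
  apply ENNReal.ofReal_le_ofReal
  have := gJ_mono ((2 : ℝ) ^ m) d hab
  gcongr

lemma gZ_zero (d : ℕ → ℂ) : gZ d 0 = 0 := by
  simp [gZ, gJ_zero]

lemma gZ_le_iff (d : ℕ → ℂ) (n : ℕ) (t : ℝ) (ht : 0 ≤ t) :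
    gZ d n ≤ ENNReal.ofReal t ↔ ∀ m : ℤ, ((2 : ℝ) ^ m) ^ 2 * gJ ((2 : ℝ) ^ m) d n ≤ t := by
  unfold gZ
  rw [iSup_le_iff]
  apply forall_congr'
  intro m
  exact ENNReal.ofReal_le_ofReal_iff ht

/-- A crude a priori bound. -/
lemma gZ_apriori (d : ℕ → ℂ) (n : ℕ) :
    gZ d n ≤ ENNReal.ofReal (n * (∑ k ∈ Finset.range n, ‖d k‖) ^ 2) := by
  rw [gZ_le_iff _ _ _ (by positivity)]
  intro m
  have hpos : (0 : ℝ) < 2 ^ m := by positivity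
  by_cases hm : ∑ k ∈ Finset.range n, ‖d k‖ < (2 : ℝ) ^ m
  · have : gJ ((2 : ℝ) ^ m) d n = 0 := by
      apply gJ_eq_zero
      intro k hk
      refine lt_of_le_of_lt (norm_sum_le _ _) (lt_of_le_of_lt ?_ hm)
      apply Finset.sum_le_sum_of_subset_of_nonneg
      · exact Finset.range_mono hk
      · intros; positivity
    rw [this]
    simp
    positivity
  · push Not at hm
    have h2 : (gJ ((2 : ℝ) ^ m) d n : ℝ) ≤ n := by exact_mod_cast gJ_le _ d n
    rw [mul_comm]
    gcongr

/-- The localized martingale transform. -/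
def gT (ν t : ℝ) (γ : ℝ) (d : ℕ → ℂ) (n : ℕ) : ℝ :=
  ∑ k ∈ Finset.range n, if ENNReal.ofReal t < gZ d k ∧ ∑ i ∈ Finset.range (k + 1), ‖d i‖ ^ 2 ≤ γ * t
    then (starRingEnd ℂ (gE ν d k) * d k).re else 0

lemma gT_eq (ν t γ : ℝ) (d : ℕ → ℂ) (T s : ℕ) (hsT : s ≤ T)
    (hS : ∑ i ∈ Finset.range T, ‖d i‖ ^ 2 ≤ γ * t)
    (h1 : ∀ k < s, gZ d k ≤ ENNReal.ofReal t) (h2 : ENNReal.ofReal t < gZ d s) :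
    gT ν t γ d T = ∑ k ∈ Finset.Ico s T, (starRingEnd ℂ (gE ν d k) * d k).re := by
  unfold gT
  rw [Finset.range_eq_Ico, ← Finset.sum_Ico_consecutive _ (Nat.zero_le s) hsT]
  rw [Finset.sum_eq_zero, zero_add]
  · apply Finset.sum_congr rfl
    intro k hk
    rw [Finset.mem_Ico] at hk
    rw [if_pos]
    refine ⟨h2.trans_le (gZ_mono d hk.1), le_trans ?_ hS⟩
    apply Finset.sum_le_sum_of_subset_of_nonneg
    · exact Finset.range_mono (by omega)
    · intros; positivity
  · intro k hk
    rw [Finset.mem_Ico] at hk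
    rw [if_neg]
    intro hh
    exact absurd (h1 k hk.2) (not_le.mpr hh.1)

lemma exists_pow_four (t : ℝ) (ht : 0 < t) :
    ∃ m : ℤ, t < ((2 : ℝ) ^ m) ^ 2 ∧ ((2 : ℝ) ^ m) ^ 2 ≤ 4 * t := by
  obtain ⟨m, hm1, hm2⟩ := exists_mem_Ico_zpow (x := t) (y := (4 : ℝ)) ht (by norm_num)
  refine ⟨m + 1, ?_, ?_⟩
  · have : ((2 : ℝ) ^ (m + 1)) ^ 2 = 4 ^ (m + 1) := by
      rw [← zpow_natCast, ← zpow_mul, mul_comm, zpow_mul]; norm_num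
    rw [this]; exact hm2
  · have : ((2 : ℝ) ^ (m + 1)) ^ 2 = 4 ^ (m + 1) := by
      rw [← zpow_natCast, ← zpow_mul, mul_comm, zpow_mul]; norm_num
    rw [this, zpow_add₀ (by norm_num)]; norm_num; linarith

lemma g_goodlambda_pointwise (d : ℕ → ℂ) (t γ : ℝ) (ht : 0 < t) (hγ : γ ≤ 1) (T : ℕ)
    (hS : ∑ i ∈ Finset.range T, ‖d i‖ ^ 2 ≤ γ * t) (m0 : ℤ) (hm1 : 64 * t < ((2 : ℝ) ^ m0) ^ 2)
    (hm2 : ((2 : ℝ) ^ m0) ^ 2 ≤ 256 * t)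
    (hT : ∀ m ≤ m0, |gT ((2 : ℝ) ^ m) t γ d T| ≤ t) :
    gZ d T ≤ ENNReal.ofReal (600 * t) := by
  by_cases hZ : gZ d T ≤ ENNReal.ofReal t
  · exact hZ.trans (ENNReal.ofReal_le_ofReal (by linarith))
  push Not at hZ
  have hex : ∃ n, ENNReal.ofReal t < gZ d n := ⟨T, hZ⟩
  classical
  obtain ⟨s, hs⟩ : ∃ s, s = Nat.find hex := ⟨_, rfl⟩
  have hs2 : ENNReal.ofReal t < gZ d s := hs ▸ Nat.find_spec hex
  have hs1 : ∀ k < s, gZ d k ≤ ENNReal.ofReal t := by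
    intro k hk
    have := Nat.find_min hex (hs ▸ hk)
    push Not at this; exact this
  have hsT : s ≤ T := hs ▸ Nat.find_min' hex hZ
  have hspos : s ≠ 0 := by
    rintro rfl
    rw [gZ_zero] at hs2
    exact absurd hs2 (by simp)
  obtain ⟨r, rfl⟩ := Nat.exists_eq_succ_of_ne_zero hspos
  have hr := (gZ_le_iff d r t ht.le).1 (hs1 r (by omega))
  have hSum : ∑ k ∈ Finset.Ico (r + 1) T, ‖d k‖ ^ 2 ≤ t := by
    refine le_trans ?_ (hS.trans (by nlinarith))
    apply Finset.sum_le_sum_of_subset_of_nonneg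
    · intro k hk; simp at hk ⊢; omega
    · intros; positivity
  have hdr : ‖d r‖ ^ 2 ≤ t := by
    refine le_trans ?_ (hS.trans (by nlinarith))
    apply Finset.single_le_sum (f := fun i => ‖d i‖ ^ 2) (fun _ _ => by positivity)
    simp; omega
  -- inequality for every dyadic level up to m0
  have hall : ∀ m ≤ m0, ((2 : ℝ) ^ m) ^ 2 * gJ ((2 : ℝ) ^ m) d T ≤
      ((2 : ℝ) ^ m) ^ 2 * gJ ((2 : ℝ) ^ m) d (r + 1) + ‖gE ((2 : ℝ) ^ m) d (r + 1)‖ ^ 2 + 3 * t := by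
    intro m hm
    have h1 := g_steps (ν := (2 : ℝ) ^ m) (by positivity) d (r + 1) T hsT
    rw [← gT_eq _ t γ d T (r + 1) hsT hS hs1 hs2] at h1
    have h2 := (abs_le.1 (hT m hm)).2
    have h3 : 0 ≤ ‖gE ((2 : ℝ) ^ m) d T‖ ^ 2 := by positivity
    linarith
  -- level m0 : no jump at all
  have hzero : gJ ((2 : ℝ) ^ m0) d T = 0 := by
    obtain ⟨m1, h11, h12⟩ := exists_pow_four t ht
    have hz1 : ∀ m : ℤ, t < ((2 : ℝ) ^ m) ^ 2 → gJ ((2 : ℝ) ^ m) d r = 0 := by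
      intro m hm
      by_contra hne
      have h1 : (1 : ℝ) ≤ gJ ((2 : ℝ) ^ m) d r := by exact_mod_cast Nat.one_le_iff_ne_zero.2 hne
      have := hr m
      nlinarith
    have e1 := gE_of_zero d r (hz1 m1 h11)
    have e2 := gE_of_zero d r (hz1 m0 (by linarith))
    have e3 := gE_lt (ν := (2 : ℝ) ^ m1) (by positivity) d r
    have hsq : Real.sqrt t ^ 2 = t := Real.sq_sqrt ht.le
    have hsp : 0 < Real.sqrt t := Real.sqrt_pos.2 ht
    have e4 : (2 : ℝ) ^ m1 ≤ 2 * Real.sqrt t := by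
      apply le_of_sq_le_sq _ (by positivity)
      nlinarith
    have e5 : ‖d r‖ ≤ Real.sqrt t := Real.le_sqrt_of_sq_le hdr
    have e6 : ‖gE ((2 : ℝ) ^ m0) d r + d r‖ ≤ 3 * Real.sqrt t := by
      refine (norm_add_le _ _).trans ?_
      rw [e2, ← e1]; linarith
    have e7 : 8 * Real.sqrt t < (2 : ℝ) ^ m0 := by
      apply lt_of_pow_lt_pow_left₀ 2 (by positivity)
      nlinarith
    have e8 : gJ ((2 : ℝ) ^ m0) d (r + 1) = 0 := by
      rw [gJ_succ, if_pos (by linarith), hz1 m0 (by linarith)]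
    have e9 : ‖gE ((2 : ℝ) ^ m0) d (r + 1)‖ ^ 2 ≤ 9 * t := by
      rw [gE_succ, if_pos (by linarith)]
      calc ‖gE ((2 : ℝ) ^ m0) d r + d r‖ ^ 2 ≤ (3 * Real.sqrt t) ^ 2 := by gcongr
        _ = 9 * t := by rw [mul_pow, hsq]; norm_num
    have h1 := hall m0 le_rfl
    rw [e8] at h1
    by_contra hne
    have h2 : (1 : ℝ) ≤ gJ ((2 : ℝ) ^ m0) d T := by exact_mod_cast Nat.one_le_iff_ne_zero.2 hne
    push_cast at h1
    nlinarith
  rw [gZ_le_iff _ _ _ (by positivity)]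
  intro m
  rcases le_total m m0 with hm | hm
  · have h1 := hall m hm
    have h2 : (gJ ((2 : ℝ) ^ m) d (r + 1) : ℝ) ≤ gJ ((2 : ℝ) ^ m) d r + 1 := by
      exact_mod_cast gJ_succ_le _ d r
    have h3 := hr m
    have h4 := gE_lt (ν := (2 : ℝ) ^ m) (by positivity) d (r + 1)
    have h5 : ((2 : ℝ) ^ m) ≤ (2 : ℝ) ^ m0 := zpow_le_zpow_right₀ (by norm_num) hm
    have h6 : ((2 : ℝ) ^ m) ^ 2 ≤ 256 * t := le_trans (by gcongr) hm2
    have h7 : ‖gE ((2 : ℝ) ^ m) d (r + 1)‖ ^ 2 ≤ ((2 : ℝ) ^ m) ^ 2 := by gcongr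
    have h8 : ((2 : ℝ) ^ m) ^ 2 * gJ ((2 : ℝ) ^ m) d (r + 1) ≤
      ((2 : ℝ) ^ m) ^ 2 * (gJ ((2 : ℝ) ^ m) d r + 1) := by gcongr
    linarith
  · have h5 : ((2 : ℝ) ^ m0) ≤ (2 : ℝ) ^ m := zpow_le_zpow_right₀ (by norm_num) hm
    rw [gJ_zero_mono (by positivity) h5 d T hzero]
    simp; positivity

/-! ### Good-lambda inequality for sign-symmetric increments -/

lemma gZ_congr {d d' : ℕ → ℂ} (n : ℕ) (h : ∀ i < n, d i = d' i) : gZ d n = gZ d' n := by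
  unfold gZ gJ
  simp_rw [gP_congr _ n h]

/-- Summand of the localized transform. -/
def gB (ν t : ℝ) (γ : ℝ) (d : ℕ → ℂ) (k : ℕ) : ℝ :=
  if ENNReal.ofReal t < gZ d k ∧ ∑ i ∈ Finset.range (k + 1), ‖d i‖ ^ 2 ≤ γ * t
    then (starRingEnd ℂ (gE ν d k) * d k).re else 0

lemma gT_eq_sum (ν t γ : ℝ) (d : ℕ → ℂ) (n : ℕ) :
    gT ν t γ d n = ∑ k ∈ Finset.range n, gB ν t γ d k := rfl

lemma gB_congr (ν t γ : ℝ) {d d' : ℕ → ℂ} (k : ℕ) (h : ∀ i < k + 1, d i = d' i) :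
    gB ν t γ d k = gB ν t γ d' k := by
  unfold gB gE
  rw [gZ_congr k (fun i hi => h i (by omega)), gP_congr ν k (fun i hi => h i (by omega)),
    h k (by omega)]
  rw [Finset.sum_congr rfl (fun i hi => by rw [h i (Finset.mem_range.1 hi)])]

lemma gB_neg (ν t γ : ℝ) {d d' : ℕ → ℂ} (k : ℕ) (h : ∀ i < k, d' i = d i) (hk : d' k = - d k) :
    gB ν t γ d' k = - gB ν t γ d k := by
  unfold gB gE
  rw [gZ_congr k h, gP_congr ν k h, hk]
  have : ∑ i ∈ Finset.range (k + 1), ‖d' i‖ ^ 2 = ∑ i ∈ Finset.range (k + 1), ‖d i‖ ^ 2 := by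
    apply Finset.sum_congr rfl
    intro i hi
    rcases Nat.lt_succ_iff_lt_or_eq.1 (Finset.mem_range.1 hi) with h1 | rfl
    · rw [h i h1]
    · rw [hk, norm_neg]
  rw [this]
  split_ifs
  · rw [mul_neg, Complex.neg_re]
  · simp

lemma gB_sq_sum_le {ν : ℝ} (hν : 0 < ν) (t γ : ℝ) (hγt : 0 ≤ γ * t) (d : ℕ → ℂ) (n : ℕ) :
    ∑ k ∈ Finset.range n, gB ν t γ d k ^ 2 ≤
      if ENNReal.ofReal t < gZ d n then ν ^ 2 * (γ * t) else 0 := by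
  have h1 : ∀ k, gB ν t γ d k ^ 2 ≤ ν ^ 2 *
      (if ∑ i ∈ Finset.range (k + 1), ‖d i‖ ^ 2 ≤ γ * t then ‖d k‖ ^ 2 else 0) := by
    intro k
    unfold gB
    by_cases hA : ENNReal.ofReal t < gZ d k <;>
      by_cases hB : ∑ i ∈ Finset.range (k + 1), ‖d i‖ ^ 2 ≤ γ * t
    · simp only [hA, hB, and_self, if_true]
      rw [← mul_pow, ← sq_abs]
      refine pow_le_pow_left₀ (abs_nonneg _) ((Complex.abs_re_le_norm _).trans ?_) 2
      rw [norm_mul, RCLike.norm_conj]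
      have := (gE_lt hν d k).le
      gcongr
    · simp [hB]
    · simp only [hA, hB, false_and, if_false, if_true]; norm_num; positivity
    · simp [hB]
  have h2 : ∀ n, ∑ k ∈ Finset.range n,
      (if ∑ i ∈ Finset.range (k + 1), ‖d i‖ ^ 2 ≤ γ * t then ‖d k‖ ^ 2 else 0) ≤ γ * t := by
    intro n
    induction n with
    | zero => simpa using hγt
    | succ n ih =>
      by_cases hB : ∑ i ∈ Finset.range (n + 1), ‖d i‖ ^ 2 ≤ γ * t
      · refine le_trans (Finset.sum_le_sum (fun k _ => ?_)) hB
        split_ifs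
        · exact le_rfl
        · positivity
      · rw [Finset.sum_range_succ, if_neg hB, add_zero]; exact ih
  split_ifs with hZ
  · refine (Finset.sum_le_sum (fun k _ => h1 k)).trans ?_
    rw [← Finset.mul_sum]
    exact mul_le_mul_of_nonneg_left (h2 n) (by positivity)
  · apply le_of_eq
    apply Finset.sum_eq_zero
    intro k hk
    unfold gB
    rw [if_neg]
    · simp
    · intro hh
      exact hZ (hh.1.trans_le (gZ_mono d (Finset.mem_range.1 hk).le))

/-- Measurability of the greedy process. -/
lemma measurable_gP (ν : ℝ) {d : ℕ → ℝ → ℂ} (hd : ∀ k, Measurable (d k)) (n : ℕ) :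
    Measurable (fun x => gP ν (fun k => d k x) n) := by
  induction n with
  | zero => simp only [gP]; exact measurable_const
  | succ n ih =>
    simp only [gP]
    have h1 := ih.fst
    have h2 := ih.snd
    refine Measurable.ite ?_ ?_ ?_
    · exact measurableSet_lt (h1.add (hd n)).norm measurable_const
    · exact (h1.add (hd n)).prodMk h2
    · exact measurable_const.prodMk (h2.add measurable_const)

lemma measurable_gE (ν : ℝ) {d : ℕ → ℝ → ℂ} (hd : ∀ k, Measurable (d k)) (n : ℕ) :
    Measurable (fun x => gE ν (fun k => d k x) n) := (measurable_gP ν hd n).fst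

lemma measurable_gJ (ν : ℝ) {d : ℕ → ℝ → ℂ} (hd : ∀ k, Measurable (d k)) (n : ℕ) :
    Measurable (fun x => gJ ν (fun k => d k x) n) := (measurable_gP ν hd n).snd

lemma measurable_gZ {d : ℕ → ℝ → ℂ} (hd : ∀ k, Measurable (d k)) (n : ℕ) :
    Measurable (fun x => gZ (fun k => d k x) n) := by
  unfold gZ
  refine Measurable.iSup (fun m => ?_)
  apply ENNReal.measurable_ofReal.comp
  apply Measurable.const_mul
  exact (measurable_from_nat (f := fun n : ℕ => (n : ℝ))).comp (measurable_gJ _ hd n)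

lemma measurable_sqsum {d : ℕ → ℝ → ℂ} (hd : ∀ k, Measurable (d k)) (n : ℕ) :
    Measurable (fun x => ∑ i ∈ Finset.range n, ‖d i x‖ ^ 2) := by
  apply Finset.measurable_sum
  intro i _
  exact (hd i).norm.pow_const 2

lemma measurable_gB (ν t γ : ℝ) {d : ℕ → ℝ → ℂ} (hd : ∀ k, Measurable (d k)) (n : ℕ) :
    Measurable (fun x => gB ν t γ (fun k => d k x) n) := by
  unfold gB
  refine Measurable.ite ?_ ?_ measurable_const
  · exact (measurableSet_lt measurable_const (measurable_gZ hd n)).inter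
      (measurableSet_le (measurable_sqsum hd (n + 1)) measurable_const)
  · apply Complex.measurable_re.comp
    exact (Complex.continuous_conj.measurable.comp (measurable_gE ν hd n)).mul (hd n)

lemma measurable_gT (ν t γ : ℝ) {d : ℕ → ℝ → ℂ} (hd : ∀ k, Measurable (d k)) (n : ℕ) :
    Measurable (fun x => gT ν t γ (fun k => d k x) n) := by
  simp_rw [gT_eq_sum]
  exact Finset.measurable_sum _ (fun i _ => measurable_gB ν t γ hd i)

/-- A sign-symmetric system: like a dyadic martingale difference sequence. -/
structure SignSys (d : ℕ → ℝ → ℂ) (θ : ℕ → ℝ → ℝ) : Prop where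
  meas : ∀ k, Measurable (d k)
  mp : ∀ k, MeasurePreserving (θ k) volume volume
  odd : ∀ k x, d k (θ k x) = - d k x
  inv : ∀ k i, i < k → ∀ x, d i (θ k x) = d i x

lemma gT_lintegral_sq {d : ℕ → ℝ → ℂ} {θ : ℕ → ℝ → ℝ} (h : SignSys d θ) (ν t γ : ℝ) (n : ℕ) :
    ∫⁻ x, ENNReal.ofReal (gT ν t γ (fun k => d k x) n ^ 2) =
      ∑ k ∈ Finset.range n, ∫⁻ x, ENNReal.ofReal (gB ν t γ (fun k => d k x) k ^ 2) := by
  induction n with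
  | zero => simp [gT]
  | succ n ih =>
    rw [Finset.sum_range_succ, ← ih]
    have ma := measurable_gT ν t γ h.meas n
    have mb := measurable_gB ν t γ h.meas n
    set a : ℝ → ℝ := fun x => gT ν t γ (fun k => d k x) n with ha
    set b : ℝ → ℝ := fun x => gB ν t γ (fun k => d k x) n with hb
    have e1 : ∀ x, gT ν t γ (fun k => d k x) (n + 1) = a x + b x := by
      intro x
      rw [gT_eq_sum, Finset.sum_range_succ, ← gT_eq_sum]
    have ea : ∀ x, a (θ n x) = a x := by
      intro x
      simp only [ha, gT_eq_sum]
      apply Finset.sum_congr rfl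
      intro k hk
      apply gB_congr
      intro i hi
      exact h.inv n i (by have := Finset.mem_range.1 hk; omega) x
    have eb : ∀ x, b (θ n x) = - b x := by
      intro x
      exact gB_neg ν t γ n (fun i hi => h.inv n i hi x) (h.odd n x)
    simp_rw [e1]
    change ∫⁻ x, ENNReal.ofReal ((a x + b x) ^ 2) = (∫⁻ x, ENNReal.ofReal (a x ^ 2)) +
      ∫⁻ x, ENNReal.ofReal (b x ^ 2)
    have mF : Measurable (fun x => ENNReal.ofReal ((a x + b x) ^ 2)) :=
      ENNReal.measurable_ofReal.comp ((ma.add mb).pow_const 2)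
    have mG : Measurable (fun x => ENNReal.ofReal (a x ^ 2)) :=
      ENNReal.measurable_ofReal.comp (ma.pow_const 2)
    have mH : Measurable (fun x => ENNReal.ofReal (b x ^ 2)) :=
      ENNReal.measurable_ofReal.comp (mb.pow_const 2)
    have e2 : ∫⁻ x, ENNReal.ofReal ((a x + b x) ^ 2) = ∫⁻ x, ENNReal.ofReal ((a x - b x) ^ 2) := by
      rw [← (h.mp n).lintegral_comp mF]
      simp_rw [ea, eb, sub_eq_add_neg]
    have e3 : 2 * (∫⁻ x, ENNReal.ofReal ((a x + b x) ^ 2)) =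
        2 * ((∫⁻ x, ENNReal.ofReal (a x ^ 2)) + ∫⁻ x, ENNReal.ofReal (b x ^ 2)) := by
      rw [two_mul]
      nth_rewrite 2 [e2]
      rw [← lintegral_add_left mF, ← lintegral_add_left mG, ← lintegral_const_mul' _ _ (by norm_num)]
      apply lintegral_congr
      intro x
      rw [← ENNReal.ofReal_add (by positivity) (by positivity),
        ← ENNReal.ofReal_add (by positivity) (by positivity)]
      have : (2 : ℝ≥0∞) = ENNReal.ofReal 2 := by simp
      rw [this, ← ENNReal.ofReal_mul (by norm_num)]
      congr 1; ring
    exact (ENNReal.mul_right_inj (by simp) (by simp)).1 e3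

lemma gT_lintegral_le {d : ℕ → ℝ → ℂ} {θ : ℕ → ℝ → ℝ} (h : SignSys d θ) {ν : ℝ} (hν : 0 < ν)
    (t γ : ℝ) (hγt : 0 ≤ γ * t) (n : ℕ) :
    ∫⁻ x, ENNReal.ofReal (gT ν t γ (fun k => d k x) n ^ 2) ≤
      ENNReal.ofReal (ν ^ 2 * (γ * t)) * volume {x | ENNReal.ofReal t < gZ (fun k => d k x) n} := by
  have mS : MeasurableSet {x | ENNReal.ofReal t < gZ (fun k => d k x) n} :=
    measurableSet_lt measurable_const (measurable_gZ h.meas n)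
  rw [gT_lintegral_sq h, ← lintegral_finsetSum]
  · rw [← lintegral_indicator_const mS]
    apply lintegral_mono
    intro x
    dsimp only
    rw [← ENNReal.ofReal_sum_of_nonneg (fun _ _ => by positivity)]
    refine (ENNReal.ofReal_le_ofReal (gB_sq_sum_le hν t γ hγt (fun k => d k x) n)).trans ?_
    by_cases hx : ENNReal.ofReal t < gZ (fun k => d k x) n
    · rw [if_pos hx, Set.indicator_of_mem (by exact hx)]
    · rw [if_neg hx]; simp
  · intro k _
    exact ENNReal.measurable_ofReal.comp ((measurable_gB ν t γ h.meas k).pow_const 2)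

lemma good_lambda {d : ℕ → ℝ → ℂ} {θ : ℕ → ℝ → ℝ} (h : SignSys d θ)
    (t γ : ℝ) (ht : 0 < t) (hγ0 : 0 ≤ γ) (hγ : γ ≤ 1) (n : ℕ) :
    volume {x | ENNReal.ofReal (600 * t) < gZ (fun k => d k x) n ∧
        ∑ i ∈ Finset.range n, ‖d i x‖ ^ 2 ≤ γ * t} ≤
      ENNReal.ofReal (400 * γ) * volume {x | ENNReal.ofReal t < gZ (fun k => d k x) n} := by
  obtain ⟨m0, hm1, hm2⟩ := exists_pow_four (64 * t) (by positivity)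
  have hm2' : ((2 : ℝ) ^ m0) ^ 2 ≤ 256 * t := by linarith
  set V := volume {x | ENNReal.ofReal t < gZ (fun k => d k x) n} with hV
  have hsub : {x | ENNReal.ofReal (600 * t) < gZ (fun k => d k x) n ∧
        ∑ i ∈ Finset.range n, ‖d i x‖ ^ 2 ≤ γ * t} ⊆
      ⋃ i : ℕ, {x | ENNReal.ofReal (t ^ 2) ≤
        ENNReal.ofReal (gT ((2 : ℝ) ^ (m0 - i)) t γ (fun k => d k x) n ^ 2)} := by
    rintro x ⟨hx1, hx2⟩
    by_contra hcon
    simp only [Set.mem_iUnion, Set.mem_ofPred_eq, not_exists, not_le] at hcon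
    refine absurd (g_goodlambda_pointwise (fun k => d k x) t γ ht hγ n hx2 m0 hm1 hm2' ?_)
      (not_le.2 hx1)
    intro m hm
    have h1 := hcon (m0 - m).toNat
    rw [show m0 - ((m0 - m).toNat : ℤ) = m by omega] at h1
    have h2 := (ENNReal.ofReal_lt_ofReal_iff (by positivity)).1 h1
    exact (abs_lt_of_sq_lt_sq h2 ht.le).le
  refine (measure_mono hsub).trans ((measure_iUnion_le _).trans ?_)
  have hone : ∀ i : ℕ, volume {x | ENNReal.ofReal (t ^ 2) ≤
        ENNReal.ofReal (gT ((2 : ℝ) ^ (m0 - i)) t γ (fun k => d k x) n ^ 2)} ≤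
      ENNReal.ofReal (256 * γ * (1 / 4 : ℝ) ^ i) * V := by
    intro i
    have h1 := meas_ge_le_lintegral_div (μ := volume)
      (f := fun x => ENNReal.ofReal (gT ((2 : ℝ) ^ (m0 - i)) t γ (fun k => d k x) n ^ 2))
      (ENNReal.measurable_ofReal.comp ((measurable_gT _ t γ h.meas n).pow_const 2)).aemeasurable
      (ε := ENNReal.ofReal (t ^ 2)) (by simpa using ht.ne') ENNReal.ofReal_ne_top
    refine h1.trans ?_
    have h2 := gT_lintegral_le h (ν := (2 : ℝ) ^ (m0 - i)) (by positivity) t γ (by positivity) n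
    refine (ENNReal.div_le_div_right h2 _).trans ?_
    rw [ENNReal.mul_div_right_comm, ← ENNReal.ofReal_div_of_pos (by positivity)]
    gcongr
    rw [div_le_iff₀ (by positivity)]
    have : ((2 : ℝ) ^ (m0 - i)) ^ 2 = ((2 : ℝ) ^ m0) ^ 2 * (1 / 4) ^ i := by
      rw [zpow_sub₀ (by norm_num), div_pow, zpow_natCast, ← pow_mul, mul_comm i 2, pow_mul (2 : ℝ) 2 i]
      rw [div_eq_mul_inv, one_div, inv_pow]; norm_num
    rw [this]
    have h3 : 0 ≤ (1 / 4 : ℝ) ^ i := by positivity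
    have h4 : 0 ≤ (1 / 4 : ℝ) ^ i * (γ * t) := by positivity
    nlinarith [mul_le_mul_of_nonneg_right hm2' h4]
  refine (ENNReal.tsum_le_tsum hone).trans ?_
  rw [ENNReal.tsum_mul_right, ← ENNReal.ofReal_tsum_of_nonneg (fun i => by positivity)]
  · gcongr
    rw [tsum_mul_left, tsum_geometric_of_lt_one (by norm_num) (by norm_num)]
    nlinarith
  · exact (summable_geometric_of_lt_one (by norm_num) (by norm_num)).mul_left _

/-! ### Layer cake in `ℝ≥0∞` -/

lemma rpow_eq_lintegral_of_ne_top (s : ℝ) (hs : 0 < s) (a : ℝ) (ha : 0 ≤ a) :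
    (ENNReal.ofReal a) ^ s = ∫⁻ t in Set.Ioi (0 : ℝ),
      {t : ℝ | ENNReal.ofReal t < ENNReal.ofReal a}.indicator (fun t => ENNReal.ofReal (s * t ^ (s - 1))) t := by
  have h := lintegral_rpow_eq_lintegral_meas_lt_mul (Measure.dirac (0 : ℝ)) (f := fun _ => a)
    (Filter.Eventually.of_forall fun _ => ha) aemeasurable_const hs
  rw [lintegral_const, measure_univ, mul_one] at h
  rw [ENNReal.ofReal_rpow_of_nonneg ha hs.le, h, ← lintegral_const_mul' _ _ ENNReal.ofReal_ne_top]
  apply setLIntegral_congr_fun measurableSet_Ioi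
  intro t ht
  have ht : 0 < t := ht
  dsimp only
  by_cases hta : t < a
  · rw [Set.indicator_of_mem]
    · simp [hta, ENNReal.ofReal_mul hs.le]
    · simpa using (ENNReal.ofReal_lt_ofReal_iff_of_nonneg ht.le).2 hta
  · rw [Set.indicator_of_notMem]
    · simp [hta]
    · simp only [Set.mem_ofPred_eq, not_lt]
      exact ENNReal.ofReal_le_ofReal (not_lt.1 hta)

lemma rpow_eq_lintegral (s : ℝ) (hs : 0 < s) (a : ℝ≥0∞) :
    a ^ s = ∫⁻ t in Set.Ioi (0 : ℝ),
      {t : ℝ | ENNReal.ofReal t < a}.indicator (fun t => ENNReal.ofReal (s * t ^ (s - 1))) t := by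
  by_cases ha : a = ⊤
  · subst ha
    rw [ENNReal.top_rpow_of_pos hs]
    symm
    apply ENNReal.eq_top_of_forall_nnreal_le
    intro r
    have h := rpow_eq_lintegral_of_ne_top s hs ((r : ℝ) ^ (1 / s)) (by positivity)
    rw [ENNReal.ofReal_rpow_of_nonneg (by positivity) hs.le, ← Real.rpow_mul (by positivity),
      one_div_mul_cancel hs.ne', Real.rpow_one, ENNReal.ofReal_coe_nnreal] at h
    rw [h]
    apply lintegral_mono
    intro t
    apply Set.indicator_le_indicator_of_subset
    · intro t _; simp
    · intro t; simp
  · have := rpow_eq_lintegral_of_ne_top s hs a.toReal ENNReal.toReal_nonneg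
    rwa [ENNReal.ofReal_toReal ha] at this

lemma lintegral_rpow_layer (s : ℝ) (hs : 0 < s) {Z : ℝ → ℝ≥0∞} (hZ : Measurable Z) :
    ∫⁻ x, Z x ^ s = ∫⁻ t in Set.Ioi (0 : ℝ),
      ENNReal.ofReal (s * t ^ (s - 1)) * volume {x | ENNReal.ofReal t < Z x} := by
  simp_rw [rpow_eq_lintegral s hs]
  have hm : MeasurableSet {p : ℝ × ℝ | ENNReal.ofReal p.2 < Z p.1} :=
    measurableSet_lt (ENNReal.measurable_ofReal.comp measurable_snd) (hZ.comp measurable_fst)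
  have hf : Measurable (fun t : ℝ => ENNReal.ofReal (s * t ^ (s - 1))) := by fun_prop
  rw [lintegral_lintegral_swap]
  · apply lintegral_congr
    intro t
    have mS : MeasurableSet {x | ENNReal.ofReal t < Z x} := measurableSet_lt measurable_const hZ
    rw [← lintegral_indicator_const mS]
    rfl
  · apply Measurable.aemeasurable
    exact Measurable.indicator (hf.comp measurable_snd) hm

/-- `L^s` bound for the squared jump functional by the squared square function. -/
theorem good_lambda_Lp (s : ℝ) (hs : 0 < s) : ∃ C : ℝ≥0, ∀ (d : ℕ → ℝ → ℂ) (θ : ℕ → ℝ → ℝ),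
    SignSys d θ → ∀ n : ℕ,
    ∫⁻ x, gZ (fun k => d k x) n ^ s ≤
      C * ∫⁻ x, ENNReal.ofReal (∑ i ∈ Finset.range n, ‖d i x‖ ^ 2) ^ s := by
  -- choice of γ
  have hB : (0 : ℝ) < 600 ^ s := by positivity
  set γ : ℝ := 1 / (800 * 600 ^ s) with hγ
  have hγ0 : 0 < γ := by positivity
  have hB1 : (1 : ℝ) ≤ 600 ^ s := Real.one_le_rpow (by norm_num) hs.le
  have hγ1 : γ ≤ 1 := by
    rw [hγ, div_le_one (by positivity)]; linarith
  refine ⟨(2 * 600 ^ s * (1 / γ) ^ s).toNNReal, ?_⟩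
  intro d θ h n
  set Z : ℝ → ℝ≥0∞ := fun x => gZ (fun k => d k x) n with hZ
  set Q : ℝ → ℝ≥0∞ := fun x => ENNReal.ofReal (∑ i ∈ Finset.range n, ‖d i x‖ ^ 2) with hQ
  have mZ : Measurable Z := measurable_gZ h.meas n
  have mQ : Measurable Q := ENNReal.measurable_ofReal.comp (measurable_sqsum h.meas n)
  change ∫⁻ x, Z x ^ s ≤ _ * ∫⁻ x, Q x ^ s
  by_cases hfin : ∫⁻ x, Q x ^ s = ⊤
  · rw [hfin, ENNReal.mul_top]
    · exact le_top
    · simp; positivity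
  have hZfin : ∫⁻ x, Z x ^ s ≠ ⊤ := by
    have : ∀ x, Z x ≤ ENNReal.ofReal (n * n) * Q x := by
      intro x
      refine (gZ_apriori _ n).trans ?_
      rw [hQ]
      dsimp only
      rw [← ENNReal.ofReal_mul (by positivity)]
      apply ENNReal.ofReal_le_ofReal
      rw [mul_assoc]
      apply mul_le_mul_of_nonneg_left _ (by positivity)
      have := sq_sum_le_card_mul_sum_sq (s := Finset.range n) (f := fun k => ‖d k x‖)
      simpa using this
    have h2 : ∫⁻ x, Z x ^ s ≤ ENNReal.ofReal (n * n) ^ s * ∫⁻ x, Q x ^ s := by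
      rw [← lintegral_const_mul _ (mQ.pow_const s)]
      apply lintegral_mono
      intro x
      dsimp only
      rw [← ENNReal.mul_rpow_of_nonneg _ _ hs.le]
      exact ENNReal.rpow_le_rpow (this x) hs.le
    refine ne_top_of_le_ne_top (ENNReal.mul_ne_top ?_ hfin) h2
    exact ENNReal.rpow_ne_top_of_nonneg hs.le ENNReal.ofReal_ne_top
  have hscale : ∀ (a : ℝ), 0 < a → ∀ t : ℝ, ∀ z : ℝ≥0∞,
      (ENNReal.ofReal (a * t) < z ↔ ENNReal.ofReal t < ENNReal.ofReal (1 / a) * z) := by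
    intro a ha t z
    have h1 : ENNReal.ofReal t = ENNReal.ofReal (1 / a) * ENNReal.ofReal (a * t) := by
      rw [← ENNReal.ofReal_mul (by positivity)]; congr 1; field_simp
    rw [h1]
    rw [ENNReal.mul_lt_mul_iff_right]
    · simpa using ha
    · exact ENNReal.ofReal_ne_top
  have key : ∫⁻ x, (ENNReal.ofReal (1 / 600) * Z x) ^ s ≤
      ENNReal.ofReal (400 * γ) * (∫⁻ x, Z x ^ s) + ∫⁻ x, (ENNReal.ofReal (1 / γ) * Q x) ^ s := by
    rw [lintegral_rpow_layer s hs (mZ.const_mul _), lintegral_rpow_layer s hs mZ,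
      lintegral_rpow_layer s hs (mQ.const_mul _)]
    rw [← lintegral_const_mul' _ _ ENNReal.ofReal_ne_top, ← lintegral_add_left']
    · apply setLIntegral_mono_ae' measurableSet_Ioi
      apply Filter.Eventually.of_forall
      intro t ht
      have ht : 0 < t := ht
      have h3 : volume {x | ENNReal.ofReal t < ENNReal.ofReal (1 / 600) * Z x} ≤
          ENNReal.ofReal (400 * γ) * volume {x | ENNReal.ofReal t < Z x} +
            volume {x | ENNReal.ofReal t < ENNReal.ofReal (1 / γ) * Q x} := by
        refine le_trans ?_ (add_le_add_left (good_lambda h t γ ht hγ0.le hγ1 n) _)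
        refine le_trans (measure_mono ?_) (measure_union_le _ _)
        intro x hx
        rw [Set.mem_ofPred_eq, ← hscale 600 (by norm_num)] at hx
        by_cases hS : ∑ i ∈ Finset.range n, ‖d i x‖ ^ 2 ≤ γ * t
        · exact Or.inl ⟨hx, hS⟩
        · right
          rw [Set.mem_ofPred_eq, ← hscale γ hγ0]
          exact (ENNReal.ofReal_lt_ofReal_iff_of_nonneg (by positivity)).2 (not_le.1 hS)
      calc _ ≤ ENNReal.ofReal (s * t ^ (s - 1)) * (ENNReal.ofReal (400 * γ) * volume {x | ENNReal.ofReal t < Z x} +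
            volume {x | ENNReal.ofReal t < ENNReal.ofReal (1 / γ) * Q x}) := by gcongr
        _ = _ := by ring
    · apply Measurable.aemeasurable
      apply Measurable.const_mul
      apply Measurable.mul
      · fun_prop
      · apply Antitone.measurable
        intro a b hab
        apply measure_mono
        intro x hx
        exact lt_of_le_of_lt (ENNReal.ofReal_le_ofReal hab) hx
  simp_rw [ENNReal.mul_rpow_of_nonneg _ _ hs.le] at key
  rw [lintegral_const_mul _ (mZ.pow_const s), lintegral_const_mul _ (mQ.pow_const s)] at key
  rw [ENNReal.ofReal_rpow_of_pos (by norm_num), ENNReal.ofReal_rpow_of_pos (by positivity)] at key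
  -- absorb
  set IZ := ∫⁻ x, Z x ^ s
  set IQ := ∫⁻ x, Q x ^ s
  have e1 : IZ = ENNReal.ofReal IZ.toReal := (ENNReal.ofReal_toReal hZfin).symm
  have e2 : IQ = ENNReal.ofReal IQ.toReal := (ENNReal.ofReal_toReal hfin).symm
  have hz := ENNReal.toReal_nonneg (a := IZ)
  have hqn := ENNReal.toReal_nonneg (a := IQ)
  rw [e1, e2, ← ENNReal.ofReal_mul (by positivity), ← ENNReal.ofReal_mul (by positivity),
    ← ENNReal.ofReal_mul (by positivity), ← ENNReal.ofReal_add (by positivity) (by positivity),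
    ENNReal.ofReal_le_ofReal_iff (by positivity)] at key
  rw [e1, e2, ENNReal.ofNNReal_toNNReal, ← ENNReal.ofReal_mul (by positivity)]
  apply ENNReal.ofReal_le_ofReal
  have h600 : (1 / 600 : ℝ) ^ s = (600 ^ s)⁻¹ := by
    rw [one_div, Real.inv_rpow (by norm_num)]
  rw [h600] at key
  have h4 : 400 * γ = (600 ^ s)⁻¹ / 2 := by rw [hγ]; field_simp; norm_num
  rw [h4] at key
  have h5 : (600 ^ s)⁻¹ * IZ.toReal / 2 ≤ (1 / γ) ^ s * IQ.toReal := by linarith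
  calc IZ.toReal = 2 * 600 ^ s * ((600 ^ s)⁻¹ * IZ.toReal / 2) := by field_simp
    _ ≤ 2 * 600 ^ s * ((1 / γ) ^ s * IQ.toReal) := by gcongr
    _ = _ := by ring

/-! ### Dyadic averages -/

/-- Index of the dyadic interval of length `2^{-n}` containing `x`. -/
def dyI (n : ℤ) (x : ℝ) : ℤ := ⌊(2 : ℝ) ^ n * x⌋

/-- Dyadic average. -/
def dyA (G : ℝ → ℂ) (n : ℤ) (x : ℝ) : ℂ :=
  (2 : ℂ) ^ n * ∫ y in ((dyI n x : ℝ) / 2 ^ n)..(((dyI n x : ℝ) + 1) / 2 ^ n), G y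

/-- Swap of the two halves of the parent dyadic interval. -/
def dyT (n : ℤ) (x : ℝ) : ℝ := if Even (dyI n x) then x + 1 / 2 ^ n else x - 1 / 2 ^ n

lemma dyI_pred (n : ℤ) (x : ℝ) : dyI (n - 1) x = dyI n x / 2 := by
  unfold dyI
  rw [zpow_sub_one₀ (by norm_num)]
  have h1 := Int.floor_le ((2 : ℝ) ^ n * x)
  have h2 := Int.lt_floor_add_one ((2 : ℝ) ^ n * x)
  set k := ⌊(2 : ℝ) ^ n * x⌋
  rw [Int.floor_eq_iff]
  have h3 : (2 * (k / 2) : ℤ) ≤ k := by omega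
  have h4 : (k : ℤ) + 1 ≤ 2 * (k / 2) + 2 := by omega
  have h3' : (2 * ((k / 2 : ℤ) : ℝ)) ≤ k := by exact_mod_cast h3
  have h4' : (k : ℝ) + 1 ≤ 2 * ((k / 2 : ℤ) : ℝ) + 2 := by exact_mod_cast h4
  constructor <;> nlinarith

lemma dyI_dyT (n : ℤ) (x : ℝ) :
    dyI n (dyT n x) = if Even (dyI n x) then dyI n x + 1 else dyI n x - 1 := by
  have h : (2 : ℝ) ^ n ≠ 0 := by positivity
  unfold dyT
  split_ifs
  · unfold dyI
    rw [mul_add, mul_one_div_cancel h, Int.floor_add_one]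
  · unfold dyI
    rw [mul_sub, mul_one_div_cancel h, Int.floor_sub_one]

lemma dyI_dyT_lt (n : ℤ) (x : ℝ) (i : ℕ) : dyI (n - 1 - i) (dyT n x) = dyI (n - 1 - i) x := by
  induction i with
  | zero =>
    simp only [Nat.cast_zero, sub_zero]
    rw [dyI_pred, dyI_pred, dyI_dyT]
    split_ifs with h
    · obtain ⟨m, hm⟩ := h; omega
    · obtain ⟨m, hm⟩ := Int.not_even_iff_odd.1 h; omega
  | succ i ih =>
    rw [show n - 1 - ((i + 1 : ℕ) : ℤ) = (n - 1 - i) - 1 by push_cast; ring, dyI_pred, dyI_pred, ih]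

lemma measurable_dyI (n : ℤ) : Measurable (dyI n) := by
  unfold dyI; exact Int.measurable_floor.comp (measurable_const_mul _)

lemma measurable_dyA (G : ℝ → ℂ) (n : ℤ) : Measurable (dyA G n) := by
  unfold dyA
  exact (measurable_of_countable (fun k : ℤ =>
    (2 : ℂ) ^ n * ∫ y in ((k : ℝ) / 2 ^ n)..(((k : ℝ) + 1) / 2 ^ n), G y)).comp (measurable_dyI n)

lemma dyA_dyT_lt (G : ℝ → ℂ) (n m : ℤ) (h : m < n) (x : ℝ) : dyA G m (dyT n x) = dyA G m x := by
  have := dyI_dyT_lt n x (n - 1 - m).toNat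
  rw [show n - 1 - ((n - 1 - m).toNat : ℤ) = m by omega] at this
  unfold dyA
  rw [this]

lemma dyA_parent (G : ℝ → ℂ) (hG : Continuous G) (n : ℤ) (x : ℝ) :
    2 * dyA G (n - 1) x = dyA G n x + dyA G n (dyT n x) := by
  have h : (2 : ℝ) ^ n ≠ 0 := by positivity
  have hi : ∀ a b, IntervalIntegrable G volume a b := fun a b => hG.intervalIntegrable a b
  have e : ∀ a : ℝ, a / 2 ^ (n - 1) = 2 * a / 2 ^ n := by
    intro a; rw [zpow_sub_one₀ (by norm_num)]; field_simp
  unfold dyA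
  rw [dyI_dyT, dyI_pred, e, e, zpow_sub_one₀ (by norm_num), ← mul_add, ← mul_assoc,
    show (2 : ℂ) * (2 ^ n * 2⁻¹) = 2 ^ n by field_simp]
  congr 1
  split_ifs with hE
  · obtain ⟨m, hm⟩ := hE
    have : dyI n x / 2 = m := by omega
    rw [this, hm]
    push_cast
    rw [← intervalIntegral.integral_add_adjacent_intervals (hi _ (((m : ℝ) + m + 1) / 2 ^ n)) (hi _ _)]
    ring_nf
  · obtain ⟨m, hm⟩ := Int.not_even_iff_odd.1 hE
    have : dyI n x / 2 = m := by omega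
    rw [this, hm, add_comm (∫ y in _.._, G y)]
    push_cast
    rw [← intervalIntegral.integral_add_adjacent_intervals (hi _ ((2 * (m : ℝ) + 1) / 2 ^ n)) (hi _ _)]
    ring_nf

lemma measurePreserving_dyT (n : ℤ) : MeasurePreserving (dyT n) volume volume := by
  have mE : MeasurableSet {x | Even (dyI n x)} :=
    measurable_dyI n (MeasurableSet.of_discrete (s := {k : ℤ | Even k}))
  have mT : Measurable (dyT n) := by
    unfold dyT
    exact Measurable.ite mE (measurable_id.add_const _) (measurable_id.sub_const _)
  refine ⟨mT, ?_⟩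
  have h : (2 : ℝ) ^ n ≠ 0 := by positivity
  ext S hS
  rw [Measure.map_apply mT hS]
  rw [← measure_inter_add_diff (dyT n ⁻¹' S) mE, ← measure_inter_add_diff S mE, add_comm]
  congr 1
  · rw [← measure_preimage_add_right volume (-(1 / 2 ^ n)) (S ∩ _)]
    congr 1
    ext x
    have e : dyI n (x + -(1 / 2 ^ n)) = dyI n x - 1 := by
      unfold dyI; rw [mul_add, mul_neg, mul_one_div_cancel h, ← sub_eq_add_neg, Int.floor_sub_one]
    simp only [Set.mem_diff, Set.mem_preimage, Set.mem_inter_iff, Set.mem_ofPred_eq, e]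
    rw [Int.even_sub_one]
    unfold dyT
    constructor
    · rintro ⟨h1, h2⟩
      rw [if_neg h2] at h1
      exact ⟨h1, h2⟩
    · rintro ⟨h1, h2⟩
      rw [if_neg h2]
      exact ⟨h1, h2⟩
  · rw [← measure_preimage_add_right volume ((1 / 2 ^ n)) (S \ _)]
    congr 1
    ext x
    have e : dyI n (x + (1 / 2 ^ n)) = dyI n x + 1 := by
      unfold dyI; rw [mul_add, mul_one_div_cancel h, Int.floor_add_one]
    simp only [Set.mem_diff, Set.mem_preimage, Set.mem_inter_iff, Set.mem_ofPred_eq, e]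
    rw [Int.even_add_one, not_not]
    unfold dyT
    constructor
    · rintro ⟨h1, h2⟩
      rw [if_pos h2] at h1
      exact ⟨h1, h2⟩
    · rintro ⟨h1, h2⟩
      rw [if_pos h2]
      exact ⟨h1, h2⟩

/-- Dyadic martingale differences starting at level `-L`. -/
def dyD (G : ℝ → ℂ) (L : ℕ) (k : ℕ) (x : ℝ) : ℂ := dyA G ((k : ℤ) - L) x - dyA G ((k : ℤ) - L - 1) x

lemma signSys_dyD (G : ℝ → ℂ) (hG : Continuous G) (L : ℕ) :
    SignSys (dyD G L) (fun k => dyT ((k : ℤ) - L)) where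
  meas k := (measurable_dyA G _).sub (measurable_dyA G _)
  mp k := measurePreserving_dyT _
  odd k x := by
    unfold dyD
    have h := dyA_parent G hG ((k : ℤ) - L) x
    rw [dyA_dyT_lt G _ ((k : ℤ) - L - 1) (by omega)]
    linear_combination (-1 : ℂ) * h
  inv k i hik x := by
    unfold dyD
    rw [dyA_dyT_lt G _ _ (by omega), dyA_dyT_lt G _ _ (by omega)]

lemma sum_dyD (G : ℝ → ℂ) (L : ℕ) (x : ℝ) {a b : ℕ} (h : a ≤ b) :
    ∑ k ∈ Finset.Ico a b, dyD G L k x = dyA G ((b : ℤ) - L - 1) x - dyA G ((a : ℤ) - L - 1) x := by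
  induction b, h using Nat.le_induction with
  | base => simp
  | succ b hb ih =>
    rw [Finset.sum_Ico_succ_top hb, ih]
    unfold dyD
    rw [show ((b + 1 : ℕ) : ℤ) - L - 1 = (b : ℤ) - L by push_cast; ring]
    ring

/-! ### Hardy-Littlewood maximal function (dyadic radii) -/

/-- Normalized averages over closed balls. -/
def hlA (l : ℤ) (w : ℝ → ℝ≥0∞) (x : ℝ) : ℝ≥0∞ :=
  ENNReal.ofReal ((2 : ℝ) ^ l) * ∫⁻ y in Metric.closedBall x ((2 : ℝ) ^ (-l)), w y

/-- Maximal function. -/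
def HL (w : ℝ → ℝ≥0∞) (x : ℝ) : ℝ≥0∞ := ⨆ l : ℤ, hlA l w x

lemma measurable_hlA (l : ℤ) {w : ℝ → ℝ≥0∞} (hw : Measurable w) : Measurable (hlA l w) := by
  unfold hlA
  apply Measurable.const_mul
  have h : ∀ x, ∫⁻ y in Metric.closedBall x ((2 : ℝ) ^ (-l)), w y =
      ∫⁻ y, ({p : ℝ × ℝ | dist p.2 p.1 ≤ (2 : ℝ) ^ (-l)}.indicator (fun p => w p.2)) (x, y) := by
    intro x
    rw [← lintegral_indicator Metric.isClosed_closedBall.measurableSet]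
    rfl
  simp_rw [h]
  apply Measurable.lintegral_prod_right'
  apply Measurable.indicator (hw.comp measurable_snd)
  exact measurableSet_le (measurable_snd.dist measurable_fst) measurable_const

lemma measurable_HL {w : ℝ → ℝ≥0∞} (hw : Measurable w) : Measurable (HL w) :=
  Measurable.iSup (fun l => measurable_hlA l hw)

lemma HL_mono {w w' : ℝ → ℝ≥0∞} (h : ∀ x, w x ≤ w' x) (x : ℝ) : HL w x ≤ HL w' x := by
  apply iSup_mono
  intro l
  unfold hlA
  gcongr
  exact h _

lemma HL_weak {w : ℝ → ℝ≥0∞} (hw : Measurable w) {t : ℝ} (ht : 0 < t) :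
    volume {x | ENNReal.ofReal t < HL w x} ≤ ENNReal.ofReal (10 / t) * ∫⁻ y, w y := by
  by_cases hfin : ∫⁻ y, w y = ⊤
  · rw [hfin, ENNReal.mul_top (by simp; positivity)]; exact le_top
  set I := ∫⁻ y, w y with hI
  set T : Set ℝ := {x | ENNReal.ofReal t < HL w x} with hT
  have hch : ∀ x, ∃ l : ℤ, x ∈ T → ENNReal.ofReal t < hlA l w x := by
    intro x
    by_cases hx : x ∈ T
    · obtain ⟨l, hl⟩ := lt_iSup_iff.1 (show ENNReal.ofReal t < ⨆ l : ℤ, hlA l w x from hx)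
      exact ⟨l, fun _ => hl⟩
    · exact ⟨0, fun h => absurd h hx⟩
  choose l hl using hch
  have hball : ∀ x ∈ T, ENNReal.ofReal ((2 : ℝ) ^ (-(l x))) ≤
      ENNReal.ofReal (1 / t) * ∫⁻ y in Metric.closedBall x ((2 : ℝ) ^ (-(l x))), w y := by
    intro x hx
    have h1 := (hl x hx).le
    unfold hlA at h1
    set J := ∫⁻ y in Metric.closedBall x ((2 : ℝ) ^ (-(l x))), w y
    calc ENNReal.ofReal ((2 : ℝ) ^ (-(l x)))
        = ENNReal.ofReal ((2 : ℝ) ^ (-(l x)) * (1 / t)) * ENNReal.ofReal t := by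
          rw [← ENNReal.ofReal_mul (by positivity)]; congr 1; field_simp
      _ ≤ ENNReal.ofReal ((2 : ℝ) ^ (-(l x)) * (1 / t)) * (ENNReal.ofReal ((2 : ℝ) ^ (l x)) * J) := by
          gcongr
      _ = ENNReal.ofReal (1 / t) * J := by
          rw [← mul_assoc, ← ENNReal.ofReal_mul (by positivity)]
          congr 2
          rw [zpow_neg]; field_simp
  have hR : ∀ x ∈ T, (2 : ℝ) ^ (-(l x)) ≤ (ENNReal.ofReal (1 / t) * I).toReal := by
    intro x hx
    have h2 : ENNReal.ofReal ((2 : ℝ) ^ (-(l x))) ≤ ENNReal.ofReal (1 / t) * I :=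
      (hball x hx).trans (by gcongr; exact setLIntegral_le_lintegral _ _)
    exact (ENNReal.ofReal_le_iff_le_toReal (ENNReal.mul_ne_top ENNReal.ofReal_ne_top hfin)).1 h2
  obtain ⟨u, huT, hdis, hcov⟩ := Vitali.exists_disjoint_subfamily_covering_enlargement_closedBall
    T (fun x => x) (fun x => (2 : ℝ) ^ (-(l x))) _ hR 5 (by norm_num)
  have hcount : u.Countable := by
    apply Set.PairwiseDisjoint.countable_of_nonempty_interior hdis
    intro x _
    exact ⟨x, Metric.ball_subset_interior_closedBall (Metric.mem_ball_self (by positivity))⟩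
  have hsub : T ⊆ ⋃ b ∈ u, Metric.closedBall b (5 * (2 : ℝ) ^ (-(l b))) := by
    intro x hx
    obtain ⟨b, hb, hb2⟩ := hcov x hx
    exact Set.mem_biUnion hb (hb2 (Metric.mem_closedBall_self (by positivity)))
  refine (measure_mono hsub).trans ((measure_biUnion_le _ hcount _).trans ?_)
  calc ∑' b : u, volume (Metric.closedBall (b : ℝ) (5 * (2 : ℝ) ^ (-(l b))))
      ≤ ∑' b : u, ENNReal.ofReal (10 / t) *
          ∫⁻ y in Metric.closedBall (b : ℝ) ((2 : ℝ) ^ (-(l b))), w y := by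
        apply ENNReal.tsum_le_tsum
        intro b
        rw [Real.volume_closedBall]
        have := hball b (huT b.2)
        rw [show 2 * (5 * (2 : ℝ) ^ (-(l b))) = 10 * (2 : ℝ) ^ (-(l b)) by ring,
          ENNReal.ofReal_mul (by norm_num), show 10 / t = 10 * (1 / t) by ring,
          ENNReal.ofReal_mul (by norm_num), mul_assoc]
        gcongr
    _ = ENNReal.ofReal (10 / t) *
          ∫⁻ y in ⋃ b ∈ u, Metric.closedBall (b : ℝ) ((2 : ℝ) ^ (-(l b))), w y := by
        rw [ENNReal.tsum_mul_left, lintegral_biUnion hcount _ hdis]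
        intro b _
        exact Metric.isClosed_closedBall.measurableSet
    _ ≤ _ := by gcongr; exact setLIntegral_le_lintegral _ _

lemma hlA_const_le (l : ℤ) (c : ℝ≥0∞) (x : ℝ) : hlA l (fun _ => c) x ≤ 2 * c := by
  unfold hlA
  rw [lintegral_const, Measure.restrict_apply_univ, Real.volume_closedBall]
  rw [mul_comm c, ← mul_assoc, ← ENNReal.ofReal_mul (by positivity)]
  gcongr
  rw [show (2 : ℝ) ^ l * (2 * 2 ^ (-l)) = 2 by rw [zpow_neg]; field_simp]
  simp

lemma HL_trunc {w : ℝ → ℝ≥0∞} (hw : Measurable w) {t : ℝ} (ht : 0 < t) :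
    volume {x | ENNReal.ofReal (3 * t) < HL w x} ≤
      ENNReal.ofReal (10 / t) * ∫⁻ y, {y | ENNReal.ofReal t < w y}.indicator w y := by
  have mS : MeasurableSet {y | ENNReal.ofReal t < w y} := measurableSet_lt measurable_const hw
  refine le_trans (measure_mono ?_) (HL_weak (hw.indicator mS) ht)
  intro x hx
  have hx : ENNReal.ofReal (3 * t) < HL w x := hx
  have h1 : HL w x ≤ 2 * ENNReal.ofReal t + HL ({y | ENNReal.ofReal t < w y}.indicator w) x := by
    apply iSup_le
    intro l
    have h2 : hlA l w x ≤ hlA l (fun _ => ENNReal.ofReal t) x +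
        hlA l ({y | ENNReal.ofReal t < w y}.indicator w) x := by
      unfold hlA
      rw [← mul_add, ← lintegral_add_left measurable_const]
      gcongr with y
      by_cases hy : ENNReal.ofReal t < w y
      · rw [Set.indicator_of_mem (by exact hy)]; exact le_add_self
      · exact (not_lt.1 hy).trans le_self_add
    refine h2.trans (add_le_add (hlA_const_le l _ x) ?_)
    exact le_iSup (fun l => hlA l ({y | ENNReal.ofReal t < w y}.indicator w) x) l
  change ENNReal.ofReal t < _
  by_contra hcon
  have h3 := h1.trans (add_le_add_right (not_lt.1 hcon) _)
  have h4 : 2 * ENNReal.ofReal t + ENNReal.ofReal t = ENNReal.ofReal (3 * t) := by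
    rw [ENNReal.ofReal_mul (by norm_num)]
    rw [show ENNReal.ofReal 3 = 3 by simp]
    ring
  rw [h4] at h3
  exact absurd hx (not_lt.2 h3)

lemma HL_Lp (s : ℝ) (hs : 1 < s) {w : ℝ → ℝ≥0∞} (hw : Measurable w) :
    ∫⁻ x, HL w x ^ s ≤ ENNReal.ofReal (3 ^ s * (10 * s / (s - 1))) * ∫⁻ x, w x ^ s := by
  have hs0 : 0 < s := by linarith
  have hs1 : 0 < s - 1 := by linarith
  have mH := measurable_HL hw
  have e1 : ∫⁻ x, HL w x ^ s =
      ENNReal.ofReal (3 ^ s) * ∫⁻ x, (ENNReal.ofReal (1 / 3) * HL w x) ^ s := by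
    rw [← lintegral_const_mul' _ _ ENNReal.ofReal_ne_top]
    apply lintegral_congr
    intro x
    rw [← ENNReal.ofReal_rpow_of_pos (by norm_num), ← ENNReal.mul_rpow_of_nonneg _ _ hs0.le,
      ← mul_assoc, ← ENNReal.ofReal_mul (by norm_num)]
    norm_num
  rw [e1, ENNReal.ofReal_mul (by positivity), mul_assoc]
  gcongr
  rw [lintegral_rpow_layer s hs0 (mH.const_mul _)]
  have hm : MeasurableSet {p : ℝ × ℝ | ENNReal.ofReal p.1 < w p.2} :=
    measurableSet_lt (ENNReal.measurable_ofReal.comp measurable_fst) (hw.comp measurable_snd)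
  have hstep : ∀ t ∈ Set.Ioi (0 : ℝ), ENNReal.ofReal (s * t ^ (s - 1)) *
      volume {x | ENNReal.ofReal t < ENNReal.ofReal (1 / 3) * HL w x} ≤
      ∫⁻ y, {p : ℝ × ℝ | ENNReal.ofReal p.1 < w p.2}.indicator
        (fun p => ENNReal.ofReal (10 * s / (s - 1)) * (w p.2 *
          ENNReal.ofReal ((s - 1) * p.1 ^ (s - 1 - 1)))) (t, y) := by
    intro t ht
    have ht : 0 < t := ht
    have h1 : {x | ENNReal.ofReal t < ENNReal.ofReal (1 / 3) * HL w x} ⊆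
        {x | ENNReal.ofReal (3 * t) < HL w x} := by
      intro x hx
      have hx : ENNReal.ofReal t < ENNReal.ofReal (1 / 3) * HL w x := hx
      have h2 : ENNReal.ofReal t = ENNReal.ofReal (1 / 3) * ENNReal.ofReal (3 * t) := by
        rw [← ENNReal.ofReal_mul (by positivity)]; congr 1; ring
      rw [h2] at hx
      exact (ENNReal.mul_lt_mul_iff_right (by simp) ENNReal.ofReal_ne_top).1 hx
    calc _ ≤ ENNReal.ofReal (s * t ^ (s - 1)) * (ENNReal.ofReal (10 / t) *
          ∫⁻ y, {y | ENNReal.ofReal t < w y}.indicator w y) := by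
          gcongr
          exact (measure_mono h1).trans (HL_trunc hw ht)
      _ = _ := by
          rw [← mul_assoc, ← ENNReal.ofReal_mul (by positivity),
            ← lintegral_const_mul' _ _ ENNReal.ofReal_ne_top]
          apply lintegral_congr
          intro y
          by_cases hy : ENNReal.ofReal t < w y
          · rw [Set.indicator_of_mem (by exact hy), Set.indicator_of_mem (by exact hy)]
            dsimp only
            rw [mul_comm (w y), ← mul_assoc, ← ENNReal.ofReal_mul (by positivity)]
            congr 2
            rw [Real.rpow_sub_one ht.ne' (s - 1)]
            field_simp
          · rw [Set.indicator_of_notMem (by exact hy), Set.indicator_of_notMem (by exact hy), mul_zero]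
  refine (setLIntegral_mono' measurableSet_Ioi hstep).trans ?_
  rw [lintegral_lintegral_swap]
  · rw [← lintegral_const_mul' _ _ ENNReal.ofReal_ne_top]
    apply lintegral_mono
    intro y
    dsimp only
    have e2 : w y ^ s = w y * w y ^ (s - 1) := by
      by_cases h0 : w y = 0
      · rw [h0, ENNReal.zero_rpow_of_pos hs0]; simp
      by_cases h1 : w y = ⊤
      · rw [h1, ENNReal.top_rpow_of_pos hs0, ENNReal.top_rpow_of_pos hs1]; simp
      · conv_lhs => rw [show s = 1 + (s - 1) by ring, ENNReal.rpow_add _ _ h0 h1, ENNReal.rpow_one]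
    rw [e2, rpow_eq_lintegral (s - 1) hs1 (w y)]
    have hmS : MeasurableSet {t : ℝ | ENNReal.ofReal t < w y} :=
      measurableSet_lt ENNReal.measurable_ofReal measurable_const
    rw [← lintegral_const_mul _ (Measurable.indicator (by fun_prop) hmS),
      ← lintegral_const_mul _ (Measurable.const_mul (Measurable.indicator (by fun_prop) hmS) _)]
    apply lintegral_mono
    intro t
    dsimp only
    by_cases hy : ENNReal.ofReal t < w y
    · rw [Set.indicator_of_mem (by exact hy), Set.indicator_of_mem (by exact hy)]
    · rw [Set.indicator_of_notMem (by exact hy)]; simp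
  · apply Measurable.aemeasurable
    refine Measurable.indicator ?_ hm
    have : Measurable (fun p : ℝ × ℝ => w p.2) := hw.comp measurable_snd
    apply Measurable.const_mul
    apply this.mul
    fun_prop

/-! ### Poisson-like kernels -/

def pker (l : ℤ) (x y : ℝ) : ℝ≥0∞ := ENNReal.ofReal ((2 : ℝ) ^ l / (1 + ((2 : ℝ) ^ l * (x - y)) ^ 2))

def PP (l : ℤ) (h : ℝ → ℝ≥0∞) (x : ℝ) : ℝ≥0∞ := ∫⁻ y, pker l x y * h y

lemma pker_comm (l : ℤ) (x y : ℝ) : pker l x y = pker l y x := by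
  unfold pker
  congr 3
  ring

lemma measurable_pker (l : ℤ) : Measurable (fun p : ℝ × ℝ => pker l p.1 p.2) := by
  unfold pker; fun_prop

lemma measurable_pker_right (l : ℤ) (x : ℝ) : Measurable (pker l x) := by
  unfold pker; fun_prop

lemma measurable_PP (l : ℤ) {h : ℝ → ℝ≥0∞} (hh : Measurable h) : Measurable (PP l h) := by
  unfold PP
  apply Measurable.lintegral_prod_right' (f := fun p : ℝ × ℝ => pker l p.1 p.2 * h p.2)
  exact (measurable_pker l).mul (hh.comp measurable_snd)

lemma pker_le (l : ℤ) (x y : ℝ) : pker l x y ≤ ∑' k : ℕ, ENNReal.ofReal (4 * (1 / 2) ^ k) *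
    (ENNReal.ofReal ((2 : ℝ) ^ (l - k)) *
      (Metric.closedBall x ((2 : ℝ) ^ (-(l - (k : ℤ))))).indicator 1 y) := by
  have hl : (0 : ℝ) < 2 ^ l := by positivity
  set u : ℝ := 2 ^ l * |x - y| with hu
  have hu0 : 0 ≤ u := by positivity
  have hex : ∃ k : ℕ, u ≤ 2 ^ k := by
    obtain ⟨k, hk⟩ := pow_unbounded_of_one_lt u (one_lt_two)
    exact ⟨k, hk.le⟩
  classical
  set k := Nat.find hex with hk
  have hk1 : u ≤ 2 ^ k := Nat.find_spec hex
  refine le_trans ?_ (ENNReal.le_tsum k)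
  rw [Set.indicator_of_mem]
  · rw [Pi.one_apply, mul_one, ← ENNReal.ofReal_mul (by positivity)]
    unfold pker
    apply ENNReal.ofReal_le_ofReal
    have e : ((2 : ℝ) ^ l * (x - y)) ^ 2 = u ^ 2 := by rw [hu, mul_pow, mul_pow, sq_abs]
    rw [e, zpow_sub₀ (by norm_num), zpow_natCast, div_le_iff₀ (by positivity)]
    have e2 : 4 * (1 / 2 : ℝ) ^ k * (2 ^ l / 2 ^ k) * (1 + u ^ 2) =
        2 ^ l * (4 * (1 + u ^ 2) / (2 ^ k) ^ 2) := by
      rw [one_div, inv_pow]; field_simp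
    rw [e2]
    apply le_mul_of_one_le_right hl.le
    rw [one_le_div (by positivity)]
    rcases Nat.eq_zero_or_pos k with h0 | h0
    · rw [h0]; norm_num; nlinarith
    · have h1 : ¬ u ≤ 2 ^ (k - 1) := Nat.find_min hex (by omega)
      have h2 : (2 : ℝ) ^ k = 2 * 2 ^ (k - 1) := by rw [← pow_succ']; congr 1; omega
      rw [h2]
      have h3 : (0 : ℝ) < 2 ^ (k - 1) := by positivity
      nlinarith [not_le.1 h1]
  · rw [Metric.mem_closedBall, Real.dist_eq, abs_sub_comm, neg_sub, zpow_sub₀ (by norm_num),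
      zpow_natCast, le_div_iff₀ hl]
    linarith

lemma PP_le_HL (l : ℤ) {h : ℝ → ℝ≥0∞} (hh : Measurable h) (x : ℝ) : PP l h x ≤ 8 * HL h x := by
  have h1 : PP l h x ≤ ∑' k : ℕ, ENNReal.ofReal (4 * (1 / 2) ^ k) * hlA (l - k) h x := by
    calc PP l h x ≤ ∫⁻ y, ∑' k : ℕ, ENNReal.ofReal (4 * (1 / 2) ^ k) *
          (ENNReal.ofReal ((2 : ℝ) ^ (l - k)) *
            (Metric.closedBall x ((2 : ℝ) ^ (-(l - (k : ℤ))))).indicator h y) := by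
          apply lintegral_mono
          intro y
          dsimp only
          refine (mul_le_mul_left (pker_le l x y) (h y)).trans ?_
          rw [← ENNReal.tsum_mul_right]
          apply ENNReal.tsum_le_tsum
          intro k
          rw [mul_assoc, mul_assoc]
          by_cases hy : y ∈ Metric.closedBall x ((2 : ℝ) ^ (-(l - (k : ℤ))))
          · rw [Set.indicator_of_mem hy, Set.indicator_of_mem hy, Pi.one_apply, one_mul]
          · rw [Set.indicator_of_notMem hy, Set.indicator_of_notMem hy, zero_mul]
      _ = _ := by
          rw [lintegral_tsum]
          · congr 1
            ext k
            rw [lintegral_const_mul' _ _ ENNReal.ofReal_ne_top,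
              lintegral_const_mul' _ _ ENNReal.ofReal_ne_top,
              lintegral_indicator Metric.isClosed_closedBall.measurableSet]
            rfl
          · intro k
            exact (((hh.indicator Metric.isClosed_closedBall.measurableSet).const_mul _).const_mul
              _).aemeasurable
  refine h1.trans ?_
  calc _ ≤ ∑' k : ℕ, ENNReal.ofReal (4 * (1 / 2) ^ k) * HL h x := by
        apply ENNReal.tsum_le_tsum
        intro k
        gcongr
        exact le_iSup (fun l => hlA l h x) (l - k)
    _ = _ := by
        rw [ENNReal.tsum_mul_right, ← ENNReal.ofReal_tsum_of_nonneg (fun i => by positivity)]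
        · rw [tsum_mul_left, tsum_geometric_two]; norm_num
        · exact summable_geometric_two.mul_left _

/-! ### Rubio de Francia iteration -/

lemma lintegral_rpow_le_measure {α : Type*} [MeasurableSpace α] (μ : Measure α) (s : ℝ) (hs : 1 ≤ s)
    {h : α → ℝ≥0∞} (hh : AEMeasurable h μ) :
    (∫⁻ x, h x ∂μ) ^ s ≤ μ Set.univ ^ (s - 1) * ∫⁻ x, h x ^ s ∂μ := by
  rcases hs.eq_or_lt with rfl | hs
  · simp
  have hpq : s.HolderConjugate (s / (s - 1)) := Real.HolderConjugate.conjExponent hs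
  have h1 := ENNReal.lintegral_mul_le_Lp_mul_Lq μ hpq hh (aemeasurable_const (b := (1 : ℝ≥0∞)))
  simp only [Pi.mul_apply, mul_one, ENNReal.one_rpow, lintegral_const, one_mul] at h1
  have hs0 : 0 < s := by linarith
  have hs1 : s - 1 ≠ 0 := by linarith
  refine (ENNReal.rpow_le_rpow h1 hs0.le).trans (le_of_eq ?_)
  rw [ENNReal.mul_rpow_of_nonneg _ _ hs0.le, ← ENNReal.rpow_mul, ← ENNReal.rpow_mul,
    one_div_mul_cancel hs0.ne', ENNReal.rpow_one, mul_comm]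
  congr 2
  field_simp

lemma tsum_half_rpow (s : ℝ) (hs : 1 ≤ s) (b : ℕ → ℝ≥0∞) :
    (∑' k, (2⁻¹ : ℝ≥0∞) ^ k * b k) ^ s ≤ 2 ^ (s - 1) * ∑' k, (2⁻¹ : ℝ≥0∞) ^ k * b k ^ s := by
  set μ : Measure ℕ := Measure.count.withDensity (fun k => (2⁻¹ : ℝ≥0∞) ^ k) with hμ
  have hm : ∀ f : ℕ → ℝ≥0∞, Measurable f := fun f => measurable_from_nat
  have e : ∀ f : ℕ → ℝ≥0∞, ∫⁻ k, f k ∂μ = ∑' k, (2⁻¹ : ℝ≥0∞) ^ k * f k := by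
    intro f
    rw [hμ, lintegral_withDensity_eq_lintegral_mul _ (hm _) (hm _), lintegral_count]
    rfl
  have := lintegral_rpow_le_measure μ s hs (hm b).aemeasurable
  rw [e, e] at this
  have e2 : μ Set.univ = 2 := by
    rw [← lintegral_one, e]
    simp [ENNReal.tsum_geometric]
  rwa [e2] at this

theorem rubio (s : ℝ) (hs : 1 < s) : ∃ C : ℝ≥0, ∀ w : ℝ → ℝ≥0∞, Measurable w →
    ∃ W : ℝ → ℝ≥0∞, Measurable W ∧ (∀ x, w x ≤ W x) ∧
      (∀ l x, PP l W x ≤ C * W x) ∧ ∫⁻ x, W x ^ s ≤ C * ∫⁻ x, w x ^ s := by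
  have hs0 : 0 < s := by linarith
  set B : ℝ := 3 ^ s * (10 * s / (s - 1)) with hB
  have hs1 : 0 < s - 1 := by linarith
  have hBpos : 0 < B := by positivity
  set K : ℝ := B ^ (1 / s) with hK
  have hKpos : 0 < K := by positivity
  have hKs : ENNReal.ofReal K ^ s = ENNReal.ofReal B := by
    rw [ENNReal.ofReal_rpow_of_pos hKpos, hK, ← Real.rpow_mul hBpos.le, one_div_mul_cancel hs0.ne',
      Real.rpow_one]
  set Ki : ℝ≥0∞ := ENNReal.ofReal (1 / K) with hKi
  refine ⟨(16 * K + 2 ^ s).toNNReal, fun w hw => ?_⟩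
  set m : ℕ → ℝ → ℝ≥0∞ := fun k => (fun v => fun x => Ki * HL v x)^[k] w with hm
  have hm0 : m 0 = w := rfl
  have hmS : ∀ k, m (k + 1) = fun x => Ki * HL (m k) x := by
    intro k
    simp only [hm, Function.iterate_succ_apply']
  have hmm : ∀ k, Measurable (m k) := by
    intro k
    induction k with
    | zero => exact hw
    | succ k ih => rw [hmS]; exact (measurable_HL ih).const_mul _
  have hmI : ∀ k, ∫⁻ x, m k x ^ s ≤ ∫⁻ x, w x ^ s := by
    intro k
    induction k with
    | zero => exact le_rfl
    | succ k ih =>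
      refine le_trans ?_ ih
      rw [hmS]
      simp_rw [ENNReal.mul_rpow_of_nonneg _ _ hs0.le]
      rw [lintegral_const_mul' _ _ (ENNReal.rpow_ne_top_of_nonneg hs0.le ENNReal.ofReal_ne_top)]
      refine (mul_le_mul_right (HL_Lp s hs (hmm k)) _).trans (le_of_eq ?_)
      rw [← hB, ← hKs, ← mul_assoc, ← ENNReal.mul_rpow_of_nonneg _ _ hs0.le,
        ← ENNReal.ofReal_mul (by positivity), one_div_mul_cancel hKpos.ne']
      simp
  refine ⟨fun x => ∑' k, (2⁻¹ : ℝ≥0∞) ^ k * m k x, ?_, ?_, ?_, ?_⟩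
  · exact Measurable.tsum fun k => (hmm k).const_mul _
  · intro x
    refine le_trans ?_ (ENNReal.le_tsum 0)
    simp [hm0]
  · intro l x
    have h1 : PP l (fun x => ∑' k, (2⁻¹ : ℝ≥0∞) ^ k * m k x) x =
        ∑' k, (2⁻¹ : ℝ≥0∞) ^ k * PP l (m k) x := by
      unfold PP
      simp_rw [← ENNReal.tsum_mul_left]
      rw [lintegral_tsum]
      · congr 1
        ext k
        rw [← lintegral_const_mul' _ _ (by simp)]
        congr 1
        ext y
        ring
      · intro k
        exact ((measurable_pker_right l x).mul ((hmm k).const_mul _)).aemeasurable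
    rw [h1]
    have h2 : ∀ k, (2⁻¹ : ℝ≥0∞) ^ k * PP l (m k) x ≤
        ENNReal.ofReal (16 * K) * ((2⁻¹ : ℝ≥0∞) ^ (k + 1) * m (k + 1) x) := by
      intro k
      have h3 := PP_le_HL l (hmm k) x
      have h4 : HL (m k) x = ENNReal.ofReal K * m (k + 1) x := by
        rw [hmS, ← mul_assoc, hKi, ← ENNReal.ofReal_mul (by positivity),
          mul_one_div_cancel hKpos.ne']
        simp
      rw [h4] at h3
      refine (mul_le_mul_right h3 _).trans (le_of_eq ?_)
      rw [pow_succ, ENNReal.ofReal_mul (by norm_num),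
        show ENNReal.ofReal 16 = 2 * 8 by norm_num]
      have h5 : (2⁻¹ : ℝ≥0∞) * 2 = 1 := ENNReal.inv_mul_cancel (by simp) (by simp)
      calc (2⁻¹ : ℝ≥0∞) ^ k * (8 * (ENNReal.ofReal K * m (k + 1) x))
          = (2⁻¹ * 2) * ((2⁻¹ : ℝ≥0∞) ^ k * (8 * (ENNReal.ofReal K * m (k + 1) x))) := by
            rw [h5, one_mul]
        _ = _ := by ring
    refine (ENNReal.tsum_le_tsum h2).trans ?_
    rw [ENNReal.tsum_mul_left]
    refine mul_le_mul' (ENNReal.ofReal_le_ofReal ?_) ?_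
    · have : (0 : ℝ) < 2 ^ s := by positivity
      linarith
    · exact ENNReal.tsum_comp_le_tsum_of_injective (add_left_injective 1)
        (fun k => (2⁻¹ : ℝ≥0∞) ^ k * m k x)
  · calc ∫⁻ x, (∑' k, (2⁻¹ : ℝ≥0∞) ^ k * m k x) ^ s
        ≤ ∫⁻ x, 2 ^ (s - 1) * ∑' k, (2⁻¹ : ℝ≥0∞) ^ k * m k x ^ s :=
          lintegral_mono fun x => tsum_half_rpow s hs.le _
      _ = 2 ^ (s - 1) * ∑' k, (2⁻¹ : ℝ≥0∞) ^ k * ∫⁻ x, m k x ^ s := by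
          rw [lintegral_const_mul' _ _ (ENNReal.rpow_ne_top_of_nonneg hs1.le (by simp)), lintegral_tsum]
          · congr 2
            ext k
            rw [lintegral_const_mul' _ _ (by simp)]
          · intro k
            exact (((hmm k).pow_const s).const_mul _).aemeasurable
      _ ≤ 2 ^ (s - 1) * ∑' k : ℕ, (2⁻¹ : ℝ≥0∞) ^ k * ∫⁻ x, w x ^ s := by
          exact mul_le_mul_right (ENNReal.tsum_le_tsum fun k => mul_le_mul_right (hmI k) _) _
      _ = 2 ^ s * ∫⁻ x, w x ^ s := by
          rw [ENNReal.tsum_mul_right, ← mul_assoc]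
          congr 1
          rw [ENNReal.tsum_geometric, ENNReal.one_sub_inv_two, inv_inv]
          nth_rewrite 2 [← ENNReal.rpow_one 2]
          rw [← ENNReal.rpow_add _ _ (by simp) (by simp)]
          simp
      _ ≤ _ := by
          gcongr
          change _ ≤ ENNReal.ofReal _
          rw [show (2 : ℝ≥0∞) = ENNReal.ofReal 2 by simp, ENNReal.ofReal_rpow_of_pos (by norm_num)]
          apply ENNReal.ofReal_le_ofReal
          linarith

/-! ### Reproducing formulas for band-limited functions -/

lemma fourier_repr (φ g m : SchwartzMap ℝ ℂ) {a : ℝ} (ha : 0 < a)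
    (h : ∀ ξ, 𝓕 (⇑φ) ξ = m (a * ξ) * 𝓕 (⇑g) ξ) (x : ℝ) :
    φ x = ∫ y, ((a⁻¹ : ℝ) : ℂ) * (𝓕 (⇑m) (a⁻¹ * (y - x))) * g y := by
  set F : ℝ → ℂ := fun ξ => Real.fourierChar (ξ * x) • m (a * ξ) with hF
  have hFi : Integrable F := by
    have h1 : Integrable (fun ξ => m (a * ξ)) := m.integrable.comp_mul_left' ha.ne'
    have h2 := (Real.fourierIntegral_convergent_iff (V := ℝ) (μ := volume) (f := fun ξ => m (a * ξ)) (-x)).2 h1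
    refine h2.congr (Filter.Eventually.of_forall fun ξ => ?_)
    simp [hF, mul_comm]
  have e1 : ∀ y, 𝓕 F y = ((a⁻¹ : ℝ) : ℂ) * 𝓕 (⇑m) (a⁻¹ * (y - x)) := by
    intro y
    rw [Real.fourier_real_eq, Real.fourier_real_eq]
    have h2 := Measure.integral_comp_mul_left
      (fun v => Real.fourierChar (-(v * (a⁻¹ * (y - x)))) • m v) a
    rw [abs_of_pos (by positivity)] at h2
    rw [← Complex.real_smul, ← h2]
    congr 1
    ext ξ
    rw [hF]
    dsimp only
    rw [smul_smul, ← AddChar.map_add_eq_mul]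
    congr 2
    field_simp
    ring
  have e2 := VectorFourier.integral_fourierIntegral_smul_eq_flip (L := innerₗ ℝ) (μ := volume)
    (ν := volume) Real.continuous_fourierChar (by fun_prop) hFi g.integrable
  have e3 : ∀ x', VectorFourier.fourierIntegral Real.fourierChar volume (innerₗ ℝ).flip (⇑g) x' = 𝓕 (⇑g) x' := by
    intro x'
    rw [flip_innerₗ]; rfl
  have e4 : ∀ y, VectorFourier.fourierIntegral Real.fourierChar volume (innerₗ ℝ) F y = 𝓕 F y := fun y => rfl
  simp_rw [e3, e4, e1, smul_eq_mul] at e2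
  rw [e2]
  have e5 : φ x = 𝓕⁻ (𝓕 (⇑φ)) x := by
    have h3 : 𝓕⁻ (𝓕 φ) = φ := FourierPair.fourierInv_fourier_eq φ
    conv_lhs => rw [← h3]
    rw [SchwartzMap.fourierInv_coe, SchwartzMap.fourier_coe]
  rw [e5, Real.fourierInv_eq]
  congr 1
  ext ξ
  rw [h ξ]
  simp only [hF, Circle.smul_def, smul_eq_mul, mul_assoc]
  simp [mul_comm]

lemma schwartz_decay (κ : SchwartzMap ℝ ℂ) : ∃ C : ℝ, 0 < C ∧ ∀ u, ‖κ u‖ ≤ C / (1 + u ^ 2) := by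
  obtain ⟨C0, h0, hC0⟩ := κ.decay 0 0
  obtain ⟨C2, h2, hC2⟩ := κ.decay 2 0
  refine ⟨C0 + C2, by positivity, fun u => ?_⟩
  have a0 := hC0 u
  have a2 := hC2 u
  simp only [norm_iteratedFDeriv_zero, pow_zero, one_mul, Real.norm_eq_abs, sq_abs] at a0 a2
  rw [le_div_iff₀ (by positivity)]
  nlinarith

lemma multiplier_bound (m : SchwartzMap ℝ ℂ) : ∃ C : ℝ≥0, ∀ (φ g : SchwartzMap ℝ ℂ) (j : ℤ),
    (∀ ξ, 𝓕 (⇑φ) ξ = m ((2 : ℝ) ^ (-j) * ξ) * 𝓕 (⇑g) ξ) → ∀ x,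
    ‖φ x‖ₑ ≤ C * PP j (fun y => ‖g y‖ₑ) x := by
  obtain ⟨C, hC0, hC⟩ := schwartz_decay (𝓕 m)
  refine ⟨C.toNNReal, fun φ g j h x => ?_⟩
  rw [fourier_repr φ g m (by positivity) h x]
  refine (enorm_integral_le_lintegral_enorm _).trans ?_
  unfold PP
  rw [← lintegral_const_mul' _ _ (by simp)]
  apply lintegral_mono
  intro y
  dsimp only
  rw [enorm_mul, ← mul_assoc]
  gcongr
  rw [← ofReal_norm]
  change _ ≤ ENNReal.ofReal C * pker j x y
  unfold pker
  rw [← ENNReal.ofReal_mul hC0.le]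
  apply ENNReal.ofReal_le_ofReal
  have h1 := hC (((2 : ℝ) ^ (-j))⁻¹ * (y - x))
  rw [SchwartzMap.fourier_coe] at h1
  rw [norm_mul, Complex.norm_real, Real.norm_eq_abs, abs_of_pos (by positivity)]
  refine (mul_le_mul_of_nonneg_left h1 (by positivity)).trans (le_of_eq ?_)
  rw [zpow_neg, inv_inv, show ((2 : ℝ) ^ j * (x - y)) ^ 2 = ((2 : ℝ) ^ j * (y - x)) ^ 2 by ring]
  ring

open scoped ContDiff in
lemma exists_multipliers (Nb : ℝ) : ∃ m1 m2 : SchwartzMap ℝ ℂ, ∀ u : ℝ,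
    (2 : ℝ) ^ (-Nb) < |u| → |u| < (2 : ℝ) ^ Nb →
      m1 u = 2 * Real.pi * Complex.I * u ∧ 2 * Real.pi * Complex.I * u * m2 u = 1 := by
  set b1 : ContDiffBump (0 : ℝ) := ⟨2 ^ Nb, 2 ^ Nb + 1, by positivity, by linarith⟩ with hb1
  set b0 : ContDiffBump (0 : ℝ) := ⟨2 ^ (-Nb) / 4, 2 ^ (-Nb) / 2, by positivity, by
    have : (0 : ℝ) < 2 ^ (-Nb) := by positivity
    linarith⟩ with hb0
  have c1 : ContDiff ℝ ∞ (fun u : ℝ => ((b1 u : ℝ) : ℂ)) := Complex.ofRealCLM.contDiff.comp b1.contDiff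
  have c0 : ContDiff ℝ ∞ (fun u : ℝ => ((b0 u : ℝ) : ℂ)) := Complex.ofRealCLM.contDiff.comp b0.contDiff
  have cid : ContDiff ℝ ∞ (fun u : ℝ => (u : ℂ)) := Complex.ofRealCLM.contDiff
  have s1 : HasCompactSupport (fun u : ℝ => ((b1 u : ℝ) : ℂ)) :=
    b1.hasCompactSupport.comp_left (g := fun r : ℝ => (r : ℂ)) (by simp)
  have s0 : HasCompactSupport (fun u : ℝ => ((b0 u : ℝ) : ℂ)) :=
    b0.hasCompactSupport.comp_left (g := fun r : ℝ => (r : ℂ)) (by simp)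
  set χ : ℝ → ℂ := fun u => ((b1 u : ℝ) : ℂ) * (1 - ((b0 u : ℝ) : ℂ)) with hχ
  have cχ : ContDiff ℝ ∞ χ := c1.mul (contDiff_const.sub c0)
  have sχ : HasCompactSupport χ := s1.mul_right
  have hc : (2 * Real.pi * Complex.I : ℂ) ≠ 0 := Complex.two_pi_I_ne_zero
  have cm1 : ContDiff ℝ ∞ (fun u : ℝ => χ u * (2 * Real.pi * Complex.I * u)) :=
    cχ.mul (contDiff_const.mul cid)
  have cm2 : ContDiff ℝ ∞ (fun u : ℝ => χ u * (2 * Real.pi * Complex.I * u)⁻¹) := by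
    rw [contDiff_iff_contDiffAt]
    intro u
    by_cases hu : u = 0
    · have : (fun u : ℝ => χ u * (2 * Real.pi * Complex.I * u)⁻¹) =ᶠ[nhds u] fun _ => 0 := by
        rw [hu]
        filter_upwards [b0.eventuallyEq_one] with v hv
        rw [hχ]
        simp only [hv]
        simp
      exact contDiffAt_const.congr_of_eventuallyEq this
    · apply cχ.contDiffAt.mul
      apply ContDiffAt.inv
      · exact (contDiff_const.mul cid).contDiffAt
      · exact mul_ne_zero hc (by exact_mod_cast hu)
  refine ⟨(sχ.mul_right).toSchwartzMap cm1, (sχ.mul_right).toSchwartzMap cm2, ?_⟩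
  intro u h1 h2
  have hχ1 : χ u = 1 := by
    have e1 : b1 u = 1 := by
      apply b1.one_of_mem_closedBall
      simp only [Metric.mem_closedBall, Real.dist_eq, sub_zero]
      exact h2.le
    have e0 : b0 u = 0 := by
      apply b0.zero_of_le_dist
      rw [Real.dist_eq, sub_zero]
      change 2 ^ (-Nb) / 2 ≤ |u|
      have : (0 : ℝ) < 2 ^ (-Nb) := by positivity
      linarith
    rw [hχ]; simp [e1, e0]
  have hu : u ≠ 0 := by
    rintro rfl
    have : (0 : ℝ) < 2 ^ (-Nb) := by positivity
    simp at h1; linarith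
  constructor
  · change χ u * (2 * Real.pi * Complex.I * u) = _
    rw [hχ1, one_mul]
  · change _ * (χ u * (2 * Real.pi * Complex.I * u)⁻¹) = _
    rw [hχ1, one_mul]
    exact mul_inv_cancel₀ (mul_ne_zero hc (by exact_mod_cast hu))

lemma fourier_derivCLM (g : SchwartzMap ℝ ℂ) (ξ : ℝ) :
    𝓕 (⇑(SchwartzMap.derivCLM ℝ ℂ g)) ξ = 2 * Real.pi * Complex.I * ξ * 𝓕 (⇑g) ξ := by
  have h1 : (⇑(SchwartzMap.derivCLM ℝ ℂ g) : ℝ → ℂ) = deriv g := by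
    ext x; rw [SchwartzMap.derivCLM_apply]
  rw [h1, Real.fourier_deriv g.integrable g.differentiable]
  · simp
  · rw [← h1]; exact SchwartzMap.integrable _

lemma schwartz_ext_fourier {φ g : SchwartzMap ℝ ℂ} (h : ∀ ξ, 𝓕 (⇑φ) ξ = 𝓕 (⇑g) ξ) : φ = g := by
  have h1 : 𝓕 φ = 𝓕 g := by
    ext ξ
    rw [SchwartzMap.fourier_coe, SchwartzMap.fourier_coe]; exact h ξ
  have h2 : 𝓕⁻ (𝓕 φ) = φ := FourierPair.fourierInv_fourier_eq φ
  have h3 : 𝓕⁻ (𝓕 g) = g := FourierPair.fourierInv_fourier_eq g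
  rw [← h2, h1, h3]

/-- Derivative and primitive bounds for band-limited functions. -/
theorem band_bounds (Nb : ℝ) : ∃ C : ℝ≥0, ∀ (g : SchwartzMap ℝ ℂ) (j : ℤ),
    (∀ ξ : ℝ, 𝓕 (⇑g) ξ ≠ 0 →
      (2 : ℝ) ^ ((j : ℝ) - Nb) < |ξ| ∧ |ξ| < (2 : ℝ) ^ ((j : ℝ) + Nb)) →
    (∀ x, ‖deriv g x‖ₑ ≤ C * ENNReal.ofReal ((2 : ℝ) ^ j) * PP j (fun y => ‖g y‖ₑ) x) ∧
    (∀ a b, ‖∫ y in a..b, g y‖ₑ ≤ C * ENNReal.ofReal ((2 : ℝ) ^ (-j)) *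
      (PP j (fun y => ‖g y‖ₑ) a + PP j (fun y => ‖g y‖ₑ) b)) := by
  obtain ⟨m1, m2, hm⟩ := exists_multipliers Nb
  obtain ⟨C1, hC1⟩ := multiplier_bound m1
  obtain ⟨C2, hC2⟩ := multiplier_bound m2
  refine ⟨C1 + C2, fun g j hg => ?_⟩
  have h2j : (0 : ℝ) < 2 ^ j := by positivity
  have hband : ∀ ξ, 𝓕 (⇑g) ξ ≠ 0 → (2 : ℝ) ^ (-Nb) < |(2 : ℝ) ^ (-j) * ξ| ∧
      |(2 : ℝ) ^ (-j) * ξ| < (2 : ℝ) ^ Nb := by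
    intro ξ hξ
    obtain ⟨h1, h2⟩ := hg ξ hξ
    rw [abs_mul, abs_of_pos (by positivity), zpow_neg, inv_mul_eq_div, lt_div_iff₀ h2j, div_lt_iff₀ h2j]
    rw [sub_eq_add_neg, Real.rpow_add (by norm_num), Real.rpow_intCast] at h1
    rw [Real.rpow_add (by norm_num), Real.rpow_intCast] at h2
    constructor <;> linarith
  constructor
  · intro x
    have h1 := hC1 (((2 : ℝ) ^ (-j)) • SchwartzMap.derivCLM ℝ ℂ g) g j (by
      intro ξ
      rw [← SchwartzMap.fourier_coe, FourierTransform.fourier_smul, smul_apply, SchwartzMap.fourier_coe, fourier_derivCLM]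
      by_cases hξ : 𝓕 (⇑g) ξ = 0
      · rw [hξ]; simp
      · obtain ⟨h3, h4⟩ := hband ξ hξ
        rw [(hm _ h3 h4).1, Complex.real_smul]
        push_cast
        ring) x
    rw [smul_apply, SchwartzMap.derivCLM_apply, enorm_smul,
      Real.enorm_eq_ofReal (by positivity)] at h1
    have h5 : ENNReal.ofReal ((2 : ℝ) ^ j) * ENNReal.ofReal ((2 : ℝ) ^ (-j)) = 1 := by
      rw [← ENNReal.ofReal_mul (by positivity), zpow_neg, mul_inv_cancel₀ h2j.ne', ENNReal.ofReal_one]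
    calc ‖deriv g x‖ₑ = ENNReal.ofReal ((2 : ℝ) ^ j) * (ENNReal.ofReal ((2 : ℝ) ^ (-j)) * ‖deriv g x‖ₑ) := by
          rw [← mul_assoc, h5, one_mul]
      _ ≤ ENNReal.ofReal ((2 : ℝ) ^ j) * (C1 * PP j (fun y => ‖g y‖ₑ) x) := by gcongr
      _ = C1 * ENNReal.ofReal ((2 : ℝ) ^ j) * PP j (fun y => ‖g y‖ₑ) x := by ring
      _ ≤ _ := by gcongr; simp
  · intro a b
    have hM : Function.HasTemperateGrowth (fun ξ : ℝ => m2 ((2 : ℝ) ^ (-j) * ξ)) := by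
      exact m2.hasTemperateGrowth.comp (by fun_prop)
    set φ : SchwartzMap ℝ ℂ := 𝓕⁻ (SchwartzMap.smulLeftCLM ℂ (fun ξ : ℝ => m2 ((2 : ℝ) ^ (-j) * ξ)) (𝓕 g))
      with hφ
    have hφF : ∀ ξ, 𝓕 (⇑φ) ξ = m2 ((2 : ℝ) ^ (-j) * ξ) * 𝓕 (⇑g) ξ := by
      intro ξ
      rw [← SchwartzMap.fourier_coe, hφ, FourierInvPair.fourier_fourierInv_eq,
        SchwartzMap.smulLeftCLM_apply_apply hM, SchwartzMap.fourier_coe, smul_eq_mul]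
    have hd : ((2 : ℝ) ^ (-j)) • SchwartzMap.derivCLM ℝ ℂ φ = g := by
      apply schwartz_ext_fourier
      intro ξ
      rw [← SchwartzMap.fourier_coe, FourierTransform.fourier_smul, smul_apply, SchwartzMap.fourier_coe, fourier_derivCLM, hφF]
      by_cases hξ : 𝓕 (⇑g) ξ = 0
      · rw [hξ]; simp
      · obtain ⟨h3, h4⟩ := hband ξ hξ
        have := (hm _ h3 h4).2
        rw [Complex.real_smul]
        push_cast at this ⊢
        linear_combination 𝓕 (⇑g) ξ * this
    have hintg : ∫ y in a..b, g y = ((2 : ℝ) ^ (-j)) • (φ b - φ a) := by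
      rw [← intervalIntegral.integral_deriv_eq_sub (fun x _ => φ.differentiable.differentiableAt)]
      · rw [← intervalIntegral.integral_smul]
        congr 1
        ext y
        conv_lhs => rw [← hd]
        rw [smul_apply, SchwartzMap.derivCLM_apply]
      · have : (deriv φ) = ⇑(SchwartzMap.derivCLM ℝ ℂ φ) := by
          ext x; rw [SchwartzMap.derivCLM_apply]
        rw [this]
        exact (SchwartzMap.continuous _).intervalIntegrable _ _
    rw [hintg, enorm_smul, Real.enorm_eq_ofReal (by positivity)]
    have h6 : ‖φ b - φ a‖ₑ ≤ C2 * (PP j (fun y => ‖g y‖ₑ) a + PP j (fun y => ‖g y‖ₑ) b) := by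
      refine enorm_sub_le.trans ?_
      rw [mul_add, add_comm]
      exact add_le_add (hC2 φ g j hφF a) (hC2 φ g j hφF b)
    calc _ ≤ ENNReal.ofReal ((2 : ℝ) ^ (-j)) * (C2 * (PP j (fun y => ‖g y‖ₑ) a + PP j (fun y => ‖g y‖ₑ) b)) := by
          gcongr
      _ = C2 * ENNReal.ofReal ((2 : ℝ) ^ (-j)) * (PP j (fun y => ‖g y‖ₑ) a + PP j (fun y => ‖g y‖ₑ) b) := by ring
      _ ≤ _ := by gcongr; simp

/-! ### Kernel bounds for dyadic averages of band-limited functions -/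

lemma HL_one_le (x : ℝ) : HL (fun _ => 1) x ≤ 2 := by
  apply iSup_le
  intro l
  simpa using hlA_const_le l 1 x

lemma PP_one_le (l : ℤ) (x : ℝ) : PP l (fun _ => 1) x ≤ 16 := by
  refine (PP_le_HL l measurable_const x).trans ?_
  calc (8 : ℝ≥0∞) * HL (fun _ => 1) x ≤ 8 * 2 := by gcongr; exact HL_one_le x
    _ = 16 := by norm_num

lemma PP_eq_withDensity (l : ℤ) (h : ℝ → ℝ≥0∞) (hh : Measurable h) (x : ℝ) :
    PP l h x = ∫⁻ y, h y ∂(volume.withDensity (pker l x)) := by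
  rw [lintegral_withDensity_eq_lintegral_mul _ (measurable_pker_right l x) hh]
  rfl

lemma withDensity_univ_le (l : ℤ) (x : ℝ) : (volume.withDensity (pker l x)) Set.univ ≤ 16 := by
  rw [← lintegral_one, ← PP_eq_withDensity l _ measurable_const]
  exact PP_one_le l x

lemma PP_jensen (l : ℤ) {h : ℝ → ℝ≥0∞} (hh : Measurable h) (x : ℝ) (r : ℝ) (hr : 1 ≤ r) :
    PP l h x ^ r ≤ 16 ^ (r - 1) * PP l (fun y => h y ^ r) x := by
  rw [PP_eq_withDensity l h hh, PP_eq_withDensity l _ (hh.pow_const r)]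
  refine (lintegral_rpow_le_measure _ r hr hh.aemeasurable).trans ?_
  gcongr
  exact withDensity_univ_le l x

lemma PP_integral_mul (l : ℤ) {h V : ℝ → ℝ≥0∞} (hh : Measurable h) (hV : Measurable V) :
    ∫⁻ x, PP l h x * V x = ∫⁻ y, h y * PP l V y := by
  have m1 : ∀ x, Measurable (fun y => pker l x y * h y) := fun x => (measurable_pker_right l x).mul hh
  unfold PP
  simp_rw [← lintegral_mul_const (V _) (m1 _)]
  have m2 : ∀ y, Measurable (fun x => pker l y x * V x) := fun x => (measurable_pker_right l x).mul hV
  simp_rw [← lintegral_const_mul (h _) (m2 _)]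
  rw [lintegral_lintegral_swap]
  · apply lintegral_congr
    intro y
    apply lintegral_congr
    intro x
    rw [pker_comm]
    ring
  · apply Measurable.aemeasurable
    exact ((measurable_pker l).mul (hh.comp measurable_snd)).mul (hV.comp measurable_fst)

lemma PP_integral_le (l : ℤ) {h : ℝ → ℝ≥0∞} (hh : Measurable h) :
    ∫⁻ x, PP l h x ≤ 16 * ∫⁻ y, h y := by
  have := PP_integral_mul l hh (measurable_const (a := (1 : ℝ≥0∞)))
  simp only [mul_one] at this
  rw [this, ← lintegral_const_mul _ hh]
  apply lintegral_mono
  intro y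
  dsimp only
  rw [mul_comm]
  gcongr
  exact PP_one_le l y

lemma PP_mono (l : ℤ) {h h' : ℝ → ℝ≥0∞} (H : ∀ y, h y ≤ h' y) (x : ℝ) : PP l h x ≤ PP l h' x := by
  unfold PP
  gcongr with y
  exact H y

lemma pker_shift (l : ℤ) (x z y : ℝ) (h : |z - x| ≤ (2 : ℝ) ^ (-l)) :
    pker l z y ≤ 3 * pker l x y := by
  unfold pker
  rw [show (3 : ℝ≥0∞) = ENNReal.ofReal 3 by simp, ← ENNReal.ofReal_mul (by norm_num)]
  apply ENNReal.ofReal_le_ofReal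
  have h2 : (0 : ℝ) < 2 ^ l := by positivity
  rw [← mul_div_assoc, div_le_div_iff₀ (by positivity) (by positivity)]
  have h3 : |(2 : ℝ) ^ l * (z - x)| ≤ 1 := by
    rw [abs_mul, abs_of_pos h2]
    calc _ ≤ (2 : ℝ) ^ l * 2 ^ (-l) := by gcongr
      _ = 1 := by rw [zpow_neg, mul_inv_cancel₀ h2.ne']
  have h4 := (sq_le_one_iff_abs_le_one _).2 h3
  set u := (2 : ℝ) ^ l * (z - y) with hu
  set v := (2 : ℝ) ^ l * (x - y) with hv
  have h5 : (2 : ℝ) ^ l * (z - x) = u - v := by rw [hu, hv]; ring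
  rw [h5] at h4
  have h6 : 1 + v ^ 2 ≤ 3 * (1 + u ^ 2) := by nlinarith [sq_nonneg (2 * u - v)]
  calc (2 : ℝ) ^ l * (1 + v ^ 2) ≤ 2 ^ l * (3 * (1 + u ^ 2)) := by gcongr
    _ = _ := by ring

lemma PP_shift (l : ℤ) (x z : ℝ) (h : |z - x| ≤ (2 : ℝ) ^ (-l)) (f : ℝ → ℝ≥0∞) :
    PP l f z ≤ 3 * PP l f x := by
  unfold PP
  rw [← lintegral_const_mul' _ _ (by simp)]
  apply lintegral_mono
  intro y
  dsimp only
  rw [← mul_assoc]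
  exact mul_le_mul_left (pker_shift l x z y h) _

lemma pker_coarse (j n : ℤ) (h : n ≤ j) (x y : ℝ) :
    pker j x y ≤ ENNReal.ofReal ((2 : ℝ) ^ (j - n)) * pker n x y := by
  unfold pker
  rw [← ENNReal.ofReal_mul (by positivity)]
  apply ENNReal.ofReal_le_ofReal
  rw [← mul_div_assoc, ← zpow_add₀ (by norm_num), sub_add_cancel]
  apply div_le_div_of_nonneg_left (by positivity) (by positivity)
  have : (2 : ℝ) ^ n ≤ 2 ^ j := zpow_le_zpow_right₀ (by norm_num) h
  rw [mul_pow, mul_pow]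
  gcongr

lemma PP_coarse (j n : ℤ) (h : n ≤ j) (x : ℝ) (f : ℝ → ℝ≥0∞) :
    PP j f x ≤ ENNReal.ofReal ((2 : ℝ) ^ (j - n)) * PP n f x := by
  unfold PP
  rw [← lintegral_const_mul' _ _ (by simp)]
  apply lintegral_mono
  intro y
  dsimp only
  rw [← mul_assoc]
  exact mul_le_mul_left (pker_coarse j n h x y) _

lemma PP_schwartz_ne_top (l : ℤ) (g : SchwartzMap ℝ ℂ) (x : ℝ) :
    PP l (fun y => ‖g y‖ₑ) x ≠ ⊤ := by
  obtain ⟨C, hC0, hC⟩ := schwartz_decay g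
  have h1 : ∀ y, ‖g y‖ₑ ≤ ENNReal.ofReal C * 1 := by
    intro y
    rw [← ofReal_norm, mul_one]
    apply ENNReal.ofReal_le_ofReal
    refine (hC y).trans (div_le_self hC0.le ?_)
    nlinarith
  refine ne_top_of_le_ne_top ?_ (PP_mono l h1 x)
  have : PP l (fun _ => ENNReal.ofReal C * 1) x ≤ ENNReal.ofReal C * 16 := by
    calc _ = ENNReal.ofReal C * PP l (fun _ => 1) x := by
          unfold PP
          rw [← lintegral_const_mul' _ _ (by simp)]
          congr 1; ext y; ring
      _ ≤ _ := by gcongr; exact PP_one_le l x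
  exact ne_top_of_le_ne_top (ENNReal.mul_ne_top (by simp) (by simp)) this

lemma dyI_mem (n : ℤ) (x : ℝ) : (dyI n x : ℝ) / 2 ^ n ≤ x ∧ x ≤ ((dyI n x : ℝ) + 1) / 2 ^ n := by
  have h : (0 : ℝ) < 2 ^ n := by positivity
  have h1 := Int.floor_le ((2 : ℝ) ^ n * x)
  have h2 := (Int.lt_floor_add_one ((2 : ℝ) ^ n * x)).le
  rw [div_le_iff₀ h, le_div_iff₀ h]
  unfold dyI
  constructor <;> linarith

/-- Difference between dyadic average and low-frequency part. -/
def KK (g : ℤ → SchwartzMap ℝ ℂ) (j n : ℤ) (x : ℝ) : ℝ≥0∞ :=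
  ‖dyA (g j) n x - if j ≤ n then g j x else 0‖ₑ

lemma measurable_KK (g : ℤ → SchwartzMap ℝ ℂ) (j n : ℤ) : Measurable (KK g j n) := by
  unfold KK
  apply Measurable.enorm
  apply (measurable_dyA _ _).sub
  split_ifs
  · exact (g j).continuous.measurable
  · exact measurable_const

lemma KK_fine (g : SchwartzMap ℝ ℂ) (j n : ℤ) (hjn : j ≤ n) (C : ℝ≥0)
    (hC : ∀ x, ‖deriv g x‖ₑ ≤ C * ENNReal.ofReal ((2 : ℝ) ^ j) * PP j (fun y => ‖g y‖ₑ) x) (x : ℝ) :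
    ‖dyA g n x - g x‖ₑ ≤ 3 * C * ENNReal.ofReal ((2 : ℝ) ^ (j - n)) * PP j (fun y => ‖g y‖ₑ) x := by
  have h2 : (0 : ℝ) < 2 ^ n := by positivity
  obtain ⟨hx1, hx2⟩ := dyI_mem n x
  set a := (dyI n x : ℝ) / 2 ^ n with ha
  set b := ((dyI n x : ℝ) + 1) / 2 ^ n with hb
  have hab : b - a = 2 ^ (-n) := by rw [ha, hb, zpow_neg]; field_simp; ring
  have hmono : (2 : ℝ) ^ (-n) ≤ 2 ^ (-j) := zpow_le_zpow_right₀ (by norm_num) (by omega)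
  set B := (3 * C * ENNReal.ofReal ((2 : ℝ) ^ j) * PP j (fun y => ‖g y‖ₑ) x) with hB
  have hBt : B ≠ ⊤ := ENNReal.mul_ne_top (ENNReal.mul_ne_top (by finiteness) (by simp)) (PP_schwartz_ne_top j g x)
  have hder : ∀ z ∈ Set.Icc a b, ‖deriv g z‖ ≤ B.toReal := by
    intro z hz
    have h3 : |z - x| ≤ 2 ^ (-j) := by
      rw [abs_le]; constructor <;> linarith [hz.1, hz.2]
    have h4 : ‖deriv g z‖ₑ ≤ B := by
      refine (hC z).trans ?_
      calc _ ≤ C * ENNReal.ofReal ((2 : ℝ) ^ j) * (3 * PP j (fun y => ‖g y‖ₑ) x) := by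
            gcongr; exact PP_shift j x z h3 _
        _ = B := by rw [hB]; ring
    rw [← toReal_enorm]
    exact ENNReal.toReal_mono hBt h4
  have hlip : ∀ y ∈ Set.Icc a b, ‖g y - g x‖ ≤ B.toReal * 2 ^ (-n) := by
    intro y hy
    have h5 := Convex.norm_image_sub_le_of_norm_deriv_le (f := g) (C := B.toReal) (s := Set.Icc a b)
      (fun z _ => g.differentiable.differentiableAt) hder (convex_Icc a b) ⟨hx1, hx2⟩ hy
    refine h5.trans ?_
    gcongr
    rw [Real.norm_eq_abs, abs_le]; constructor <;> linarith [hy.1, hy.2]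
  have e1 : dyA g n x - g x = (2 : ℂ) ^ n * ∫ y in a..b, (g y - g x) := by
    unfold dyA
    rw [← ha, ← hb, intervalIntegral.integral_sub (g.continuous.intervalIntegrable _ _) (by simp),
      intervalIntegral.integral_const, hab, mul_sub, Complex.real_smul]
    push_cast
    rw [← mul_assoc, zpow_neg, mul_inv_cancel₀ (zpow_ne_zero _ two_ne_zero), one_mul]
  have hI : ‖∫ y in a..b, (g y - g x)‖ ≤ B.toReal * 2 ^ (-n) * |b - a| := by
    apply intervalIntegral.norm_integral_le_of_norm_le_const
    intro y hy
    rw [Set.uIoc_of_le (by linarith)] at hy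
    exact hlip y ⟨hy.1.le, hy.2⟩
  have hfin : ‖dyA g n x - g x‖ ≤ B.toReal * 2 ^ (-n) := by
    rw [e1, norm_mul, norm_zpow, Complex.norm_ofNat]
    calc (2 : ℝ) ^ n * ‖∫ y in a..b, (g y - g x)‖ ≤ 2 ^ n * (B.toReal * 2 ^ (-n) * |b - a|) := by gcongr
      _ = B.toReal * 2 ^ (-n) := by
        rw [hab, abs_of_pos (by positivity), zpow_neg]; field_simp
  rw [← ofReal_norm]
  refine (ENNReal.ofReal_le_ofReal hfin).trans (le_of_eq ?_)
  rw [ENNReal.ofReal_mul ENNReal.toReal_nonneg, ENNReal.ofReal_toReal hBt, hB, sub_eq_add_neg,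
    zpow_add₀ (by norm_num), ENNReal.ofReal_mul (by positivity)]
  ring

lemma KK_coarse (g : SchwartzMap ℝ ℂ) (j n : ℤ) (C : ℝ≥0)
    (hC : ∀ a b, ‖∫ y in a..b, g y‖ₑ ≤ C * ENNReal.ofReal ((2 : ℝ) ^ (-j)) *
      (PP j (fun y => ‖g y‖ₑ) a + PP j (fun y => ‖g y‖ₑ) b)) (x : ℝ) :
    ∃ a b : ℝ, |a - x| ≤ 2 ^ (-n) ∧ |b - x| ≤ 2 ^ (-n) ∧
    ‖dyA g n x‖ₑ ≤ C * ENNReal.ofReal ((2 : ℝ) ^ (n - j)) *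
      (PP j (fun y => ‖g y‖ₑ) a + PP j (fun y => ‖g y‖ₑ) b) := by
  have h2 : (0 : ℝ) < 2 ^ n := by positivity
  obtain ⟨hx1, hx2⟩ := dyI_mem n x
  have hab : ((dyI n x : ℝ) + 1) / 2 ^ n - (dyI n x : ℝ) / 2 ^ n = 2 ^ (-n) := by
    rw [zpow_neg]; field_simp; ring
  refine ⟨(dyI n x : ℝ) / 2 ^ n, ((dyI n x : ℝ) + 1) / 2 ^ n, ?_, ?_, ?_⟩
  · rw [abs_le]; constructor <;> linarith
  · rw [abs_le]; constructor <;> linarith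
  · unfold dyA
    rw [enorm_mul]
    have : ‖(2 : ℂ) ^ n‖ₑ = ENNReal.ofReal (2 ^ n) := by
      rw [← ofReal_norm, norm_zpow, Complex.norm_ofNat]
    rw [this]
    refine (mul_le_mul_right (hC _ _) _).trans (le_of_eq ?_)
    rw [sub_eq_add_neg, zpow_add₀ (by norm_num), ENNReal.ofReal_mul (by positivity)]
    ring

lemma ofReal_zpow_rpow (k : ℤ) (r : ℝ) (hr : 0 ≤ r) :
    ENNReal.ofReal ((2 : ℝ) ^ k) ^ r = ENNReal.ofReal ((2 : ℝ) ^ (k * r)) := by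
  rw [ENNReal.ofReal_rpow_of_nonneg (by positivity) hr, ← Real.rpow_intCast, ← Real.rpow_mul (by norm_num)]

theorem KK_bound (Nb r : ℝ) (hr : 1 < r) : ∃ B : ℝ≥0, ∀ g : ℤ → SchwartzMap ℝ ℂ, IsContLPFamily Nb g →
    ∀ j n x, KK g j n x ^ r ≤ B * ENNReal.ofReal ((2 : ℝ) ^ (-(r - 1) * |(j : ℝ) - n|)) *
      PP (min j n) (fun y => ‖g j y‖ₑ ^ r) x := by
  obtain ⟨C, hC⟩ := band_bounds Nb
  have hr0 : 0 ≤ r := by linarith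
  have hr1 : 0 ≤ r - 1 := by linarith
  set B : ℝ≥0∞ := (6 * C) ^ r * 16 ^ (r - 1) * 3 with hB
  have hBt : B ≠ ⊤ := by
    refine ENNReal.mul_ne_top (ENNReal.mul_ne_top ?_ ?_) (by simp)
    · exact ENNReal.rpow_ne_top_of_nonneg hr0 (by finiteness)
    · exact ENNReal.rpow_ne_top_of_nonneg hr1 (by finiteness)
  refine ⟨B.toNNReal, fun g hg j n x => ?_⟩
  rw [ENNReal.coe_toNNReal hBt]
  obtain ⟨hd, hI⟩ := hC (g j) j (hg j)
  have hm : Measurable (fun y => ‖g j y‖ₑ) := (g j).continuous.measurable.enorm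
  unfold KK
  rcases le_or_gt j n with hjn | hjn
  · rw [if_pos hjn, min_eq_left hjn]
    have h1 := KK_fine (g j) j n hjn C hd x
    refine (ENNReal.rpow_le_rpow h1 hr0).trans ?_
    rw [ENNReal.mul_rpow_of_nonneg _ _ hr0, ENNReal.mul_rpow_of_nonneg _ _ hr0, ofReal_zpow_rpow _ _ hr0]
    have h2 : (2 : ℝ) ^ (((j - n : ℤ) : ℝ) * r) ≤ 2 ^ (-(r - 1) * |(j : ℝ) - n|) := by
      apply Real.rpow_le_rpow_of_exponent_le (by norm_num)
      have : (j : ℝ) ≤ n := by exact_mod_cast hjn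
      rw [abs_of_nonpos (by linarith)]
      push_cast
      nlinarith
    calc _ ≤ (3 * C : ℝ≥0∞) ^ r * ENNReal.ofReal ((2 : ℝ) ^ (-(r - 1) * |(j : ℝ) - n|)) *
          (16 ^ (r - 1) * PP j (fun y => ‖g j y‖ₑ ^ r) x) := by
          gcongr
          exact PP_jensen j hm x r hr.le
      _ = ((3 * C : ℝ≥0∞) ^ r * 16 ^ (r - 1) * 1) * ENNReal.ofReal ((2 : ℝ) ^ (-(r - 1) * |(j : ℝ) - n|)) *
          (PP j (fun y => ‖g j y‖ₑ ^ r) x) := by ring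
      _ ≤ _ := by
          rw [hB]
          gcongr
          · norm_num
          · norm_num
  · rw [if_neg (not_le.2 hjn), sub_zero, min_eq_right hjn.le]
    obtain ⟨a, b, ha, hb, h1⟩ := KK_coarse (g j) j n C hI x
    have hP : ∀ z, |z - x| ≤ 2 ^ (-n) → PP j (fun y => ‖g j y‖ₑ) z ≤
        (16 ^ (r - 1) * (ENNReal.ofReal ((2 : ℝ) ^ (j - n)) * (3 * PP n (fun y => ‖g j y‖ₑ ^ r) x))) ^ (1 / r) := by
      intro z hz
      rw [one_div, ENNReal.le_rpow_inv_iff (by linarith)]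
      refine (PP_jensen j hm z r hr.le).trans ?_
      gcongr
      refine (PP_coarse j n hjn.le z _).trans ?_
      gcongr
      exact PP_shift n x z hz _
    set Q := (16 ^ (r - 1) * (ENNReal.ofReal ((2 : ℝ) ^ (j - n)) * (3 * PP n (fun y => ‖g j y‖ₑ ^ r) x))) with hQ
    have h3 : ‖dyA (g j) n x‖ₑ ≤ (2 * C) * ENNReal.ofReal ((2 : ℝ) ^ (n - j)) * Q ^ (1 / r) := by
      refine h1.trans ?_
      calc _ ≤ C * ENNReal.ofReal ((2 : ℝ) ^ (n - j)) * (Q ^ (1 / r) + Q ^ (1 / r)) := by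
            gcongr
            · exact hP a ha
            · exact hP b hb
        _ = _ := by ring
    refine (ENNReal.rpow_le_rpow h3 hr0).trans ?_
    rw [ENNReal.mul_rpow_of_nonneg _ _ hr0, ENNReal.mul_rpow_of_nonneg _ _ hr0, ofReal_zpow_rpow _ _ hr0,
      ← ENNReal.rpow_mul, one_div_mul_cancel (by linarith), ENNReal.rpow_one, hQ]
    have e : ENNReal.ofReal ((2 : ℝ) ^ (((n - j : ℤ) : ℝ) * r)) * ENNReal.ofReal ((2 : ℝ) ^ (j - n)) =
        ENNReal.ofReal ((2 : ℝ) ^ (-(r - 1) * |(j : ℝ) - n|)) := by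
      rw [← ENNReal.ofReal_mul (by positivity), ← Real.rpow_intCast, ← Real.rpow_add (by norm_num)]
      congr 2
      have : (n : ℝ) < j := by exact_mod_cast hjn
      rw [abs_of_pos (by linarith)]
      push_cast
      ring
    calc _ = ((2 * C : ℝ≥0∞) ^ r * 16 ^ (r - 1) * 3) * (ENNReal.ofReal ((2 : ℝ) ^ (((n - j : ℤ) : ℝ) * r)) *
          ENNReal.ofReal ((2 : ℝ) ^ (j - n))) * PP n (fun y => ‖g j y‖ₑ ^ r) x := by ring
      _ ≤ _ := by
          rw [e, hB]
          gcongr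
          norm_num

/-! ### Weighted comparison -/

/-- Sum of squared kernels. -/
def XX (g : ℤ → SchwartzMap ℝ ℂ) (Ns J : Finset ℤ) (x : ℝ) : ℝ≥0∞ :=
  ∑ n ∈ Ns, (∑ j ∈ J, KK g j n x) ^ (2 : ℝ)

/-- Truncated square sum. -/
def YY (g : ℤ → SchwartzMap ℝ ℂ) (J : Finset ℤ) (x : ℝ) : ℝ≥0∞ :=
  ∑ j ∈ J, ‖g j x‖ₑ ^ (2 : ℝ)

lemma measurable_XX (g : ℤ → SchwartzMap ℝ ℂ) (Ns J : Finset ℤ) : Measurable (XX g Ns J) := by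
  unfold XX
  exact Finset.measurable_sum _ fun n _ =>
    (Finset.measurable_sum _ fun j _ => measurable_KK g j n).pow_const _

lemma measurable_gj (g : ℤ → SchwartzMap ℝ ℂ) (j : ℤ) : Measurable (fun x => ‖g j x‖ₑ) :=
  (g j).continuous.measurable.enorm

lemma measurable_YY (g : ℤ → SchwartzMap ℝ ℂ) (J : Finset ℤ) : Measurable (YY g J) := by
  unfold YY
  exact Finset.measurable_sum _ fun j _ => (measurable_gj g j).pow_const _

/-- Off-diagonal decay weights. -/
def cc (r : ℝ) (n : ℤ) : ℝ≥0∞ := ENNReal.ofReal ((2 : ℝ) ^ (-((r - 1) / r) * |(n : ℝ)|))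

lemma cc_tsum (r : ℝ) (hr : 1 < r) : ∑' n : ℤ, cc r n ≠ ⊤ := by
  have h : Summable (fun n : ℤ => (2 : ℝ) ^ (-((r - 1) / r) * |(n : ℝ)|)) := by
    have hpos : 0 < (r - 1) / r := div_pos (by linarith) (by linarith)
    have hg : Summable (fun n : ℕ => ((2 : ℝ) ^ (-((r - 1) / r))) ^ n) := by
      apply summable_geometric_of_lt_one (by positivity)
      exact Real.rpow_lt_one_of_one_lt_of_neg (by norm_num) (by linarith)
    apply Summable.of_nat_of_neg
    · refine hg.congr fun n => ?_
      rw [← Real.rpow_natCast, ← Real.rpow_mul (by norm_num)]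
      simp
    · refine hg.congr fun n => ?_
      rw [← Real.rpow_natCast, ← Real.rpow_mul (by norm_num)]
      simp
  unfold cc
  rw [← ENNReal.ofReal_tsum_of_nonneg (fun n => by positivity) h]
  exact ENNReal.ofReal_ne_top

lemma cc_sum_left (r : ℝ) (J : Finset ℤ) (n : ℤ) : ∑ j ∈ J, cc r (j - n) ≤ ∑' n : ℤ, cc r n := by
  refine (ENNReal.sum_le_tsum J).trans (le_of_eq ?_)
  exact (Equiv.subRight n).tsum_eq (cc r)

lemma cc_sum_right (r : ℝ) (J : Finset ℤ) (j : ℤ) : ∑ n ∈ J, cc r (j - n) ≤ ∑' n : ℤ, cc r n := by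
  refine (ENNReal.sum_le_tsum J).trans (le_of_eq ?_)
  exact (Equiv.subLeft j).tsum_eq (cc r)

lemma KK_bound' (Nb r : ℝ) (hr : 1 < r) : ∃ b : ℝ≥0, ∀ g : ℤ → SchwartzMap ℝ ℂ, IsContLPFamily Nb g →
    ∀ j n x, KK g j n x ≤ b * (cc r (j - n) *
      PP (min j n) (fun y => ‖g j y‖ₑ ^ r) x ^ (r⁻¹)) := by
  obtain ⟨B, hB⟩ := KK_bound Nb r hr
  have hr0 : 0 < r := by linarith
  refine ⟨B ^ (r⁻¹), fun g hg j n x => ?_⟩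
  have h1 := ENNReal.rpow_le_rpow (hB g hg j n x) (inv_nonneg.2 hr0.le)
  rw [← ENNReal.rpow_mul, mul_inv_cancel₀ hr0.ne', ENNReal.rpow_one] at h1
  refine h1.trans (le_of_eq ?_)
  rw [ENNReal.mul_rpow_of_nonneg _ _ (inv_nonneg.2 hr0.le), ENNReal.mul_rpow_of_nonneg _ _ (inv_nonneg.2 hr0.le),
    ENNReal.ofReal_rpow_of_nonneg (by positivity) (inv_nonneg.2 hr0.le), ← Real.rpow_mul (by norm_num),
    ENNReal.coe_rpow_of_nonneg _ (inv_nonneg.2 hr0.le), mul_assoc]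
  unfold cc
  congr 4
  push_cast
  field_simp

lemma weighted_XY (Nb r : ℝ) (hr : 1 < r) : ∃ C : ℝ≥0, ∀ g : ℤ → SchwartzMap ℝ ℂ, IsContLPFamily Nb g →
    ∀ (Ns J : Finset ℤ) (V V' : ℝ → ℝ≥0∞), Measurable V → Measurable V' → ∀ D : ℝ≥0∞,
    (∀ l, ∀ j ∈ J, ∫⁻ x, PP l (fun y => ‖g j y‖ₑ ^ r) x ^ (2 / r) * V x ≤
      D * ∫⁻ x, ‖g j x‖ₑ ^ (2 : ℝ) * V' x) →
    ∫⁻ x, XX g Ns J x * V x ≤ C * D * ∫⁻ x, YY g J x * V' x := by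
  obtain ⟨b, hb⟩ := KK_bound' Nb r hr
  have hr0 : 0 < r := by linarith
  set κ := ∑' n : ℤ, cc r n with hκ
  have hκt : κ ≠ ⊤ := cc_tsum r hr
  have hbt : (b : ℝ≥0∞) ^ (2 : ℝ) ≠ ⊤ := ENNReal.rpow_ne_top_of_nonneg (by norm_num) (by simp)
  have hCt : (b : ℝ≥0∞) ^ (2 : ℝ) * κ * κ ≠ ⊤ := ENNReal.mul_ne_top (ENNReal.mul_ne_top hbt hκt) hκt
  refine ⟨((b : ℝ≥0∞) ^ (2 : ℝ) * κ * κ).toNNReal, fun g hg Ns J V V' hV hV' D hD => ?_⟩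
  rw [ENNReal.coe_toNNReal hCt]
  set P : ℤ → ℤ → ℝ → ℝ≥0∞ := fun j n x => PP (min j n) (fun y => ‖g j y‖ₑ ^ r) x ^ (2 / r) with hP
  have hPm : ∀ j n, Measurable (P j n) := fun j n =>
    (measurable_PP _ ((measurable_gj g j).pow_const r)).pow_const _
  have hpt : ∀ x, XX g Ns J x * V x ≤
      ∑ n ∈ Ns, ∑ j ∈ J, ((b : ℝ≥0∞) ^ (2 : ℝ) * κ) * (cc r (j - n) * (P j n x * V x)) := by
    intro x
    unfold XX
    rw [Finset.sum_mul]
    refine Finset.sum_le_sum fun n _ => ?_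
    have h1 : ∑ j ∈ J, KK g j n x ≤ b * ∑ j ∈ J, cc r (j - n) * PP (min j n) (fun y => ‖g j y‖ₑ ^ r) x ^ (r⁻¹) := by
      rw [Finset.mul_sum]
      exact Finset.sum_le_sum fun j _ => hb g hg j n x
    have h2 := ENNReal.inner_le_weight_mul_Lp_of_nonneg J (p := 2) (by norm_num) (fun j => cc r (j - n))
      (fun j => PP (min j n) (fun y => ‖g j y‖ₑ ^ r) x ^ (r⁻¹))
    have h3 := ENNReal.rpow_le_rpow (h1.trans (mul_le_mul_right h2 _)) (show (0 : ℝ) ≤ 2 by norm_num)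
    rw [ENNReal.mul_rpow_of_nonneg _ _ (by norm_num), ENNReal.mul_rpow_of_nonneg _ _ (by norm_num),
      ← ENNReal.rpow_mul, ← ENNReal.rpow_mul] at h3
    norm_num at h3
    have h4 : (∑ j ∈ J, KK g j n x) ^ (2 : ℝ) ≤ (b : ℝ≥0∞) ^ (2 : ℝ) * (κ * ∑ j ∈ J, cc r (j - n) * P j n x) := by
      norm_num
      refine h3.trans ?_
      gcongr
      · exact cc_sum_left r J n
      · rw [hP]
        dsimp only
        rw [← ENNReal.rpow_natCast, ← ENNReal.rpow_mul]
        apply le_of_eq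
        congr 1
        push_cast
        ring
    refine (mul_le_mul_left h4 _).trans (le_of_eq ?_)
    rw [← Finset.mul_sum, ← mul_assoc, mul_assoc, Finset.sum_mul]
    simp only [mul_assoc]
  calc ∫⁻ x, XX g Ns J x * V x ≤ ∫⁻ x, ∑ n ∈ Ns, ∑ j ∈ J, ((b : ℝ≥0∞) ^ (2 : ℝ) * κ) * (cc r (j - n) * (P j n x * V x)) :=
        lintegral_mono hpt
    _ = ∑ n ∈ Ns, ∑ j ∈ J, ((b : ℝ≥0∞) ^ (2 : ℝ) * κ) * (cc r (j - n) * ∫⁻ x, (P j n x * V x)) := by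
        have hm1 : ∀ j n, Measurable (fun x => P j n x * V x) := fun j n => (hPm j n).mul hV
        have hm2 : ∀ j n, Measurable (fun x => cc r (j - n) * (P j n x * V x)) := fun j n => (hm1 j n).const_mul _
        rw [lintegral_finsetSum _ (fun n _ => Finset.measurable_sum _ fun j _ => (hm2 j n).const_mul _)]
        refine Finset.sum_congr rfl fun n _ => ?_
        rw [lintegral_finsetSum _ (fun j _ => (hm2 j n).const_mul _)]
        refine Finset.sum_congr rfl fun j _ => ?_
        rw [lintegral_const_mul _ (hm2 j n), lintegral_const_mul _ (hm1 j n)]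
    _ ≤ ∑ n ∈ Ns, ∑ j ∈ J, ((b : ℝ≥0∞) ^ (2 : ℝ) * κ) * (cc r (j - n) * (D * ∫⁻ x, ‖g j x‖ₑ ^ (2 : ℝ) * V' x)) := by
        refine Finset.sum_le_sum fun n _ => Finset.sum_le_sum fun j hj => ?_
        gcongr
        exact hD _ j hj
    _ = ∑ j ∈ J, (((b : ℝ≥0∞) ^ (2 : ℝ) * κ) * (D * ∫⁻ x, ‖g j x‖ₑ ^ (2 : ℝ) * V' x)) * ∑ n ∈ Ns, cc r (j - n) := by
        rw [Finset.sum_comm]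
        refine Finset.sum_congr rfl fun j _ => ?_
        rw [Finset.mul_sum]
        refine Finset.sum_congr rfl fun n _ => ?_
        ring
    _ ≤ ∑ j ∈ J, (((b : ℝ≥0∞) ^ (2 : ℝ) * κ) * (D * ∫⁻ x, ‖g j x‖ₑ ^ (2 : ℝ) * V' x)) * κ := by
        refine Finset.sum_le_sum fun j _ => ?_
        gcongr
        exact cc_sum_right r Ns j
    _ = (b : ℝ≥0∞) ^ (2 : ℝ) * κ * κ * D * ∫⁻ x, YY g J x * V' x := by
        unfold YY
        simp_rw [Finset.sum_mul]
        have hm1 : ∀ j, Measurable (fun x => ‖g j x‖ₑ ^ (2 : ℝ) * V' x) := fun j =>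
          ((measurable_gj g j).pow_const _).mul hV'
        rw [lintegral_finsetSum _ (fun j _ => hm1 j), Finset.mul_sum]
        refine Finset.sum_congr rfl fun j _ => ?_
        ring

lemma weighted_big (Nb : ℝ) : ∃ C : ℝ≥0, ∀ g : ℤ → SchwartzMap ℝ ℂ, IsContLPFamily Nb g →
    ∀ (Ns J : Finset ℤ) (W : ℝ → ℝ≥0∞), Measurable W → ∀ D : ℝ≥0∞, (∀ l x, PP l W x ≤ D * W x) →
    ∫⁻ x, XX g Ns J x * W x ≤ C * D * ∫⁻ x, YY g J x * W x := by
  obtain ⟨C, hC⟩ := weighted_XY Nb (4 / 3) (by norm_num)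
  refine ⟨C * 16, fun g hg Ns J W hW D hD => ?_⟩
  have := hC g hg Ns J W W hW hW (16 * D) ?_
  · refine this.trans (le_of_eq ?_)
    push_cast
    ring
  · intro l j _
    have hm := (measurable_gj g j)
    calc _ ≤ ∫⁻ x, 16 * (PP l (fun y => ‖g j y‖ₑ ^ (2 : ℝ)) x * W x) := by
          apply lintegral_mono
          intro x
          dsimp only
          rw [← mul_assoc]
          refine mul_le_mul_left ?_ _
          refine (PP_jensen l (hm.pow_const _) x _ (by norm_num)).trans ?_
          simp_rw [← ENNReal.rpow_mul]
          norm_num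
          refine mul_le_mul_left ?_ _
          calc (16 : ℝ≥0∞) ^ (1 / 2 : ℝ) ≤ 16 ^ (1 : ℝ) :=
                ENNReal.rpow_le_rpow_of_exponent_le (by norm_num) (by norm_num)
            _ = 16 := by simp
      _ = 16 * ∫⁻ x, (‖g j x‖ₑ ^ (2 : ℝ)) * PP l W x := by
          have hm1 : Measurable (fun x => PP l (fun y => ‖g j y‖ₑ ^ (2 : ℝ)) x * W x) :=
            (measurable_PP l (hm.pow_const _)).mul hW
          rw [lintegral_const_mul _ hm1, PP_integral_mul l (hm.pow_const _) hW]
      _ ≤ 16 * ∫⁻ x, D * ((‖g j x‖ₑ ^ (2 : ℝ)) * W x) := by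
          refine mul_le_mul_right (lintegral_mono fun x => ?_) _
          dsimp only
          rw [mul_left_comm]
          exact mul_le_mul_right (hD l x) _
      _ = _ := by
          have hm1 : Measurable (fun x => ‖g j x‖ₑ ^ (2 : ℝ) * W x) := (hm.pow_const _).mul hW
          rw [lintegral_const_mul _ hm1, mul_assoc]

lemma apriori_XX (Nb q : ℝ) (hq : 2 ≤ q) (g : ℤ → SchwartzMap ℝ ℂ) (hg : IsContLPFamily Nb g)
    (Ns J : Finset ℤ) (hY : ∫⁻ x, YY g J x ^ (q / 2) ≠ ⊤) : ∫⁻ x, XX g Ns J x ^ (q / 2) ≠ ⊤ := by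
  obtain ⟨B, hB⟩ := KK_bound Nb q (by linarith)
  have hK : ∀ j ∈ J, ∀ n, ∫⁻ x, KK g j n x ^ q ≠ ⊤ := by
    intro j hj n
    have hm := (measurable_gj g j).pow_const q
    have h1 : ∫⁻ x, KK g j n x ^ q ≤
        B * ENNReal.ofReal ((2 : ℝ) ^ (-(q - 1) * |(j : ℝ) - n|)) * (16 * ∫⁻ x, YY g J x ^ (q / 2)) := by
      calc _ ≤ ∫⁻ x, B * ENNReal.ofReal ((2 : ℝ) ^ (-(q - 1) * |(j : ℝ) - n|)) *
            PP (min j n) (fun y => ‖g j y‖ₑ ^ q) x := lintegral_mono fun x => hB g hg j n x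
        _ = B * ENNReal.ofReal ((2 : ℝ) ^ (-(q - 1) * |(j : ℝ) - n|)) *
            ∫⁻ x, PP (min j n) (fun y => ‖g j y‖ₑ ^ q) x := lintegral_const_mul _ (measurable_PP _ hm)
        _ ≤ _ := by
          refine mul_le_mul_right ((PP_integral_le _ hm).trans ?_) _
          refine mul_le_mul_right (lintegral_mono fun x => ?_) _
          have : ‖g j x‖ₑ ^ (2 : ℝ) ≤ YY g J x :=
            Finset.single_le_sum (f := fun j => ‖g j x‖ₑ ^ (2 : ℝ)) (fun _ _ => zero_le) hj
          calc ‖g j x‖ₑ ^ q = (‖g j x‖ₑ ^ (2 : ℝ)) ^ (q / 2) := by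
                rw [← ENNReal.rpow_mul]; congr 1; ring
            _ ≤ _ := ENNReal.rpow_le_rpow this (by linarith)
    exact ne_top_of_le_ne_top (ENNReal.mul_ne_top (by finiteness) (ENNReal.mul_ne_top (by simp) hY)) h1
  have hpt : ∀ x, XX g Ns J x ^ (q / 2) ≤ ((Ns.card : ℝ≥0∞) ^ (q / 2 - 1) * (J.card : ℝ≥0∞) ^ (q - 1)) *
      ∑ n ∈ Ns, ∑ j ∈ J, KK g j n x ^ q := by
    intro x
    refine (ENNReal.rpow_sum_le_const_mul_sum_rpow _ _ (by linarith)).trans ?_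
    rw [mul_assoc, Finset.mul_sum (a := (J.card : ℝ≥0∞) ^ (q - 1))]
    refine mul_le_mul_right (Finset.sum_le_sum fun n _ => ?_) _
    rw [← ENNReal.rpow_mul, mul_div_cancel₀ _ (two_ne_zero)]
    exact ENNReal.rpow_sum_le_const_mul_sum_rpow _ _ (by linarith)
  refine ne_top_of_le_ne_top ?_ (lintegral_mono hpt)
  rw [lintegral_const_mul _ (Finset.measurable_sum _ fun n _ => Finset.measurable_sum _ fun j _ =>
    (measurable_KK g j n).pow_const _),
    lintegral_finsetSum _ (fun n _ => Finset.measurable_sum _ fun j _ => (measurable_KK g j n).pow_const _)]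
  refine ENNReal.mul_ne_top ?_ (ENNReal.sum_ne_top.2 fun n _ => ?_)
  · exact ENNReal.mul_ne_top (ENNReal.rpow_ne_top_of_nonneg (by linarith) (by simp))
      (ENNReal.rpow_ne_top_of_nonneg (by linarith) (by simp))
  · rw [lintegral_finsetSum _ (fun j _ => (measurable_KK g j n).pow_const _)]
    exact ENNReal.sum_ne_top.2 fun j hj => hK j hj n

lemma comparison_big (Nb q : ℝ) (hq : 2 < q) : ∃ C : ℝ≥0, ∀ g : ℤ → SchwartzMap ℝ ℂ, IsContLPFamily Nb g →
    ∀ (Ns J : Finset ℤ), ∫⁻ x, YY g J x ^ (q / 2) ≠ ⊤ →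
    ∫⁻ x, XX g Ns J x ^ (q / 2) ≤ C * ∫⁻ x, YY g J x ^ (q / 2) := by
  obtain ⟨C1, hC1⟩ := weighted_big Nb
  have hq2 : 0 < q - 2 := by linarith
  have hs : 1 < q / (q - 2) := by rw [lt_div_iff₀ hq2]; linarith
  obtain ⟨C2, hC2⟩ := rubio (q / (q - 2)) hs
  refine ⟨(C1 * C2 * C2 ^ ((q - 2) / q)) ^ (q / 2), fun g hg Ns J hY => ?_⟩
  have hX := apriori_XX Nb q hq.le g hg Ns J hY
  have hmX := measurable_XX g Ns J
  have hmY := measurable_YY g J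
  obtain ⟨W, hW, hwW, hPP, hintg⟩ := hC2 (fun x => XX g Ns J x ^ ((q - 2) / 2)) (hmX.pow_const _)
  set A := ∫⁻ x, XX g Ns J x ^ (q / 2) with hA
  set B := ∫⁻ x, YY g J x ^ (q / 2) with hB
  have hintg' : ∫⁻ x, W x ^ (q / (q - 2)) ≤ C2 * A := by
    refine hintg.trans (le_of_eq ?_)
    rw [hA]
    simp_rw [← ENNReal.rpow_mul]
    congr 4
    ext x
    congr 1
    field_simp
  have h1 : A ≤ C1 * C2 * (B ^ (2 / q) * (C2 * A) ^ ((q - 2) / q)) := by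
    calc A ≤ ∫⁻ x, XX g Ns J x * W x := by
          apply lintegral_mono
          intro x
          dsimp only
          calc XX g Ns J x ^ (q / 2) = XX g Ns J x * XX g Ns J x ^ ((q - 2) / 2) := by
                nth_rewrite 2 [← ENNReal.rpow_one (XX g Ns J x)]
                rw [← ENNReal.rpow_add_of_nonneg _ _ (by norm_num) (by linarith)]
                congr 1; ring
            _ ≤ _ := mul_le_mul_right (hwW x) _
      _ ≤ C1 * C2 * ∫⁻ x, YY g J x * W x := hC1 g hg Ns J W hW C2 hPP
      _ ≤ _ := by
          refine mul_le_mul_right ?_ _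
          have hconj : (q / 2).HolderConjugate (q / (q - 2)) := by
            rw [Real.holderConjugate_iff]
            constructor
            · linarith
            · field_simp; ring
          refine (ENNReal.lintegral_mul_le_Lp_mul_Lq volume hconj hmY.aemeasurable hW.aemeasurable).trans ?_
          rw [one_div_div, one_div_div]
          refine mul_le_mul_right ?_ _
          exact ENNReal.rpow_le_rpow hintg' (by positivity)
  rcases eq_or_ne A 0 with hA0 | hA0
  · rw [hA0]; exact zero_le
  have hlt : (q - 2) / q < 1 := by rw [div_lt_one (by linarith)]; linarith
  have h2 : A ^ (2 / q) ≤ (C1 * C2 * C2 ^ ((q - 2) / q) : ℝ≥0) * B ^ (2 / q) := by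
    have e : A = A ^ (2 / q) * A ^ ((q - 2) / q) := by
      rw [← ENNReal.rpow_add _ _ hA0 hX, ← add_div, add_sub_cancel, div_self (by linarith), ENNReal.rpow_one]
    have hne : A ^ ((q - 2) / q) ≠ 0 := by
      simp [ENNReal.rpow_eq_zero_iff, hA0, hX]
    have hnt : A ^ ((q - 2) / q) ≠ ⊤ := ENNReal.rpow_ne_top_of_nonneg (by positivity) hX
    rw [← ENNReal.mul_le_mul_iff_left hne hnt, ← e]
    refine h1.trans (le_of_eq ?_)
    rw [ENNReal.mul_rpow_of_nonneg _ _ (by positivity)]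
    push_cast
    rw [ENNReal.coe_rpow_of_nonneg _ (by positivity)]
    ring
  have h3 := ENNReal.rpow_le_rpow h2 (show 0 ≤ q / 2 by linarith)
  rw [ENNReal.mul_rpow_of_nonneg _ _ (by linarith), ← ENNReal.rpow_mul, ← ENNReal.rpow_mul,
    show 2 / q * (q / 2) = 1 by field_simp, ENNReal.rpow_one, ENNReal.rpow_one] at h3
  rwa [ENNReal.coe_rpow_of_nonneg _ (by linarith)]

lemma comparison_two (Nb : ℝ) : ∃ C : ℝ≥0, ∀ g : ℤ → SchwartzMap ℝ ℂ, IsContLPFamily Nb g →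
    ∀ (Ns J : Finset ℤ),
    ∫⁻ x, XX g Ns J x ^ ((2 : ℝ) / 2) ≤ C * ∫⁻ x, YY g J x ^ ((2 : ℝ) / 2) := by
  obtain ⟨C1, hC1⟩ := weighted_big Nb
  refine ⟨C1 * 16, fun g hg Ns J => ?_⟩
  have := hC1 g hg Ns J (fun _ => 1) measurable_const 16 (fun l x => by simpa using PP_one_le l x)
  simpa using this

lemma PP_holder_small (q : ℝ) (hq1 : 1 < q) (hq2 : q < 2) (l : ℤ) (h W : ℝ → ℝ≥0∞) (hh : Measurable h)
    (hW : Measurable W) (hW0 : ∀ x, W x = 0 → h x = 0) (hWt : ∀ᵐ x, W x ≠ ⊤) (x : ℝ) :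
    PP l (fun y => h y ^ (2 * q / (q + 1))) x ^ (2 / (2 * q / (q + 1))) ≤
      PP l (fun y => h y ^ (2 : ℝ) * W y ^ (-(1 / q))) x * PP l W x ^ (1 / q) := by
  set r := 2 * q / (q + 1) with hr
  have hq0 : 0 < q := by linarith
  have hr0 : 0 < r := by positivity
  have hr1 : 1 < 2 / r := by
    rw [hr, lt_div_iff₀ (by positivity), one_mul, div_lt_iff₀ (by positivity)]; linarith
  set μ := volume.withDensity (pker l x) with hμ
  have hac : ∀ᵐ y ∂μ, W y ≠ ⊤ := (withDensity_absolutelyContinuous _ _).ae_le hWt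
  have hconj : (2 / r).HolderConjugate (q + 1) := by
    rw [Real.holderConjugate_iff]
    refine ⟨hr1, ?_⟩
    rw [hr]; field_simp
  have m1 : Measurable (fun y => h y ^ r * W y ^ (-(r / (2 * q)))) := (hh.pow_const _).mul (hW.pow_const _)
  have m2 : Measurable (fun y => W y ^ (r / (2 * q))) := hW.pow_const _
  have h1 : PP l (fun y => h y ^ r) x ≤
      PP l (fun y => h y ^ (2 : ℝ) * W y ^ (-(1 / q))) x ^ (r / 2) * PP l W x ^ (1 / (q + 1)) := by
    have m3 : Measurable (fun y => h y ^ (2 : ℝ) * W y ^ (-(1 / q))) := (hh.pow_const _).mul (hW.pow_const _)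
    rw [PP_eq_withDensity l _ (hh.pow_const _), PP_eq_withDensity l W hW,
      PP_eq_withDensity l _ m3, ← hμ]
    calc ∫⁻ y, h y ^ r ∂μ ≤ ∫⁻ y, ((fun y => h y ^ r * W y ^ (-(r / (2 * q)))) * (fun y => W y ^ (r / (2 * q)))) y ∂μ := by
          apply lintegral_mono_ae
          filter_upwards [hac] with y hy
          simp only [Pi.mul_apply]
          rcases eq_or_ne (W y) 0 with h0 | h0
          · rw [hW0 y h0, ENNReal.zero_rpow_of_pos hr0]; exact zero_le
          · rw [mul_assoc, ← ENNReal.rpow_add _ _ h0 hy]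
            simp
      _ ≤ _ := ENNReal.lintegral_mul_le_Lp_mul_Lq μ hconj m1.aemeasurable m2.aemeasurable
      _ = _ := by
          rw [one_div_div]
          congr 2
          · congr 1
            ext y
            rw [ENNReal.mul_rpow_of_nonneg _ _ (by positivity), ← ENNReal.rpow_mul, ← ENNReal.rpow_mul]
            congr 2
            · field_simp
            · field_simp
          · congr 1
            ext y
            rw [← ENNReal.rpow_mul, hr]
            rw [show 2 * q / (q + 1) / (2 * q) * (q + 1) = 1 by field_simp, ENNReal.rpow_one]
  refine (ENNReal.rpow_le_rpow h1 (by positivity)).trans (le_of_eq ?_)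
  rw [ENNReal.mul_rpow_of_nonneg _ _ (by positivity), ← ENNReal.rpow_mul, ← ENNReal.rpow_mul,
    show r / 2 * (2 / r) = 1 by field_simp, ENNReal.rpow_one]
  congr 2
  rw [hr]; field_simp

lemma comparison_small (Nb q : ℝ) (hq1 : 1 < q) (hq2 : q < 2) :
    ∃ C : ℝ≥0, ∀ g : ℤ → SchwartzMap ℝ ℂ, IsContLPFamily Nb g →
    ∀ (Ns J : Finset ℤ), ∫⁻ x, YY g J x ^ (q / 2) ≠ ⊤ →
    ∫⁻ x, XX g Ns J x ^ (q / 2) ≤ C * ∫⁻ x, YY g J x ^ (q / 2) := by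
  have hq0 : 0 < q := by linarith
  set r := 2 * q / (q + 1) with hr
  have hr1 : 1 < r := by rw [hr, lt_div_iff₀ (by linarith)]; linarith
  have hr0 : 0 < r := by linarith
  obtain ⟨C1, hC1⟩ := weighted_XY Nb r hr1
  obtain ⟨b, hb⟩ := KK_bound' Nb r hr1
  have hs : 1 < 1 / (2 - q) := by rw [lt_div_iff₀ (by linarith)]; linarith
  obtain ⟨C2, hC2⟩ := rubio (1 / (2 - q)) hs
  set D : ℝ≥0∞ := C2 ^ (1 / q) * 16 with hD
  have hDt : D ≠ ⊤ := ENNReal.mul_ne_top (ENNReal.rpow_ne_top_of_nonneg (by positivity) (by simp)) (by simp)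
  set C : ℝ≥0∞ := (C1 * D) ^ (q / 2) * C2 ^ (1 - q / 2) with hC
  have hCt : C ≠ ⊤ := ENNReal.mul_ne_top
    (ENNReal.rpow_ne_top_of_nonneg (by positivity) (ENNReal.mul_ne_top (by simp) hDt))
    (ENNReal.rpow_ne_top_of_nonneg (by linarith) (by simp))
  refine ⟨C.toNNReal, fun g hg Ns J hY => ?_⟩
  rw [ENNReal.coe_toNNReal hCt]
  have hmX := measurable_XX g Ns J
  have hmY := measurable_YY g J
  obtain ⟨W, hW, hwW, hPP, hintg⟩ := hC2 (fun x => YY g J x ^ (q * (2 - q) / 2)) (hmY.pow_const _)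
  set B := ∫⁻ x, YY g J x ^ (q / 2) with hB
  have hintg' : ∫⁻ x, W x ^ (1 / (2 - q)) ≤ C2 * B := by
    refine hintg.trans (le_of_eq ?_)
    rw [hB]
    simp_rw [← ENNReal.rpow_mul]
    congr 4
    ext x
    congr 1
    have : 2 - q ≠ 0 := by linarith
    field_simp
  have hWt : ∀ᵐ x, W x ≠ ⊤ := by
    have h1 : ∫⁻ x, W x ^ (1 / (2 - q)) ≠ ⊤ :=
      ne_top_of_le_ne_top (ENNReal.mul_ne_top (by simp) hY) hintg'
    filter_upwards [ae_lt_top (hW.pow_const _) h1] with x hx hx2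
    rw [hx2, ENNReal.top_rpow_of_pos (by linarith)] at hx
    exact lt_irrefl _ hx
  have hW0 : ∀ j ∈ J, ∀ x, W x = 0 → ‖g j x‖ₑ = 0 := by
    intro j hj x hx
    have h1 : YY g J x ^ (q * (2 - q) / 2) = 0 := by
      have := hwW x
      rw [hx] at this
      exact le_antisymm this zero_le
    have hpos : 0 < q * (2 - q) / 2 := by
      have : 0 < 2 - q := by linarith
      positivity
    rw [ENNReal.rpow_eq_zero_iff_of_pos hpos] at h1
    have h2 : ‖g j x‖ₑ ^ (2 : ℝ) ≤ YY g J x :=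
      Finset.single_le_sum (f := fun j => ‖g j x‖ₑ ^ (2 : ℝ)) (fun _ _ => zero_le) hj
    rw [h1] at h2
    exact (ENNReal.rpow_eq_zero_iff_of_pos (by norm_num)).1 (le_antisymm h2 zero_le)
  have hH : ∀ l, ∀ j ∈ J, ∀ x, PP l (fun y => ‖g j y‖ₑ ^ r) x ^ (2 / r) ≤
      PP l (fun y => ‖g j y‖ₑ ^ (2 : ℝ) * W y ^ (-(1 / q))) x * (C2 * W x) ^ (1 / q) := by
    intro l j hj x
    refine (PP_holder_small q hq1 hq2 l _ W (measurable_gj g j) hW (hW0 j hj) hWt x).trans ?_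
    exact mul_le_mul_right (ENNReal.rpow_le_rpow (hPP l x) (by positivity)) _
  have hX0 : ∀ x, W x = 0 → XX g Ns J x = 0 := by
    intro x hx
    unfold XX
    refine Finset.sum_eq_zero fun n _ => ?_
    rw [ENNReal.rpow_eq_zero_iff_of_pos (by norm_num)]
    refine Finset.sum_eq_zero fun j hj => ?_
    have h1 := hH (min j n) j hj x
    rw [hx, mul_zero, ENNReal.zero_rpow_of_pos (by positivity), mul_zero] at h1
    have h2 := (ENNReal.rpow_eq_zero_iff_of_pos (by positivity)).1 (le_antisymm h1 zero_le)
    have h3 := hb g hg j n x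
    rw [h2, ENNReal.zero_rpow_of_pos (by positivity), mul_zero, mul_zero] at h3
    exact le_antisymm h3 zero_le
  have hVm : Measurable (fun x => W x ^ (-(1 / q))) := hW.pow_const _
  have key := hC1 g hg Ns J (fun x => W x ^ (-(1 / q))) (fun x => W x ^ (-(1 / q))) hVm hVm D ?_
  · have hYW : ∫⁻ x, YY g J x * W x ^ (-(1 / q)) ≤ B := by
      apply lintegral_mono
      intro x
      dsimp only
      rcases eq_or_ne (YY g J x) 0 with h0 | h0
      · rw [h0, zero_mul]; exact zero_le
      rcases eq_or_ne (YY g J x) ⊤ with ht | ht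
      · rw [ht, ENNReal.top_rpow_of_pos (by positivity)]; exact le_top
      calc YY g J x * W x ^ (-(1 / q)) ≤ YY g J x * (YY g J x ^ (q * (2 - q) / 2)) ^ (-(1 / q)) := by
            refine mul_le_mul_right ?_ _
            rw [ENNReal.rpow_neg, ENNReal.rpow_neg]
            exact ENNReal.inv_le_inv.2 (ENNReal.rpow_le_rpow (hwW x) (by positivity))
        _ = YY g J x ^ (q / 2) := by
            nth_rewrite 1 [← ENNReal.rpow_one (YY g J x)]
            rw [← ENNReal.rpow_mul, ← ENNReal.rpow_add _ _ h0 ht]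
            congr 1
            field_simp
            ring
    have hconj : (2 / q).HolderConjugate (2 / (2 - q)) := by
      rw [Real.holderConjugate_iff]
      refine ⟨by rw [lt_div_iff₀ hq0]; linarith, ?_⟩
      have : 2 - q ≠ 0 := by linarith
      field_simp
      ring
    have m1 : Measurable (fun x => (XX g Ns J x * W x ^ (-(1 / q))) ^ (q / 2)) := (hmX.mul hVm).pow_const _
    have m2 : Measurable (fun x => W x ^ ((1 : ℝ) / 2)) := hW.pow_const _
    calc ∫⁻ x, XX g Ns J x ^ (q / 2) ≤
        ∫⁻ x, ((fun x => (XX g Ns J x * W x ^ (-(1 / q))) ^ (q / 2)) * (fun x => W x ^ ((1 : ℝ) / 2))) x := by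
          apply lintegral_mono_ae
          filter_upwards [hWt] with x hx
          simp only [Pi.mul_apply]
          rcases eq_or_ne (W x) 0 with h0 | h0
          · rw [hX0 x h0, ENNReal.zero_rpow_of_pos (by positivity)]; exact zero_le
          · rw [ENNReal.mul_rpow_of_nonneg _ _ (by positivity), ← ENNReal.rpow_mul, mul_assoc,
              ← ENNReal.rpow_add _ _ h0 hx, show -(1 / q) * (q / 2) + 1 / 2 = 0 by
                rw [neg_mul, show 1 / q * (q / 2) = 1 / 2 by field_simp]; ring]
            simp
      _ ≤ _ := ENNReal.lintegral_mul_le_Lp_mul_Lq volume hconj m1.aemeasurable m2.aemeasurable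
      _ = (∫⁻ x, XX g Ns J x * W x ^ (-(1 / q))) ^ (q / 2) * (∫⁻ x, W x ^ (1 / (2 - q))) ^ (1 - q / 2) := by
          have : 2 - q ≠ 0 := by linarith
          rw [one_div_div, one_div_div]
          simp_rw [← ENNReal.rpow_mul]
          rw [show q / 2 * (2 / q) = 1 by field_simp, show (1 : ℝ) / 2 * (2 / (2 - q)) = 1 / (2 - q) by field_simp,
            show (2 - q) / 2 = 1 - q / 2 by ring]
          simp only [ENNReal.rpow_one]
      _ ≤ (C1 * D * B) ^ (q / 2) * (C2 * B) ^ (1 - q / 2) := by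
          refine mul_le_mul' (ENNReal.rpow_le_rpow ?_ (by positivity)) (ENNReal.rpow_le_rpow hintg' (by linarith))
          exact key.trans (mul_le_mul_right hYW _)
      _ = C * B := by
          rw [ENNReal.mul_rpow_of_nonneg _ B (by positivity), ENNReal.mul_rpow_of_nonneg (C2 : ℝ≥0∞) B (by linarith), hC]
          have : B ^ (q / 2) * B ^ (1 - q / 2) = B := by
            rw [← ENNReal.rpow_add_of_nonneg _ _ (by positivity) (by linarith)]
            simp
          calc _ = (C1 * D) ^ (q / 2) * (C2 : ℝ≥0∞) ^ (1 - q / 2) * (B ^ (q / 2) * B ^ (1 - q / 2)) := by ring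
            _ = _ := by rw [this]
  · intro l j hj
    have hm1 : Measurable (fun y => ‖g j y‖ₑ ^ (2 : ℝ) * W y ^ (-(1 / q))) :=
      ((measurable_gj g j).pow_const _).mul hVm
    calc _ ≤ ∫⁻ x, C2 ^ (1 / q) * PP l (fun y => ‖g j y‖ₑ ^ (2 : ℝ) * W y ^ (-(1 / q))) x := by
          apply lintegral_mono
          intro x
          dsimp only
          refine (mul_le_mul_left (hH l j hj x) _).trans ?_
          have h1 : W x ^ (1 / q) * W x ^ (-(1 / q)) ≤ 1 := by
            rw [ENNReal.rpow_neg]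
            exact ENNReal.mul_inv_le_one _
          rw [ENNReal.mul_rpow_of_nonneg _ _ (by positivity)]
          calc _ = C2 ^ (1 / q) * PP l (fun y => ‖g j y‖ₑ ^ (2 : ℝ) * W y ^ (-(1 / q))) x *
                (W x ^ (1 / q) * W x ^ (-(1 / q))) := by ring
            _ ≤ C2 ^ (1 / q) * PP l (fun y => ‖g j y‖ₑ ^ (2 : ℝ) * W y ^ (-(1 / q))) x * 1 :=
                mul_le_mul_right h1 _
            _ = _ := mul_one _
      _ = C2 ^ (1 / q) * ∫⁻ x, PP l (fun y => ‖g j y‖ₑ ^ (2 : ℝ) * W y ^ (-(1 / q))) x :=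
          lintegral_const_mul _ (measurable_PP l hm1)
      _ ≤ _ := by
          rw [hD, mul_assoc]
          exact mul_le_mul_right (PP_integral_le l hm1) _

theorem comparison (Nb q : ℝ) (hq1 : 1 < q) :
    ∃ C : ℝ≥0, ∀ g : ℤ → SchwartzMap ℝ ℂ, IsContLPFamily Nb g →
    ∀ (Ns J : Finset ℤ), ∫⁻ x, XX g Ns J x ^ (q / 2) ≤ C * ∫⁻ x, YY g J x ^ (q / 2) := by
  have : ∃ C : ℝ≥0, ∀ g : ℤ → SchwartzMap ℝ ℂ, IsContLPFamily Nb g →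
    ∀ (Ns J : Finset ℤ), ∫⁻ x, YY g J x ^ (q / 2) ≠ ⊤ →
    ∫⁻ x, XX g Ns J x ^ (q / 2) ≤ C * ∫⁻ x, YY g J x ^ (q / 2) := by
    rcases lt_trichotomy q 2 with h | h | h
    · exact comparison_small Nb q hq1 h
    · subst h
      obtain ⟨C, hC⟩ := comparison_two Nb
      exact ⟨C, fun g hg Ns J _ => hC g hg Ns J⟩
    · exact comparison_big Nb q h
  obtain ⟨C, hC⟩ := this
  refine ⟨C + 1, fun g hg Ns J => ?_⟩
  by_cases hY : ∫⁻ x, YY g J x ^ (q / 2) = ⊤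
  · rw [hY, ENNReal.mul_top (by simp)]; exact le_top
  · refine (hC g hg Ns J hY).trans (mul_le_mul_left ?_ _)
    push_cast
    exact le_self_add

/-! ### Deterministic jump counting -/

lemma card_le_gJ {ν : ℝ} (hν : 0 < ν) (d : ℕ → ℂ) (a b : ℕ → ℕ) (K : Finset ℕ) :
    ∀ T : ℕ, (∀ k ∈ K, a k ≤ b k) → (∀ k ∈ K, b k ≤ T) → (∀ k ∈ K, ∀ k' ∈ K, k < k' → b k ≤ a k') →
    (∀ k ∈ K, 2 * ν ≤ ‖∑ i ∈ Finset.Ico (a k) (b k), d i‖) → K.card ≤ gJ ν d T := by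
  induction K using Finset.induction_on_max with
  | empty => intro T _ _ _ _; simp
  | insert m s hm ih =>
    intro T h1 h2 h3 h4
    have hms : m ∉ s := fun h => lt_irrefl _ (hm m h)
    rw [Finset.card_insert_of_notMem hms]
    have e1 := ih (a m) (fun k hk => h1 k (Finset.mem_insert_of_mem hk))
      (fun k hk => h3 k (Finset.mem_insert_of_mem hk) m (Finset.mem_insert_self _ _) (hm k hk))
      (fun k hk k' hk' => h3 k (Finset.mem_insert_of_mem hk) k' (Finset.mem_insert_of_mem hk'))
      (fun k hk => h4 k (Finset.mem_insert_of_mem hk))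
    have e2 := gJ_lt_of_jump hν d (a m) (b m) (h1 m (Finset.mem_insert_self _ _)) (h4 m (Finset.mem_insert_self _ _))
    have e3 := gJ_mono ν d (h2 m (Finset.mem_insert_self _ _))
    omega

lemma card_le_sq (A : ℤ → ℂ) (Ns : Finset ℤ) (a : ℕ → ℤ) (K : Finset ℕ) (μ : ℝ) (hμ : 0 < μ)
    (ha : ∀ k ∈ K, a k ∈ Ns) (hinj : Set.InjOn a K) (hA : ∀ k ∈ K, μ / 4 < ‖A (a k)‖) :
    μ ^ 2 * K.card ≤ 16 * ∑ n ∈ Ns, ‖A n‖ ^ 2 := by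
  have h1 : ∑ k ∈ K, ‖A (a k)‖ ^ 2 ≤ ∑ n ∈ Ns, ‖A n‖ ^ 2 := by
    rw [← Finset.sum_image (s := K) (g := a) (f := fun n => ‖A n‖ ^ 2) hinj]
    refine Finset.sum_le_sum_of_subset_of_nonneg ?_ (fun _ _ _ => by positivity)
    intro n hn
    obtain ⟨k, hk, rfl⟩ := Finset.mem_image.1 hn
    exact ha k hk
  have h2 : K.card • (μ / 4) ^ 2 ≤ ∑ k ∈ K, ‖A (a k)‖ ^ 2 := by
    apply Finset.card_nsmul_le_sum
    intro k hk
    have := (hA k hk).le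
    gcongr
  rw [nsmul_eq_mul] at h2
  nlinarith

lemma jump_count (M S : ℤ → ℂ) (d : ℕ → ℂ) (L : ℕ)
    (hd : ∀ a b : ℕ, a ≤ b → ∑ k ∈ Finset.Ico a b, d k = M ((b : ℤ) - L - 1) - M ((a : ℤ) - L - 1))
    (a b : ℕ → ℤ) (K : Finset ℕ) (μ : ℝ) (hμ : 0 < μ)
    (hL : ∀ k ∈ K, -(L : ℤ) - 1 ≤ a k ∧ a k ≤ b k ∧ b k ≤ L)
    (hdis : ∀ k ∈ K, ∀ k' ∈ K, k < k' → b k < a k')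
    (hS : ∀ k ∈ K, μ < ‖S (b k) - S (a k)‖) :
    ENNReal.ofReal (μ ^ 2) * K.card ≤ 64 * gZ d (2 * L + 1) +
      32 * ENNReal.ofReal (∑ n ∈ Finset.Icc (-(L : ℤ) - 1) L, ‖M n - S n‖ ^ 2) := by
  classical
  set A : ℤ → ℂ := fun n => M n - S n with hA
  set K1 := K.filter (fun k => μ / 2 < ‖M (b k) - M (a k)‖) with hK1
  set K2 := K.filter (fun k => μ / 4 < ‖A (a k)‖) with hK2
  set K3 := K.filter (fun k => μ / 4 < ‖A (b k)‖) with hK3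
  have hsub : K ⊆ K1 ∪ (K2 ∪ K3) := by
    intro k hk
    by_contra hcon
    simp only [Finset.mem_union, hK1, hK2, hK3, Finset.mem_filter, hk, true_and] at hcon
    push Not at hcon
    obtain ⟨c1, c2, c3⟩ := hcon
    have e : S (b k) - S (a k) = (M (b k) - M (a k)) - A (b k) + A (a k) := by
      rw [hA]; ring
    have h1 := hS k hk
    rw [e] at h1
    have h2 := norm_add_le ((M (b k) - M (a k)) - A (b k)) (A (a k))
    have h3 := norm_sub_le (M (b k) - M (a k)) (A (b k))
    linarith
  have hcard : K.card ≤ K1.card + (K2.card + K3.card) :=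
    (Finset.card_le_card hsub).trans ((Finset.card_union_le _ _).trans
      (Nat.add_le_add_left (Finset.card_union_le _ _) _))
  have inja : Set.InjOn a K := by
    intro k hk k' hk' h
    rcases lt_trichotomy k k' with h1 | h1 | h1
    · have := hdis k hk k' hk' h1; have := hL k hk; omega
    · exact h1
    · have := hdis k' hk' k hk h1; have := hL k' hk'; omega
  have injb : Set.InjOn b K := by
    intro k hk k' hk' h
    rcases lt_trichotomy k k' with h1 | h1 | h1
    · have := hdis k hk k' hk' h1; have := hL k' hk'; omega
    · exact h1
    · have := hdis k' hk' k hk h1; have := hL k hk; omega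
  have h2 := card_le_sq A (Finset.Icc (-(L : ℤ) - 1) L) a K2 μ hμ
    (fun k hk => by
      have := hL k (Finset.mem_filter.1 hk).1
      rw [Finset.mem_Icc]; omega)
    (inja.mono (by exact_mod_cast Finset.filter_subset _ _)) (fun k hk => (Finset.mem_filter.1 hk).2)
  have h3 := card_le_sq A (Finset.Icc (-(L : ℤ) - 1) L) b K3 μ hμ
    (fun k hk => by
      have := hL k (Finset.mem_filter.1 hk).1
      rw [Finset.mem_Icc]; omega)
    (injb.mono (by exact_mod_cast Finset.filter_subset _ _)) (fun k hk => (Finset.mem_filter.1 hk).2)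
  obtain ⟨m, hm1, hm2⟩ := exists_pow_four (μ ^ 2 / 64) (by positivity)
  have hν : (0 : ℝ) < 2 ^ m := by positivity
  have hν4 : (2 : ℝ) ^ m ≤ μ / 4 := by
    refine le_of_not_gt fun hlt => ?_
    nlinarith
  have h1 : K1.card ≤ gJ (2 ^ m) d (2 * L + 1) := by
    have hLt : ∀ k ∈ K1, ((a k + L + 1).toNat : ℤ) = a k + L + 1 ∧ ((b k + L + 1).toNat : ℤ) = b k + L + 1 := by
      intro k hk
      have := hL k (Finset.mem_filter.1 hk).1
      omega
    apply card_le_gJ hν d (fun k => (a k + L + 1).toNat) (fun k => (b k + L + 1).toNat) K1 (2 * L + 1)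
    · intro k hk
      have := hL k (Finset.mem_filter.1 hk).1
      omega
    · intro k hk
      have := hL k (Finset.mem_filter.1 hk).1
      omega
    · intro k hk k' hk' hkk
      have := hdis k (Finset.mem_filter.1 hk).1 k' (Finset.mem_filter.1 hk').1 hkk
      omega
    · intro k hk
      have h5 := hL k (Finset.mem_filter.1 hk).1
      rw [hd _ _ (by omega), (hLt k hk).1, (hLt k hk).2]
      have h6 := (Finset.mem_filter.1 hk).2
      rw [show b k + L + 1 - L - 1 = b k by ring, show a k + L + 1 - L - 1 = a k by ring]
      linarith
  have h1' : ENNReal.ofReal (μ ^ 2 * K1.card) ≤ 64 * gZ d (2 * L + 1) := by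
    have : ENNReal.ofReal (((2 : ℝ) ^ m) ^ 2 * gJ ((2 : ℝ) ^ m) d (2 * L + 1)) ≤ gZ d (2 * L + 1) :=
      le_iSup (fun m : ℤ => ENNReal.ofReal (((2 : ℝ) ^ m) ^ 2 * gJ ((2 : ℝ) ^ m) d (2 * L + 1))) m
    refine le_trans ?_ (mul_le_mul_right this 64)
    rw [show (64 : ℝ≥0∞) = ENNReal.ofReal 64 by simp, ← ENNReal.ofReal_mul (by norm_num)]
    apply ENNReal.ofReal_le_ofReal
    have h6 : (K1.card : ℝ) ≤ gJ ((2 : ℝ) ^ m) d (2 * L + 1) := by exact_mod_cast h1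
    rw [← mul_assoc]
    exact mul_le_mul (by linarith) h6 (by positivity) (by positivity)
  rw [show (32 : ℝ≥0∞) = ENNReal.ofReal 32 by simp, ← ENNReal.ofReal_mul (by norm_num)]
  rw [show (K.card : ℝ≥0∞) = ENNReal.ofReal K.card by simp, ← ENNReal.ofReal_mul (by positivity)]
  calc ENNReal.ofReal (μ ^ 2 * K.card) ≤ ENNReal.ofReal (μ ^ 2 * K1.card + (μ ^ 2 * K2.card + μ ^ 2 * K3.card)) := by
        apply ENNReal.ofReal_le_ofReal
        have : (K.card : ℝ) ≤ K1.card + (K2.card + K3.card) := by exact_mod_cast hcard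
        calc μ ^ 2 * (K.card : ℝ) ≤ μ ^ 2 * (K1.card + (K2.card + K3.card)) := by gcongr
          _ = _ := by ring
    _ = ENNReal.ofReal (μ ^ 2 * K1.card) + ENNReal.ofReal (μ ^ 2 * K2.card + μ ^ 2 * K3.card) :=
        ENNReal.ofReal_add (by positivity) (by positivity)
    _ ≤ _ := by
        refine add_le_add h1' (ENNReal.ofReal_le_ofReal ?_)
        linarith

/-- Exchange of the order of summation in the paraproduct. -/
lemma para_swap (f g : ℤ → ℂ) (a b : ℤ) :
    ∑ j ∈ Finset.Ioc a b, ∑ i ∈ Finset.Ioo a j, f i * g j =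
      ∑ i ∈ Finset.Ioo a b, f i * ∑ j ∈ Finset.Ioc i b, g j := by
  simp_rw [Finset.mul_sum]
  apply Finset.sum_comm'
  intro j i
  simp only [Finset.mem_Ioc, Finset.mem_Ioo]
  omega

lemma para_large (f g : ℤ → ℂ) (a b : ℤ) (lam : ℝ) (hlam : 0 < lam)
    (h : lam < ‖∑ j ∈ Finset.Ioc a b, ∑ i ∈ Finset.Ioo a j, f i * g j‖) :
    0 < ∑ i ∈ Finset.Ioo a b, ‖f i‖ ∧ ∃ i ∈ Finset.Ioo a b,
      lam / (∑ i ∈ Finset.Ioo a b, ‖f i‖) < ‖∑ j ∈ Finset.Ioc i b, g j‖ := by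
  rw [para_swap] at h
  set F := ∑ i ∈ Finset.Ioo a b, ‖f i‖ with hF
  have h1 : ‖∑ i ∈ Finset.Ioo a b, f i * ∑ j ∈ Finset.Ioc i b, g j‖ ≤
      ∑ i ∈ Finset.Ioo a b, ‖f i‖ * ‖∑ j ∈ Finset.Ioc i b, g j‖ := by
    refine (norm_sum_le _ _).trans (le_of_eq ?_)
    simp_rw [norm_mul]
  have hF0 : 0 ≤ F := Finset.sum_nonneg fun _ _ => norm_nonneg _
  have hpos : 0 < F := by
    rcases hF0.eq_or_lt with h0 | h0
    · exfalso
      have h2 := (Finset.sum_eq_zero_iff_of_nonneg (fun _ _ => norm_nonneg _)).1 h0.symm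
      have h3 : ∑ i ∈ Finset.Ioo a b, ‖f i‖ * ‖∑ j ∈ Finset.Ioc i b, g j‖ = 0 :=
        Finset.sum_eq_zero fun i hi => by rw [h2 i hi, zero_mul]
      linarith
    · exact h0
  refine ⟨hpos, ?_⟩
  by_contra hcon
  push Not at hcon
  have h2 : ∑ i ∈ Finset.Ioo a b, ‖f i‖ * ‖∑ j ∈ Finset.Ioc i b, g j‖ ≤ ∑ i ∈ Finset.Ioo a b, ‖f i‖ * (lam / F) :=
    Finset.sum_le_sum fun i hi => mul_le_mul_of_nonneg_left (hcon i hi) (norm_nonneg _)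
  rw [← Finset.sum_mul, ← hF, mul_div_cancel₀ _ hpos.ne'] at h2
  linarith

lemma pointwise_main (f g : ℤ → ℂ) (N : ℕ → ℤ) (hN : Monotone N) (lam : ℝ) (hlam : 0 < lam) (K : Finset ℕ)
    (hKne : K.Nonempty)
    (hK : ∀ k ∈ K, lam < ‖∑ j ∈ Finset.Ioc (N k) (N (k + 1)), ∑ i ∈ Finset.Ioo (N k) j, f i * g j‖) :
    ∃ F : ℝ, 0 < F ∧ ENNReal.ofReal F ≤ ∑' i : ℤ, ENNReal.ofReal ‖f i‖ ∧ ∀ Z : ℝ≥0∞,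
      (∀ (K' : Finset ℕ) (a : ℕ → ℤ) (μ : ℝ), 0 < μ → K' ⊆ K → (∀ k ∈ K', a k ∈ Finset.Ioo (N k) (N (k + 1))) →
        (∀ k ∈ K', μ < ‖∑ j ∈ Finset.Ioc (a k) (N (k + 1)), g j‖) → ENNReal.ofReal (μ ^ 2) * K'.card ≤ Z) →
      ENNReal.ofReal (lam ^ 2 * K.card ^ 3) ≤ ENNReal.ofReal (8 * F ^ 2) * Z := by
  classical
  set A : ℕ → ℝ := fun k => ∑ i ∈ Finset.Ioo (N k) (N (k + 1)), ‖f i‖ with hA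
  set F := ∑ k ∈ K, A k with hF
  have hAk : ∀ k ∈ K, 0 < A k := fun k hk => (para_large f g _ _ lam hlam (hK k hk)).1
  have hF0 : 0 < F := Finset.sum_pos hAk hKne
  refine ⟨F, hF0, ?_, ?_⟩
  · have e : F = ∑ i ∈ K.biUnion (fun k => Finset.Ioo (N k) (N (k + 1))), ‖f i‖ := by
      rw [Finset.sum_biUnion]
      intro k hk k' hk' hne
      rw [Function.onFun, Finset.disjoint_left]
      intro i hi hi'
      rw [Finset.mem_Ioo] at hi hi'
      rcases lt_or_gt_of_ne hne with h | h
      · have := hN (show k + 1 ≤ k' by omega); omega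
      · have := hN (show k' + 1 ≤ k by omega); omega
    rw [e, ENNReal.ofReal_sum_of_nonneg (fun _ _ => norm_nonneg _)]
    exact ENNReal.sum_le_tsum _
  · intro Z hZ
    have hch : ∀ k, ∃ i, k ∈ K → i ∈ Finset.Ioo (N k) (N (k + 1)) ∧
        lam / A k < ‖∑ j ∈ Finset.Ioc i (N (k + 1)), g j‖ := by
      intro k
      by_cases hk : k ∈ K
      · obtain ⟨_, i, hi, hi2⟩ := para_large f g _ _ lam hlam (hK k hk)
        exact ⟨i, fun _ => ⟨hi, hi2⟩⟩
      · exact ⟨0, fun h => absurd h hk⟩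
    choose a ha using hch
    have hn : (0 : ℝ) < K.card := by exact_mod_cast hKne.card_pos
    set K' := K.filter (fun k => A k ≤ 2 * F / K.card) with hK'
    have hμ : 0 < lam * K.card / (2 * F) := by positivity
    have h1 := hZ K' a (lam * K.card / (2 * F)) hμ (Finset.filter_subset _ _)
      (fun k hk => (ha k (Finset.mem_filter.1 hk).1).1) (fun k hk => by
        obtain ⟨hk1, hk2⟩ := Finset.mem_filter.1 hk
        refine lt_of_le_of_lt ?_ (ha k hk1).2
        rw [div_le_div_iff₀ (by positivity) (hAk k hk1)]
        rw [le_div_iff₀ hn] at hk2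
        nlinarith)
    have h2 : (K.card : ℝ) ≤ 2 * K'.card := by
      have h3 : (K.filter (fun k => ¬ A k ≤ 2 * F / K.card)).card • (2 * F / K.card) ≤ F := by
        calc _ ≤ ∑ k ∈ K.filter (fun k => ¬ A k ≤ 2 * F / K.card), A k := by
              apply Finset.card_nsmul_le_sum
              intro k hk
              exact (not_le.1 (Finset.mem_filter.1 hk).2).le
          _ ≤ F := Finset.sum_le_sum_of_subset_of_nonneg (Finset.filter_subset _ _) (fun k hk _ => (hAk k hk).le)
      have h4 : (K'.card : ℝ) + (K.filter (fun k => ¬ A k ≤ 2 * F / K.card)).card = K.card := by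
        rw [hK']
        exact_mod_cast Finset.card_filter_add_card_filter_not _
      rw [nsmul_eq_mul, ← mul_div_assoc, div_le_iff₀ hn] at h3
      nlinarith
    refine le_trans ?_ (mul_le_mul_right h1 _)
    rw [show (K'.card : ℝ≥0∞) = ENNReal.ofReal K'.card by simp, ← ENNReal.ofReal_mul (by positivity),
      ← ENNReal.ofReal_mul (by positivity)]
    apply ENNReal.ofReal_le_ofReal
    have e : 8 * F ^ 2 * ((lam * K.card / (2 * F)) ^ 2 * K'.card) = lam ^ 2 * (K.card : ℝ) ^ 2 * (2 * K'.card) := by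
      field_simp
      ring
    rw [e]
    calc lam ^ 2 * (K.card : ℝ) ^ 3 = lam ^ 2 * (K.card : ℝ) ^ 2 * K.card := by ring
      _ ≤ _ := by gcongr

/-! ### The truncated majorant -/

/-- Index window for the frequencies. -/
def JL (L : ℕ) : Finset ℤ := Finset.Icc (-(L : ℤ)) L

/-- Index window for the averages. -/
def NL (L : ℕ) : Finset ℤ := Finset.Icc (-(L : ℤ) - 1) L

/-- Truncated sum. -/
def GG (g : ℤ → SchwartzMap ℝ ℂ) (L : ℕ) (x : ℝ) : ℂ := ∑ j ∈ JL L, g j x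

/-- Truncated partial sum. -/
def SS (g : ℤ → SchwartzMap ℝ ℂ) (L : ℕ) (n : ℤ) (x : ℝ) : ℂ := ∑ j ∈ JL L, if j ≤ n then g j x else 0

lemma continuous_GG (g : ℤ → SchwartzMap ℝ ℂ) (L : ℕ) : Continuous (GG g L) := by
  unfold GG
  exact continuous_finsetSum _ fun j _ => (g j).continuous

lemma dyA_GG (g : ℤ → SchwartzMap ℝ ℂ) (L : ℕ) (n : ℤ) (x : ℝ) :
    dyA (GG g L) n x = ∑ j ∈ JL L, dyA (g j) n x := by
  unfold dyA GG
  rw [intervalIntegral.integral_finsetSum (fun j _ => (g j).continuous.intervalIntegrable _ _), Finset.mul_sum]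

lemma enorm_A_le (g : ℤ → SchwartzMap ℝ ℂ) (L : ℕ) (n : ℤ) (x : ℝ) :
    ‖dyA (GG g L) n x - SS g L n x‖ₑ ≤ ∑ j ∈ JL L, KK g j n x := by
  rw [dyA_GG]
  unfold SS KK
  rw [← Finset.sum_sub_distrib]
  exact enorm_sum_le _ _

lemma ofReal_norm_sq (z : ℂ) : ENNReal.ofReal (‖z‖ ^ 2) = ‖z‖ₑ ^ (2 : ℝ) := by
  rw [ENNReal.ofReal_pow (norm_nonneg _), ofReal_norm, ← ENNReal.rpow_natCast]
  norm_num

lemma sumA_le (g : ℤ → SchwartzMap ℝ ℂ) (L : ℕ) (x : ℝ) :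
    ENNReal.ofReal (∑ n ∈ NL L, ‖dyA (GG g L) n x - SS g L n x‖ ^ 2) ≤ XX g (NL L) (JL L) x := by
  rw [ENNReal.ofReal_sum_of_nonneg (fun _ _ => by positivity)]
  unfold XX
  refine Finset.sum_le_sum fun n _ => ?_
  rw [ofReal_norm_sq]
  exact ENNReal.rpow_le_rpow (enorm_A_le g L n x) (by norm_num)

lemma SS_sub (g : ℤ → SchwartzMap ℝ ℂ) (L : ℕ) (a b : ℤ) (hab : a ≤ b) (ha : -(L : ℤ) - 1 ≤ a) (hb : b ≤ L) (x : ℝ) :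
    SS g L b x - SS g L a x = ∑ j ∈ Finset.Ioc a b, g j x := by
  unfold SS
  rw [← Finset.sum_sub_distrib]
  have e : Finset.Ioc a b = (JL L).filter (fun j => a < j ∧ j ≤ b) := by
    ext j
    simp only [JL, Finset.mem_Ioc, Finset.mem_filter, Finset.mem_Icc]
    omega
  rw [e, Finset.sum_filter]
  refine Finset.sum_congr rfl fun j _ => ?_
  by_cases h1 : j ≤ b <;> by_cases h2 : j ≤ a
  · simp [h1, h2, not_lt.2 h2]
  · simp [h1, h2, not_le.1 h2]
  · omega
  · simp [h1, h2]

lemma sum_shift_le (φ : ℤ → ℝ) (hφ : ∀ n, 0 ≤ φ n) (T : ℕ) (c : ℤ) (s : Finset ℤ)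
    (h : ∀ k : ℕ, k < T → (k : ℤ) - c ∈ s) : ∑ k ∈ Finset.range T, φ ((k : ℤ) - c) ≤ ∑ n ∈ s, φ n := by
  rw [← Finset.sum_image (s := Finset.range T) (g := fun k : ℕ => (k : ℤ) - c) (f := φ)
    (by intro a _ b _ hab; simpa using hab)]
  refine Finset.sum_le_sum_of_subset_of_nonneg ?_ (fun _ _ _ => hφ _)
  intro n hn
  obtain ⟨k, hk, rfl⟩ := Finset.mem_image.1 hn
  exact h k (Finset.mem_range.1 hk)

lemma sumD_le (g : ℤ → SchwartzMap ℝ ℂ) (L : ℕ) (x : ℝ) :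
    ENNReal.ofReal (∑ k ∈ Finset.range (2 * L + 1), ‖dyD (GG g L) L k x‖ ^ 2) ≤
      6 * XX g (NL L) (JL L) x + 3 * YY g (JL L) x := by
  set A : ℤ → ℂ := fun n => dyA (GG g L) n x - SS g L n x with hA
  have hpt : ∀ k ∈ Finset.range (2 * L + 1), ‖dyD (GG g L) L k x‖ ^ 2 ≤
      3 * ‖A ((k : ℤ) - L)‖ ^ 2 + 3 * ‖A ((k : ℤ) - (L + 1))‖ ^ 2 + 3 * ‖g ((k : ℤ) - L) x‖ ^ 2 := by
    intro k hk
    have hk := Finset.mem_range.1 hk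
    have e1 := SS_sub g L ((k : ℤ) - (L + 1)) ((k : ℤ) - L) (by omega) (by omega) (by omega) x
    have e2 : Finset.Ioc ((k : ℤ) - (L + 1)) ((k : ℤ) - L) = {(k : ℤ) - L} := by
      ext j; simp only [Finset.mem_Ioc, Finset.mem_singleton]; omega
    rw [e2, Finset.sum_singleton] at e1
    have e3 : dyD (GG g L) L k x = A ((k : ℤ) - L) - A ((k : ℤ) - (L + 1)) + g ((k : ℤ) - L) x := by
      rw [← e1, hA]
      unfold dyD
      rw [sub_sub (k : ℤ) L 1]
      ring
    rw [e3]
    have h1 := norm_add_le (A ((k : ℤ) - L) - A ((k : ℤ) - (L + 1))) (g ((k : ℤ) - L) x)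
    have h2 := norm_sub_le (A ((k : ℤ) - L)) (A ((k : ℤ) - (L + 1)))
    set u := ‖A ((k : ℤ) - L)‖
    set v := ‖A ((k : ℤ) - (L + 1))‖
    set w := ‖g ((k : ℤ) - L) x‖
    calc _ ≤ (u + v + w) ^ 2 := by gcongr; linarith
      _ ≤ _ := by nlinarith [sq_nonneg (u - v), sq_nonneg (u - w), sq_nonneg (v - w)]
  have h1 := Finset.sum_le_sum hpt
  rw [Finset.sum_add_distrib, Finset.sum_add_distrib, ← Finset.mul_sum, ← Finset.mul_sum, ← Finset.mul_sum] at h1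
  have s1 := sum_shift_le (fun n => ‖A n‖ ^ 2) (fun _ => by positivity) (2 * L + 1) L (NL L)
    (fun k hk => by rw [NL, Finset.mem_Icc]; omega)
  have s2 := sum_shift_le (fun n => ‖A n‖ ^ 2) (fun _ => by positivity) (2 * L + 1) (L + 1) (NL L)
    (fun k hk => by rw [NL, Finset.mem_Icc]; omega)
  have s3 := sum_shift_le (fun n => ‖g n x‖ ^ 2) (fun _ => by positivity) (2 * L + 1) L (JL L)
    (fun k hk => by rw [JL, Finset.mem_Icc]; omega)
  have hY : ENNReal.ofReal (∑ n ∈ JL L, ‖g n x‖ ^ 2) = YY g (JL L) x := by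
    rw [ENNReal.ofReal_sum_of_nonneg (fun _ _ => by positivity)]
    unfold YY
    exact Finset.sum_congr rfl fun j _ => ofReal_norm_sq _
  calc _ ≤ ENNReal.ofReal (6 * (∑ n ∈ NL L, ‖A n‖ ^ 2) + 3 * ∑ n ∈ JL L, ‖g n x‖ ^ 2) := by
        apply ENNReal.ofReal_le_ofReal
        linarith
    _ = 6 * ENNReal.ofReal (∑ n ∈ NL L, ‖A n‖ ^ 2) + 3 * YY g (JL L) x := by
        rw [ENNReal.ofReal_add (by positivity) (by positivity), ENNReal.ofReal_mul (by norm_num),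
          ENNReal.ofReal_mul (by norm_num), hY]
        norm_num
    _ ≤ _ := by
        refine add_le_add_left (mul_le_mul_right (sumA_le g L x) _) _

/-- The majorant of jump counts. -/
def ZZ (g : ℤ → SchwartzMap ℝ ℂ) (L : ℕ) (x : ℝ) : ℝ≥0∞ :=
  64 * gZ (fun k => dyD (GG g L) L k x) (2 * L + 1) + 32 * XX g (NL L) (JL L) x

lemma measurable_ZZ (g : ℤ → SchwartzMap ℝ ℂ) (L : ℕ) : Measurable (ZZ g L) := by
  unfold ZZ
  exact ((measurable_gZ (signSys_dyD (GG g L) (continuous_GG g L) L).meas _).const_mul _).add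
    ((measurable_XX g _ _).const_mul _)

lemma add_rpow_le_two (a b : ℝ≥0∞) (s : ℝ) (hs : 0 < s) : (a + b) ^ s ≤ 2 ^ s * (a ^ s + b ^ s) := by
  have h : a + b ≤ 2 * max a b := by
    rw [two_mul]; exact add_le_add (le_max_left _ _) (le_max_right _ _)
  refine (ENNReal.rpow_le_rpow h hs.le).trans ?_
  rw [ENNReal.mul_rpow_of_nonneg _ _ hs.le]
  refine mul_le_mul_right ?_ _
  rcases le_total a b with h | h
  · rw [max_eq_right h]; exact le_add_self
  · rw [max_eq_left h]; exact le_self_add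

lemma lin_rpow_int (c1 c2 : ℝ≥0) (s : ℝ) (hs : 0 < s) : ∃ C : ℝ≥0, ∀ u v : ℝ → ℝ≥0∞, Measurable u →
    ∫⁻ x, (c1 * u x + c2 * v x) ^ s ≤ C * ((∫⁻ x, u x ^ s) + ∫⁻ x, v x ^ s) := by
  set C : ℝ≥0∞ := 2 ^ s * (c1 ^ s + c2 ^ s) with hC
  have hCt : C ≠ ⊤ := ENNReal.mul_ne_top (ENNReal.rpow_ne_top_of_nonneg hs.le (by simp))
    (ENNReal.add_ne_top.2 ⟨ENNReal.rpow_ne_top_of_nonneg hs.le (by simp),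
      ENNReal.rpow_ne_top_of_nonneg hs.le (by simp)⟩)
  refine ⟨C.toNNReal, fun u v hu => ?_⟩
  rw [ENNReal.coe_toNNReal hCt, ← lintegral_add_left (hu.pow_const s), ← lintegral_const_mul' _ _ hCt]
  apply lintegral_mono
  intro x
  dsimp only
  refine (add_rpow_le_two _ _ s hs).trans ?_
  rw [hC, mul_assoc, ENNReal.mul_rpow_of_nonneg _ _ hs.le, ENNReal.mul_rpow_of_nonneg _ _ hs.le]
  refine mul_le_mul_right ?_ _
  rw [mul_add]
  exact add_le_add (mul_le_mul_left le_self_add _) (mul_le_mul_left le_add_self _)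

theorem ZZ_int (Nb q : ℝ) (hq : 1 < q) : ∃ C : ℝ≥0, ∀ g : ℤ → SchwartzMap ℝ ℂ, IsContLPFamily Nb g → ∀ L,
    ∫⁻ x, ZZ g L x ^ (q / 2) ≤ C * ∫⁻ x, (∑' j : ℤ, ENNReal.ofReal ‖g j x‖ ^ (2 : ℝ)) ^ (q / 2) := by
  have hs : 0 < q / 2 := by linarith
  obtain ⟨C1, h1⟩ := comparison Nb q hq
  obtain ⟨C2, h2⟩ := good_lambda_Lp (q / 2) hs
  obtain ⟨C3, h3⟩ := lin_rpow_int 64 32 (q / 2) hs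
  obtain ⟨C4, h4⟩ := lin_rpow_int 6 3 (q / 2) hs
  refine ⟨C3 * (C2 * (C4 * (C1 + 1)) + C1), fun g hg L => ?_⟩
  set B := ∫⁻ x, YY g (JL L) x ^ (q / 2) with hB
  have hX : ∫⁻ x, XX g (NL L) (JL L) x ^ (q / 2) ≤ C1 * B := h1 g hg _ _
  have hsys := signSys_dyD (GG g L) (continuous_GG g L) L
  have hZ : ∫⁻ x, gZ (fun k => dyD (GG g L) L k x) (2 * L + 1) ^ (q / 2) ≤ C2 * (C4 * (C1 * B + B)) := by
    refine (h2 _ _ hsys (2 * L + 1)).trans (mul_le_mul_right ?_ _)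
    calc _ ≤ ∫⁻ x, (((6 : ℝ≥0) : ℝ≥0∞) * XX g (NL L) (JL L) x + ((3 : ℝ≥0) : ℝ≥0∞) * YY g (JL L) x) ^ (q / 2) :=
          lintegral_mono fun x => ENNReal.rpow_le_rpow (by exact_mod_cast sumD_le g L x) hs.le
      _ ≤ _ := h4 _ _ (measurable_XX g _ _)
      _ ≤ _ := mul_le_mul_right (add_le_add_left hX _) _
  have hBle : B ≤ ∫⁻ x, (∑' j : ℤ, ENNReal.ofReal ‖g j x‖ ^ (2 : ℝ)) ^ (q / 2) := by
    refine lintegral_mono fun x => ENNReal.rpow_le_rpow ?_ hs.le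
    unfold YY
    simp_rw [ofReal_norm]
    exact ENNReal.sum_le_tsum _
  calc _ ≤ _ := h3 _ (fun x => XX g (NL L) (JL L) x) (measurable_gZ hsys.meas (2 * L + 1))
    _ ≤ C3 * (C2 * (C4 * (C1 * B + B)) + C1 * B) := mul_le_mul_right (add_le_add hZ hX) _
    _ = (C3 * (C2 * (C4 * (C1 + 1)) + C1) : ℝ≥0) * B := by push_cast; ring
    _ ≤ _ := mul_le_mul_right hBle _

/-- The limiting majorant. -/
def UU (q : ℝ) (g : ℤ → SchwartzMap ℝ ℂ) (x : ℝ) : ℝ≥0∞ :=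
  (Filter.liminf (fun L : ℕ => ZZ g L x ^ (q / 2)) Filter.atTop) ^ (1 / q)

lemma measurable_UU (q : ℝ) (g : ℤ → SchwartzMap ℝ ℂ) : Measurable (UU q g) := by
  unfold UU
  exact (Measurable.liminf fun L => (measurable_ZZ g L).pow_const _).pow_const _

theorem UU_int (Nb q : ℝ) (hq : 1 < q) : ∃ C : ℝ≥0, ∀ g : ℤ → SchwartzMap ℝ ℂ, IsContLPFamily Nb g →
    ∫⁻ x, UU q g x ^ q ≤ C * ∫⁻ x, (∑' j : ℤ, ENNReal.ofReal ‖g j x‖ ^ (2 : ℝ)) ^ (q / 2) := by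
  obtain ⟨C, hC⟩ := ZZ_int Nb q hq
  refine ⟨C, fun g hg => ?_⟩
  unfold UU
  simp_rw [← ENNReal.rpow_mul]
  rw [one_div_mul_cancel (by linarith)]
  simp_rw [ENNReal.rpow_one]
  refine (lintegral_liminf_le fun L => (measurable_ZZ g L).pow_const _).trans ?_
  refine Filter.liminf_le_of_le (by isBoundedDefault) ?_
  intro b hb
  obtain ⟨L, hL⟩ := hb.exists
  exact hL.trans (hC g hg L)

lemma finset_bound (f : ℤ → ℝ → ℂ) (g : ℤ → SchwartzMap ℝ ℂ) (Nk : ℕ → ℝ → ℤ) (hN : IsJumpCollection Nk)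
    (q : ℝ) (hq : 1 < q) (lam : ℝ) (hlam : 0 < lam) (x : ℝ) (K : Finset ℕ)
    (hK : ∀ k ∈ K, lam < ‖∑ j ∈ Finset.Ioc (Nk k x) (Nk (k + 1) x), ∑ i ∈ Finset.Ioo (Nk k x) j, f i x * g j x‖) :
    ENNReal.ofReal lam * (K.card : ℝ≥0∞) ^ ((3 : ℝ) / 2) ≤
      3 * (∑' i : ℤ, ENNReal.ofReal ‖f i x‖) * UU q g x := by
  rcases K.eq_empty_or_nonempty with h0 | hne
  · subst h0
    simp
  have hmono : Monotone (fun k => Nk k x) := monotone_nat_of_le_succ fun k => hN.2 k x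
  obtain ⟨F, hF0, hF1, hF2⟩ := pointwise_main (fun i => f i x) (fun j => g j x) (fun k => Nk k x) hmono lam hlam K hne hK
  -- for large L
  have hev : ∀ᶠ L : ℕ in Filter.atTop, ENNReal.ofReal (lam ^ 2 * K.card ^ 3) ≤ ENNReal.ofReal (8 * F ^ 2) * ZZ g L x := by
    have hb : ∀ k ∈ K, ∀ᶠ L : ℕ in Filter.atTop, -(L : ℤ) ≤ Nk k x ∧ Nk (k + 1) x ≤ L := by
      intro k _
      filter_upwards [Filter.eventually_ge_atTop ((Nk k x).natAbs + (Nk (k + 1) x).natAbs)] with L hL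
      omega
    have hb2 := (Filter.eventually_all_finset K).2 hb
    filter_upwards [hb2] with L hL
    apply hF2
    intro K' a μ hμ hsub ha hS
    have := jump_count (fun n => dyA (GG g L) n x) (fun n => SS g L n x) (fun k => dyD (GG g L) L k x) L
      (fun a b hab => sum_dyD (GG g L) L x hab) a (fun k => Nk (k + 1) x) K' μ hμ
      (fun k hk => by
        have h1 := hL k (hsub hk)
        have h2 := Finset.mem_Ioo.1 (ha k hk)
        try dsimp only at *
        omega)
      (fun k hk k' hk' hkk => by
        have h2 := Finset.mem_Ioo.1 (ha k' hk')
        have h3 := hmono (show k + 1 ≤ k' by omega)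
        try dsimp only at *
        omega)
      (fun k hk => by
        have h1 := hL k (hsub hk)
        have h2 := Finset.mem_Ioo.1 (ha k hk)
        try dsimp only at *
        rw [SS_sub g L _ _ (by omega) (by omega) (by omega)]
        exact hS k hk)
    refine this.trans ?_
    unfold ZZ
    exact add_le_add_right (mul_le_mul_right (sumA_le g L x) _) _
  have hn : (0 : ℝ) ≤ K.card := by positivity
  set P : ℝ≥0∞ := ENNReal.ofReal lam * (K.card : ℝ≥0∞) ^ ((3 : ℝ) / 2) with hP
  have hP2 : P ^ (2 : ℝ) = ENNReal.ofReal (lam ^ 2 * K.card ^ 3) := by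
    rw [hP, ENNReal.mul_rpow_of_nonneg _ _ (by norm_num), ← ENNReal.rpow_mul,
      ENNReal.ofReal_mul (by positivity), ENNReal.ofReal_pow hlam.le, ENNReal.ofReal_pow hn,
      ENNReal.ofReal_natCast, ← ENNReal.rpow_natCast, ← ENNReal.rpow_natCast]
    norm_num
  have h3F0 : 3 * ENNReal.ofReal F ≠ 0 := by simp [hF0]
  have h3Ft : 3 * ENNReal.ofReal F ≠ ⊤ := ENNReal.mul_ne_top (by simp) (by simp)
  have hdiv : P / (3 * ENNReal.ofReal F) ≤ UU q g x := by
    unfold UU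
    rw [one_div, ENNReal.le_rpow_inv_iff (by linarith)]
    refine Filter.le_liminf_of_le (by isBoundedDefault) ?_
    filter_upwards [hev] with L hL
    rw [← hP2] at hL
    have h1 : P ≤ 3 * ENNReal.ofReal F * ZZ g L x ^ ((1 : ℝ) / 2) := by
      have h2 : P ^ (2 : ℝ) ≤ (3 * ENNReal.ofReal F * ZZ g L x ^ ((1 : ℝ) / 2)) ^ (2 : ℝ) := by
        refine hL.trans ?_
        rw [ENNReal.mul_rpow_of_nonneg _ _ (by norm_num), ← ENNReal.rpow_mul]
        norm_num
        refine mul_le_mul_left ?_ _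
        rw [mul_pow, ENNReal.ofReal_pow hF0.le]
        refine mul_le_mul_left ?_ _
        norm_num
      exact (ENNReal.rpow_le_rpow_iff (by norm_num)).1 h2
    calc (P / (3 * ENNReal.ofReal F)) ^ q ≤ (ZZ g L x ^ ((1 : ℝ) / 2)) ^ q := by
          refine ENNReal.rpow_le_rpow ?_ (by linarith)
          exact ENNReal.div_le_of_le_mul' h1
      _ = _ := by rw [← ENNReal.rpow_mul]; congr 1; ring
  rw [ENNReal.div_le_iff h3F0 h3Ft] at hdiv
  refine hdiv.trans ?_
  rw [mul_comm]
  exact mul_le_mul_left (mul_le_mul_right hF1 _) _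

lemma encard_bound (f : ℤ → ℝ → ℂ) (g : ℤ → SchwartzMap ℝ ℂ) (Nk : ℕ → ℝ → ℤ) (hN : IsJumpCollection Nk)
    (q : ℝ) (hq : 1 < q) (lam : ℝ) (hlam : 0 < lam) (x : ℝ) :
    ENNReal.ofReal lam * (({k : ℕ | lam < norm
                (∑ j ∈ Finset.Ioc (Nk k x) (Nk (k + 1) x),
                  ∑ i ∈ Finset.Ioo (Nk k x) j, f i x * g j x)}.encard : ℝ≥0∞)) ^ ((3 : ℝ) / 2) ≤
      3 * (∑' i : ℤ, ENNReal.ofReal ‖f i x‖) * UU q g x := by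
  set s := {k : ℕ | lam < norm
                (∑ j ∈ Finset.Ioc (Nk k x) (Nk (k + 1) x),
                  ∑ i ∈ Finset.Ioo (Nk k x) j, f i x * g j x)} with hs
  set R := 3 * (∑' i : ℤ, ENNReal.ofReal ‖f i x‖) * UU q g x with hR
  have key : ∀ K : Finset ℕ, (K : Set ℕ) ⊆ s → ENNReal.ofReal lam * (K.card : ℝ≥0∞) ^ ((3 : ℝ) / 2) ≤ R :=
    fun K hK => finset_bound f g Nk hN q hq lam hlam x K (fun k hk => hK hk)
  rcases s.finite_or_infinite with hfin | hinf
  · have := key hfin.toFinset (by simp)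
    rw [hfin.encard_eq_coe_toFinset_card]
    simpa using this
  · have hRt : R = ⊤ := by
      by_contra hne
      obtain ⟨n, hn⟩ := ENNReal.exists_nat_mul_gt (a := ENNReal.ofReal lam) (b := R) (by simp [hlam]) hne
      obtain ⟨K, hK1, hK2⟩ := hinf.exists_subset_card_eq (n + 1)
      have h1 := key K hK1
      rw [hK2] at h1
      have h2 : (n : ℝ≥0∞) ≤ ((n + 1 : ℕ) : ℝ≥0∞) ^ ((3 : ℝ) / 2) := by
        calc (n : ℝ≥0∞) ≤ ((n + 1 : ℕ) : ℝ≥0∞) := by exact_mod_cast Nat.le_succ n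
          _ = ((n + 1 : ℕ) : ℝ≥0∞) ^ (1 : ℝ) := (ENNReal.rpow_one _).symm
          _ ≤ _ := ENNReal.rpow_le_rpow_of_exponent_le (by exact_mod_cast Nat.succ_le_succ (Nat.zero_le n)) (by norm_num)
      have h3 : (n : ℝ≥0∞) * ENNReal.ofReal lam ≤ R := by
        rw [mul_comm]
        exact (mul_le_mul_right h2 _).trans h1
      exact absurd hn (not_lt.2 h3)
    rw [hRt]; exact le_top

/-! ### Conclusion -/

lemma eNorm_ofReal (q : ℝ) (hq : 0 < q) (h : ℝ → ℝ≥0∞) :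
    eNorm (ENNReal.ofReal q) h = (∫⁻ x : ℝ, (h x) ^ q) ^ (1 / q) := by
  unfold eNorm
  rw [if_neg (by simp), ENNReal.toReal_ofReal hq.le]

lemma measurable_UU_aux (f : ℤ → ℝ → ℂ) (hf : ∀ i, Measurable (f i)) :
    Measurable (fun x => ∑' i : ℤ, ENNReal.ofReal ‖f i x‖) :=
  Measurable.ennreal_tsum fun i => (hf i).norm.ennreal_ofReal

lemma eNorm_mul_top (q : ℝ) (hq : 0 < q) (F U : ℝ → ℝ≥0∞) (hU : Measurable U) :
    eNorm (ENNReal.ofReal q) (fun x => 3 * F x * U x) ≤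
      3 * eNorm ⊤ F * eNorm (ENNReal.ofReal q) U := by
  rw [eNorm_ofReal q hq, eNorm_ofReal q hq]
  have hM : eNorm ⊤ F = essSup F volume := by unfold eNorm; simp
  rw [hM]
  set M := essSup F volume
  have h1 : ∫⁻ x : ℝ, (3 * F x * U x) ^ q ≤ (3 * M) ^ q * ∫⁻ x : ℝ, (U x) ^ q := by
    rw [← lintegral_const_mul _ (hU.pow_const q)]
    refine lintegral_mono_ae ?_
    filter_upwards [ENNReal.ae_le_essSup (μ := volume) F] with x hx
    rw [← ENNReal.mul_rpow_of_nonneg _ _ hq.le]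
    refine ENNReal.rpow_le_rpow ?_ hq.le
    exact mul_le_mul_left (mul_le_mul_right hx _) _
  refine (ENNReal.rpow_le_rpow h1 (by positivity)).trans ?_
  rw [ENNReal.mul_rpow_of_nonneg _ _ (by positivity), ← ENNReal.rpow_mul, mul_one_div_cancel hq.ne',
    ENNReal.rpow_one]

lemma eNorm_mul_fin (p q : ℝ) (hp : 0 < p) (hq : 0 < q) (F U : ℝ → ℝ≥0∞) (hF : Measurable F)
    (hU : Measurable U) :
    eNorm (ENNReal.ofReal (1 / p + 1 / q)⁻¹) (fun x => 3 * F x * U x) ≤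
      3 * eNorm (ENNReal.ofReal p) F * eNorm (ENNReal.ofReal q) U := by
  have hs : 0 < 1 / p + 1 / q := by positivity
  rw [eNorm_ofReal q hq, eNorm_ofReal p hp, eNorm_ofReal _ (inv_pos.2 hs)]
  set u := (1 / p + 1 / q)⁻¹ with hu
  have hu0 : 0 < u := inv_pos.2 hs
  have hup : u < p := by
    rw [hu, inv_lt_comm₀ hs hp, ← one_div]
    have : 0 < 1 / q := by positivity
    linarith
  have hE : 1 / u = 1 / p + 1 / q := by rw [hu, one_div, inv_inv]
  have h := ENNReal.lintegral_Lp_mul_le_Lq_mul_Lr hu0 hup hE volume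
    (f := fun x => 3 * F x) (g := U) (hF.const_mul 3).aemeasurable hU.aemeasurable
  refine (le_of_eq ?_).trans (h.trans (le_of_eq ?_))
  · rfl
  · congr 1
    have : ∀ x, (3 * F x) ^ p = 3 ^ p * (F x) ^ p := fun x => ENNReal.mul_rpow_of_nonneg _ _ hp.le
    simp only [this]
    rw [lintegral_const_mul _ (hF.pow_const p), ENNReal.mul_rpow_of_nonneg _ _ (by positivity),
      ← ENNReal.rpow_mul, mul_one_div_cancel hp.ne', ENNReal.rpow_one]

lemma eNorm_mono (u : ℝ≥0∞) (h k : ℝ → ℝ≥0∞) (hk : ∀ x, h x ≤ k x) : eNorm u h ≤ eNorm u k := by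
  unfold eNorm
  split_ifs
  · exact essSup_mono_ae (Filter.Eventually.of_forall hk)
  · refine ENNReal.rpow_le_rpow (lintegral_mono fun x => ENNReal.rpow_le_rpow (hk x) ?_) ?_ <;> positivity

lemma eNorm_mul (p : ℝ≥0∞) (q : ℝ) (hp : 0 < p) (hq : 0 < q) (F U : ℝ → ℝ≥0∞) (hF : Measurable F)
    (hU : Measurable U) :
    eNorm ((1 / p + 1 / ENNReal.ofReal q)⁻¹) (fun x => 3 * F x * U x) ≤
      3 * eNorm p F * eNorm (ENNReal.ofReal q) U := by
  by_cases hpt : p = ⊤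
  · subst hpt
    have : (1 / (⊤ : ℝ≥0∞) + 1 / ENNReal.ofReal q)⁻¹ = ENNReal.ofReal q := by simp
    rw [this]
    exact eNorm_mul_top q hq F U hU
  · have hp' : 0 < p.toReal := ENNReal.toReal_pos hp.ne' hpt
    have e : p = ENNReal.ofReal p.toReal := (ENNReal.ofReal_toReal hpt).symm
    have h := eNorm_mul_fin p.toReal q hp' hq F U hF hU
    rw [ENNReal.ofReal_inv_of_pos (by positivity), ENNReal.ofReal_add (by positivity) (by positivity),
      one_div, one_div, ENNReal.ofReal_inv_of_pos hp', ENNReal.ofReal_inv_of_pos hq, ← e] at h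
    rw [one_div, one_div]
    exact h

/-- The weak-type endpoint `r = 1`, `s = 2`, `t = 2/3` of the bilinear variational
paraproduct estimate: the first family is arbitrary. -/
theorem bilinear_weak_endpoint_r_one_s_two
    (p : ℝ≥0∞) (q Nb : ℝ) (hp : 0 < p) (hq1 : 1 < q) (hNb : 0 < Nb) :
    ∃ C : ℝ≥0, 0 < C ∧
      ∀ (Nk : ℕ → ℝ → ℤ), IsJumpCollection Nk →
      ∀ (f : ℤ → ℝ → ℂ), (∀ i, Measurable (f i)) →
      ∀ (g : ℤ → SchwartzMap ℝ ℂ), IsContLPFamily Nb g →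
      ∀ lam : ℝ, 0 < lam →
      eNorm ((1 / p + 1 / ENNReal.ofReal q)⁻¹)
          (fun x => ENNReal.ofReal lam *
            (({k : ℕ | lam < norm
                (∑ j ∈ Finset.Ioc (Nk k x) (Nk (k + 1) x),
                  ∑ i ∈ Finset.Ioo (Nk k x) j, f i x * g j x)}.encard : ℝ≥0∞))
              ^ ((3 : ℝ) / 2))
        ≤ (C : ℝ≥0∞) *
          eNorm p (fun x => ∑' i : ℤ, ENNReal.ofReal (norm (f i x))) *
          eNorm (ENNReal.ofReal q)
            (fun x => (∑' j : ℤ, (ENNReal.ofReal (norm (g j x))) ^ (2 : ℝ))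
              ^ ((1 : ℝ) / 2)) := by
  obtain ⟨C, hC⟩ := UU_int Nb q hq1
  have hq0 : 0 < q := by linarith
  refine ⟨3 * C ^ (1 / q) + 1, by positivity, ?_⟩
  intro Nk hN f hf g hg lam hlam
  refine (eNorm_mono _ _ _ fun x => encard_bound f g Nk hN q hq1 lam hlam x).trans ?_
  refine (eNorm_mul p q hp hq0 _ _ (measurable_UU_aux f hf) (measurable_UU q g)).trans ?_
  have h1 : eNorm (ENNReal.ofReal q) (UU q g) ≤ ((C ^ (1 / q) : ℝ≥0) : ℝ≥0∞) *
      eNorm (ENNReal.ofReal q) (fun x => (∑' j : ℤ, (ENNReal.ofReal (norm (g j x))) ^ (2 : ℝ))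
              ^ ((1 : ℝ) / 2)) := by
    rw [eNorm_ofReal q hq0, eNorm_ofReal q hq0]
    refine (ENNReal.rpow_le_rpow (hC g hg) (by positivity)).trans (le_of_eq ?_)
    rw [ENNReal.mul_rpow_of_nonneg _ _ (by positivity), ENNReal.coe_rpow_of_nonneg _ (by positivity)]
    congr 2
    refine lintegral_congr fun x => ?_
    rw [← ENNReal.rpow_mul]
    congr 1
    ring
  refine (mul_le_mul_right h1 _).trans ?_
  rw [← mul_assoc]
  refine mul_le_mul_left ?_ _
  rw [mul_right_comm]
  refine mul_le_mul_left ?_ _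
  push_cast
  exact le_self_add

end
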